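/- arXiv:2507.13029 — 2 statements merged into one kernel-verified Lean document; each statement's English description precedes it below -/
import Mathlib

section
/- For every integer q ≥ 1 and every ε > 0 there exists a bijection H : ℝ² → ℝ² such that: (i) H and H⁻¹ are C^∞; (ii) H preserves the 2-dimensional Lebesgue measure; (iii) H(x + 1/q, y) = H(x, y) + (1/q, 0) for all (x, y) ∈ ℝ² (so H is the lift of a map of the cylinder (ℝ/ℤ)×ℝ commuting with the rotation by 1/q); (iv) there exists δ > 0 such that H(x, y) = (x, y) whenever |y| ≥ 1 − δ; and (v) for every y ∈ [−1+ε, 1−ε] and every function φ : ℝ² → ℝ that is 1-Lipschitz and satisfies φ(x+1, y) = φ(x, y) for all (x,y), one has |∫₀¹ φ(H(t, y)) dt − (1/2)∫_{−1}^{1} ∫₀¹ φ(t, s) dt ds| ≤ ε. (Lemma 3.1: a smooth symplectomorphism of the cylinder, compactly supported in the interior, commuting with R_{1/q}, sending horizontal circle measures ε-close to the area measure in the Kantorovich distance.) -/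
open MeasureTheory

/-- The Euclidean distance on the plane `ℝ × ℝ`. -/
noncomputable def euclDist (a b : ℝ × ℝ) : ℝ :=
  Real.sqrt ((a.1 - b.1) ^ 2 + (a.2 - b.2) ^ 2)

/-!
The map `erf × erf` sends the plane diffeomorphically onto the open square `(-1, 1)²`, and its
Jacobian `(4 / π) exp (-(u² + v²))` is invariant under rotations. Conjugating by it a map that
rotates every circle `u² + v² = s` by an angle depending on `s` therefore gives an area-preserving
diffeomorphism, compactly supported in the square if the angle vanishes for large `s`. If the angle
is `π / 2` on a large disc, this diffeomorphism is the exact quarter turn `(X, Y) ↦ (-Y, X)` on a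
concentric square of side `2m`, with `m < 1` as close to `1` as desired.

Squeeze the square horizontally by a factor `2N` and place copies of it side by side along the
cylinder. Up to a proportion `1 - m`, the part of a horizontal circle in each copy becomes a
vertical segment, so that heights equidistribute. The resulting map commutes with
`(x, y) ↦ (x + 1/N, y)`, which equidistributes the horizontal coordinate up to an error `1/N`.
-/

namespace CylinderEquidistribution

open Set Filter Topology Metric
open scoped ContDiff

section VolumePreserving

variable {E F : Type*} [NormedAddCommGroup E] [NormedSpace ℝ E]
  [NormedAddCommGroup F] [NormedSpace ℝ F]

/-- A permutation of `E` that is a smooth diffeomorphism with Jacobian determinant `1`. In finite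
dimension this is an orientation- and volume-preserving diffeomorphism; for `E = ℝ × ℝ` it is a
symplectomorphism of the plane. -/
structure IsVolumePreservingDiffeo (T : Equiv.Perm E) : Prop where
  contDiff : ContDiff ℝ ∞ T
  contDiff_symm : ContDiff ℝ ∞ T.symm
  det_fderiv : ∀ x, (fderiv ℝ T x).det = 1

lemma det_comp (A B : E →L[ℝ] E) : (A.comp B).det = A.det * B.det := by
  simp [ContinuousLinearMap.det]

lemma det_fderiv_comp {f g : E → E} {x : E} (hf : DifferentiableAt ℝ f (g x))
    (hg : DifferentiableAt ℝ g x) :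
    (fderiv ℝ (f ∘ g) x).det = (fderiv ℝ f (g x)).det * (fderiv ℝ g x).det := by
  rw [fderiv_comp x hf hg, det_comp]

lemma det_fderiv_id (x : E) : (fderiv ℝ (id : E → E) x).det = 1 := by
  simp [ContinuousLinearMap.det]

namespace IsVolumePreservingDiffeo

variable {T : Equiv.Perm E}

lemma measurePreserving [FiniteDimensional ℝ E] [MeasurableSpace E] [BorelSpace E]
    (hT : IsVolumePreservingDiffeo T) (μ : Measure E) [μ.IsAddHaarMeasure] :
    MeasurePreserving T μ μ := by
  refine ⟨hT.contDiff.continuous.measurable, ?_⟩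
  have hfderiv : ∀ x ∈ univ, HasFDerivWithinAt T (fderiv ℝ T x) univ x := fun x _ ↦
    (hT.contDiff.differentiable (by simp) x).hasFDerivAt.hasFDerivWithinAt
  simpa [hT.det_fderiv, T.surjective.range_eq] using
    map_withDensity_abs_det_fderiv_eq_addHaar μ nullMeasurableSet_univ hfderiv T.injective.injOn

lemma permCongr (hT : IsVolumePreservingDiffeo T) (L : E ≃L[ℝ] F) :
    IsVolumePreservingDiffeo (L.toEquiv.permCongr T) where
  contDiff := L.contDiff.comp (hT.contDiff.comp L.symm.contDiff)
  contDiff_symm := L.contDiff.comp (hT.contDiff_symm.comp L.symm.contDiff)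
  det_fderiv y := by
    have h : HasFDerivAt (L ∘ T ∘ L.symm)
        ((L : E →L[ℝ] F).comp ((fderiv ℝ T (L.symm y)).comp (L.symm : F →L[ℝ] E))) y :=
      L.hasFDerivAt.comp y
        ((hT.contDiff.differentiable (by simp) _).hasFDerivAt.comp y L.symm.hasFDerivAt)
    exact (congrArg ContinuousLinearMap.det h.fderiv).trans
      ((LinearMap.det_conj _ L.toLinearEquiv).trans (hT.det_fderiv _))

end IsVolumePreservingDiffeo

end VolumePreserving

section ConjExtend

variable {α β : Type*} {T : Equiv.Perm α} {Φ : α → β} {K : Set α}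

open Classical in
/-- The conjugate `Φ ∘ T ∘ Φ⁻¹` of `T` on the range of `Φ`, extended by the identity. -/
noncomputable def conjExtend (T : Equiv.Perm α) (hinj : Φ.Injective) : Equiv.Perm β :=
  T.extendDomain (Equiv.ofInjective Φ hinj)

lemma conjExtend_apply (T : Equiv.Perm α) (hinj : Φ.Injective) (x : α) :
    conjExtend T hinj (Φ x) = Φ (T x) := by
  classical exact T.extendDomain_apply_image (Equiv.ofInjective Φ hinj) x

lemma conjExtend_eq_self (hinj : Φ.Injective) (hK : ∀ x ∉ K, T x = x) {y : β}
    (hy : y ∉ Φ '' K) : conjExtend T hinj y = y := by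
  classical
  by_cases hrange : y ∈ range Φ
  · obtain ⟨x, rfl⟩ := hrange
    rw [conjExtend_apply, hK x fun hx ↦ hy (mem_image_of_mem Φ hx)]
  · exact T.extendDomain_apply_not_subtype (Equiv.ofInjective Φ hinj) hrange

lemma conjExtend_eventuallyEq_id [TopologicalSpace α] [TopologicalSpace β] [T2Space β]
    (hinj : Φ.Injective) (hcont : Continuous Φ) (hcompact : IsCompact K) (hK : ∀ x ∉ K, T x = x)
    {y : β} (hy : y ∉ Φ '' K) : conjExtend T hinj =ᶠ[𝓝 y] id := by
  filter_upwards [(hcompact.image hcont).isClosed.isOpen_compl.mem_nhds hy] with z hz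
    using conjExtend_eq_self hinj hK hz

variable {E : Type*} [NormedAddCommGroup E] [NormedSpace ℝ E] [FiniteDimensional ℝ E]
  {T : Equiv.Perm E} {Φ : E → E} {K : Set E}

lemma contDiff_conjExtend {n : WithTop ℕ∞} (hn : n ≠ 0) (hT : ContDiff ℝ n T)
    (hΦ : ContDiff ℝ n Φ) (hinj : Φ.Injective) (hdet : ∀ x, (fderiv ℝ Φ x).det ≠ 0)
    (hcompact : IsCompact K) (hK : ∀ x ∉ K, T x = x) :
    ContDiff ℝ n (conjExtend T hinj) := by
  have := FiniteDimensional.complete ℝ E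
  rw [contDiff_iff_contDiffAt]
  intro y
  by_cases hy : y ∈ Φ '' K
  · obtain ⟨x, -, rfl⟩ := hy
    have hderiv : HasFDerivAt Φ
        ((fderiv ℝ Φ x).toContinuousLinearEquivOfDetNeZero (hdet x) : E →L[ℝ] E) x := by
      simpa using (hΦ.differentiable hn x).hasFDerivAt
    have hstrict := hΦ.contDiffAt.hasStrictFDerivAt' hderiv hn
    have hsmooth : ContDiffAt ℝ n (Φ ∘ T ∘ hΦ.contDiffAt.localInverse hderiv hn) (Φ x) :=
      (hΦ.comp hT).contDiffAt.comp _ (hΦ.contDiffAt.to_localInverse hderiv hn)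
    refine hsmooth.congr_of_eventuallyEq ?_
    filter_upwards [hstrict.eventually_right_inverse] with z hz
    exact (congrArg (conjExtend T hinj) hz.symm).trans (conjExtend_apply T hinj _)
  · exact contDiffAt_id.congr_of_eventuallyEq
      (conjExtend_eventuallyEq_id hinj hΦ.continuous hcompact hK hy)

lemma isVolumePreservingDiffeo_conjExtend (hT : IsVolumePreservingDiffeo T)
    (hΦ : ContDiff ℝ ∞ Φ) (hinj : Φ.Injective) (hdet : ∀ x, (fderiv ℝ Φ x).det ≠ 0)
    (hinv : ∀ x, (fderiv ℝ Φ (T x)).det = (fderiv ℝ Φ x).det)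
    (hcompact : IsCompact K) (hK : ∀ x ∉ K, T x = x) :
    IsVolumePreservingDiffeo (conjExtend T hinj) := by
  have hsmooth := contDiff_conjExtend (by simp) hT.contDiff hΦ hinj hdet hcompact hK
  have hKsymm : ∀ x ∉ K, T.symm x = x := fun x hx ↦ T.symm_apply_eq.2 (hK x hx).symm
  refine ⟨hsmooth,
    contDiff_conjExtend (by simp) hT.contDiff_symm hΦ hinj hdet hcompact hKsymm, fun y ↦ ?_⟩
  by_cases hy : y ∈ Φ '' K
  · obtain ⟨x, -, rfl⟩ := hy
    have hΦd := hΦ.differentiable (by simp)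
    have hsemiconj : conjExtend T hinj ∘ Φ = Φ ∘ T := funext (conjExtend_apply T hinj)
    have hchain := congrArg (fun f ↦ (fderiv ℝ f x).det) hsemiconj
    simp only [det_fderiv_comp (hsmooth.differentiable (by simp) _) (hΦd x),
      det_fderiv_comp (hΦd _) (hT.contDiff.differentiable (by simp) x), hT.det_fderiv, hinv,
      mul_one] at hchain
    exact mul_right_cancel₀ (hdet x) (hchain.trans (one_mul _).symm)
  · rw [(conjExtend_eventuallyEq_id hinj hΦ.continuous hcompact hK hy).fderiv_eq, det_fderiv_id]

end ConjExtend

section Periodize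

lemma apply_notMem_of_forall_mem_eq_self {α : Type*} {T : Equiv.Perm α} {s : Set α}
    (h : ∀ x ∈ s, T x = x) {x : α} (hx : x ∉ s) : T x ∉ s := fun hTx ↦
  hx (T.injective (h _ hTx) ▸ hTx)

/-- The superposition of the translates of `T` by the vectors of `Λ`. It is meant for maps `T`
whose displacement `T x - x` is supported in a set with pairwise disjoint translates, so that at
most one summand is nonzero. -/
noncomputable def periodize {E : Type*} [AddCommGroup E] (Λ : AddSubgroup E) (T : E → E) (x : E) :
    E :=
  x + ∑ᶠ v : Λ, (T (x - v) - (x - v))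

section AddCommGroup

variable {E : Type*} [AddCommGroup E] {Λ : AddSubgroup E} {T : E → E} {x v : E}

lemma periodize_add_mem (T : E → E) (x : E) (hv : v ∈ Λ) :
    periodize Λ T (x + v) = periodize Λ T x + v := by
  rw [periodize, periodize, ← finsum_comp_equiv (Equiv.addRight (⟨v, hv⟩ : Λ))]
  simp only [Equiv.coe_addRight, AddSubgroup.coe_add, add_sub_add_right_eq_sub]
  abel

lemma periodize_eq_of_forall_ne (hv : v ∈ Λ)
    (h : ∀ w ∈ Λ, w ≠ v → T (x - w) = x - w) : periodize Λ T x = T (x - v) + v := by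
  rw [periodize, finsum_eq_single _ (⟨v, hv⟩ : Λ) fun w hw ↦
    sub_eq_zero.2 (h w w.2 fun hwv ↦ hw (Subtype.ext hwv))]
  abel

lemma periodize_eq_self (h : ∀ v ∈ Λ, T (x - v) = x - v) : periodize Λ T x = x := by
  rw [periodize_eq_of_forall_ne (zero_mem Λ) fun v hv _ ↦ h v hv, h 0 (zero_mem Λ), sub_add_cancel]

end AddCommGroup

section Normed

variable {E : Type*} [NormedAddCommGroup E] {Λ : AddSubgroup E} {d ρ : ℝ} {v : E}

lemma periodize_eq_of_norm_sub_lt {T : E → E} {x : E} (hsep : ∀ v ∈ Λ, v ≠ 0 → d ≤ ‖v‖)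
    (hfix : ∀ x, ρ ≤ ‖x‖ → T x = x) (hv : v ∈ Λ) (hx : ‖x - v‖ < d - ρ) :
    periodize Λ T x = T (x - v) + v := by
  refine periodize_eq_of_forall_ne hv fun w hw hwv ↦ hfix _ ?_
  have htri := norm_sub_le_norm_sub_add_norm_sub w x v
  rw [norm_sub_rev w x] at htri
  linarith [hsep (w - v) (sub_mem hw hv) (sub_ne_zero.2 hwv)]

lemma exists_periodize_eventuallyEq {T : E → E} (hρ : 2 * ρ < d)
    (hsep : ∀ v ∈ Λ, v ≠ 0 → d ≤ ‖v‖) (hfix : ∀ x, ρ ≤ ‖x‖ → T x = x) (x : E) :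
    ∃ v, periodize Λ T =ᶠ[𝓝 x] fun z ↦ T (z - v) + v := by
  by_cases hx : ∃ v ∈ Λ, ‖x - v‖ < d - ρ
  · obtain ⟨v, hv, hxv⟩ := hx
    have hnear : ∀ᶠ z in 𝓝 x, ‖z - v‖ < d - ρ :=
      (continuous_id.sub continuous_const).norm.continuousAt.eventually_lt_const hxv
    exact ⟨v, hnear.mono fun z hz ↦ periodize_eq_of_norm_sub_lt hsep hfix hv hz⟩
  · push Not at hx
    have hfix_near : ∀ z ∈ ball x (d - 2 * ρ), ∀ v ∈ Λ, T (z - v) = z - v := by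
      intro z hz v hv
      have htri := norm_sub_le_norm_sub_add_norm_sub x z v
      rw [norm_sub_rev x z] at htri
      exact hfix _ (by linarith [hx v hv, mem_ball_iff_norm.1 hz])
    refine ⟨0, ?_⟩
    filter_upwards [ball_mem_nhds x (by linarith : 0 < d - 2 * ρ)] with z hz
    simpa only [sub_zero, add_zero, periodize_eq_self (hfix_near z hz)]
      using (hfix_near z hz 0 (zero_mem Λ)).symm

lemma periodize_symm_periodize {T : Equiv.Perm E} (hρ : 2 * ρ < d)
    (hsep : ∀ v ∈ Λ, v ≠ 0 → d ≤ ‖v‖) (hfix : ∀ x, ρ ≤ ‖x‖ → T x = x) (x : E) :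
    periodize Λ T.symm (periodize Λ T x) = x := by
  have hfix_symm : ∀ x, ρ ≤ ‖x‖ → T.symm x = x := fun x hx ↦ T.symm_apply_eq.2 (hfix x hx).symm
  by_cases hx : ∃ v ∈ Λ, ‖x - v‖ < d - ρ
  · obtain ⟨v, hv, hxv⟩ := hx
    have hTx : ‖T (x - v) + v - v‖ < d - ρ := by
      rw [add_sub_cancel_right, ← not_le]
      exact apply_notMem_of_forall_mem_eq_self (s := {z | d - ρ ≤ ‖z‖})
        (fun z hz ↦ hfix z ((by linarith : ρ ≤ d - ρ).trans hz)) (not_le.2 hxv)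
    rw [periodize_eq_of_norm_sub_lt hsep hfix hv hxv,
      periodize_eq_of_norm_sub_lt hsep hfix_symm hv hTx, add_sub_cancel_right,
      T.symm_apply_apply, sub_add_cancel]
  · push Not at hx
    have hfar : ∀ v ∈ Λ, ρ ≤ ‖x - v‖ := fun v hv ↦ by linarith [hx v hv]
    rw [periodize_eq_self fun v hv ↦ hfix _ (hfar v hv),
      periodize_eq_self fun v hv ↦ hfix_symm _ (hfar v hv)]

variable [NormedSpace ℝ E]

lemma contDiff_periodize {n : WithTop ℕ∞} {T : E → E} (hT : ContDiff ℝ n T) (hρ : 2 * ρ < d)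
    (hsep : ∀ v ∈ Λ, v ≠ 0 → d ≤ ‖v‖) (hfix : ∀ x, ρ ≤ ‖x‖ → T x = x) :
    ContDiff ℝ n (periodize Λ T) := by
  refine contDiff_iff_contDiffAt.2 fun x ↦ ?_
  obtain ⟨v, hv⟩ := exists_periodize_eventuallyEq hρ hsep hfix x
  have hsmooth : ContDiff ℝ n fun z ↦ T (z - v) + v := by fun_prop
  exact hsmooth.contDiffAt.congr_of_eventuallyEq hv

lemma IsVolumePreservingDiffeo.exists_periodize {T : Equiv.Perm E}
    (hT : IsVolumePreservingDiffeo T) (hρ : 2 * ρ < d) (hsep : ∀ v ∈ Λ, v ≠ 0 → d ≤ ‖v‖)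
    (hfix : ∀ x, ρ ≤ ‖x‖ → T x = x) :
    ∃ S : Equiv.Perm E, IsVolumePreservingDiffeo S ∧ ⇑S = periodize Λ T := by
  have hfix_symm : ∀ x, ρ ≤ ‖x‖ → T.symm x = x := fun x hx ↦ T.symm_apply_eq.2 (hfix x hx).symm
  refine ⟨⟨periodize Λ T, periodize Λ T.symm, periodize_symm_periodize hρ hsep hfix,
    periodize_symm_periodize (T := T.symm) hρ hsep hfix_symm⟩,
    ⟨contDiff_periodize hT.contDiff hρ hsep hfix,
      contDiff_periodize hT.contDiff_symm hρ hsep hfix_symm, fun x ↦ ?_⟩, rfl⟩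
  obtain ⟨v, hv⟩ := exists_periodize_eventuallyEq hρ hsep hfix x
  have hderiv : fderiv ℝ (periodize Λ T) x = fderiv ℝ T (x - v) := by
    rw [hv.fderiv_eq, fderiv_add_const, fderiv_comp_sub]
  exact (congrArg ContinuousLinearMap.det hderiv).trans (hT.det_fderiv _)

end Normed

end Periodize

section Twist

/-- The map of the plane rotating each circle `x ^ 2 + y ^ 2 = s` by the angle `θ s`. -/
noncomputable def twistMap (θ : ℝ → ℝ) (p : ℝ × ℝ) : ℝ × ℝ :=
  (Real.cos (θ (p.1 ^ 2 + p.2 ^ 2)) * p.1 - Real.sin (θ (p.1 ^ 2 + p.2 ^ 2)) * p.2,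
    Real.sin (θ (p.1 ^ 2 + p.2 ^ 2)) * p.1 + Real.cos (θ (p.1 ^ 2 + p.2 ^ 2)) * p.2)

lemma twistMap_sq_add_sq (θ : ℝ → ℝ) (p : ℝ × ℝ) :
    (twistMap θ p).1 ^ 2 + (twistMap θ p).2 ^ 2 = p.1 ^ 2 + p.2 ^ 2 := by
  simp only [twistMap]
  linear_combination (p.1 ^ 2 + p.2 ^ 2) * Real.sin_sq_add_cos_sq (θ (p.1 ^ 2 + p.2 ^ 2))

lemma twistMap_neg_twistMap (θ : ℝ → ℝ) (p : ℝ × ℝ) : twistMap (-θ) (twistMap θ p) = p := by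
  have htrig := Real.sin_sq_add_cos_sq (θ (p.1 ^ 2 + p.2 ^ 2))
  rw [twistMap, twistMap_sq_add_sq]
  simp only [twistMap, Pi.neg_apply, Real.cos_neg, Real.sin_neg]
  ext
  · linear_combination p.1 * htrig
  · linear_combination p.2 * htrig

lemma contDiff_twistMap {n : WithTop ℕ∞} {θ : ℝ → ℝ} (hθ : ContDiff ℝ n θ) :
    ContDiff ℝ n (twistMap θ) := by
  unfold twistMap
  fun_prop

lemma det_eq_of_prod (L : ℝ × ℝ →L[ℝ] ℝ × ℝ) :
    L.det = (L (1, 0)).1 * (L (0, 1)).2 - (L (0, 1)).1 * (L (1, 0)).2 := by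
  rw [ContinuousLinearMap.det, ← LinearMap.det_toMatrix (Module.Basis.finTwoProd ℝ),
    Matrix.det_fin_two]
  simp [LinearMap.toMatrix_apply]

lemma det_fderiv_twistMap {θ : ℝ → ℝ} (hθ : Differentiable ℝ θ) (p : ℝ × ℝ) :
    (fderiv ℝ (twistMap θ) p).det = 1 := by
  have hx : HasFDerivAt (fun p : ℝ × ℝ ↦ p.1) (ContinuousLinearMap.fst ℝ ℝ ℝ) p := hasFDerivAt_fst
  have hy : HasFDerivAt (fun p : ℝ × ℝ ↦ p.2) (ContinuousLinearMap.snd ℝ ℝ ℝ) p := hasFDerivAt_snd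
  have hangle := HasDerivAt.comp_hasFDerivAt (f := fun p : ℝ × ℝ ↦ p.1 ^ 2 + p.2 ^ 2) p
    (hθ _).hasDerivAt ((hx.pow 2).add (hy.pow 2))
  have htwist : HasFDerivAt (twistMap θ) _ p :=
    ((hangle.cos.mul hx).sub (hangle.sin.mul hy)).prodMk
      ((hangle.sin.mul hx).add (hangle.cos.mul hy))
  rw [htwist.fderiv, det_eq_of_prod]
  simp only [Function.comp_apply, Nat.add_one_sub_one, pow_one, nsmul_eq_mul, Nat.cast_ofNat,
    smul_add, neg_smul, smul_neg, ContinuousLinearMap.prod_apply, sub_apply, add_apply, smul_apply,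
    ContinuousLinearMap.coe_fst', smul_eq_mul, mul_one, neg_apply, ContinuousLinearMap.coe_snd',
    mul_zero, neg_zero, add_zero, zero_add]
  linear_combination Real.sin_sq_add_cos_sq (θ (p.1 ^ 2 + p.2 ^ 2))

/-- `twistMap θ` as a permutation of the plane. -/
noncomputable def twist (θ : ℝ → ℝ) : Equiv.Perm (ℝ × ℝ) where
  toFun := twistMap θ
  invFun := twistMap (-θ)
  left_inv := twistMap_neg_twistMap θ
  right_inv p := by simpa only [neg_neg] using twistMap_neg_twistMap (-θ) p

lemma isVolumePreservingDiffeo_twist {θ : ℝ → ℝ} (hθ : ContDiff ℝ ∞ θ) :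
    IsVolumePreservingDiffeo (twist θ) where
  contDiff := contDiff_twistMap hθ
  contDiff_symm := contDiff_twistMap hθ.neg
  det_fderiv := det_fderiv_twistMap (hθ.differentiable (by simp))

lemma twist_apply_of_angle_eq_zero {θ : ℝ → ℝ} {p : ℝ × ℝ} (h : θ (p.1 ^ 2 + p.2 ^ 2) = 0) :
    twist θ p = p := by
  simp [twist, twistMap, h]

lemma twist_apply_of_angle_eq_pi_div_two {θ : ℝ → ℝ} {p : ℝ × ℝ}
    (h : θ (p.1 ^ 2 + p.2 ^ 2) = Real.pi / 2) : twist θ p = (-p.2, p.1) := by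
  simp [twist, twistMap, h]

end Twist

section GaussErf

/-- The Gauss error function, normalized to increase from `-1` to `1`. -/
noncomputable def gaussErf (x : ℝ) : ℝ :=
  2 / √Real.pi * ∫ t in (0 : ℝ)..x, Real.exp (-t ^ 2)

lemma continuous_exp_neg_sq : Continuous fun t : ℝ ↦ Real.exp (-t ^ 2) := by fun_prop

lemma hasDerivAt_gaussErf (x : ℝ) :
    HasDerivAt gaussErf (2 / √Real.pi * Real.exp (-x ^ 2)) x :=
  (continuous_exp_neg_sq.integral_hasStrictDerivAt 0 x).hasDerivAt.const_mul _

lemma contDiff_gaussErf : ContDiff ℝ ∞ gaussErf := by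
  rw [contDiff_infty_iff_deriv]
  refine ⟨fun x ↦ (hasDerivAt_gaussErf x).differentiableAt, ?_⟩
  rw [deriv_eq hasDerivAt_gaussErf]
  fun_prop

lemma strictMono_gaussErf : StrictMono gaussErf :=
  strictMono_of_hasDerivAt_pos hasDerivAt_gaussErf fun _ ↦ by positivity

lemma gaussErf_neg (x : ℝ) : gaussErf (-x) = -gaussErf x := by
  have h := intervalIntegral.integral_comp_neg (a := 0) (b := x) fun t : ℝ ↦ Real.exp (-t ^ 2)
  simp only [neg_sq, neg_zero] at h
  rw [gaussErf, gaussErf, h, intervalIntegral.integral_symm, mul_neg]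

lemma tendsto_gaussErf_atTop : Tendsto gaussErf atTop (𝓝 1) := by
  have hgauss : ∫ t in Ioi (0 : ℝ), Real.exp (-t ^ 2) = √Real.pi / 2 := by
    simpa using integral_gaussian_Ioi 1
  have hint : Integrable fun t : ℝ ↦ Real.exp (-t ^ 2) := by
    simpa using integrable_exp_neg_mul_sq one_pos
  have hlim := (intervalIntegral_tendsto_integral_Ioi 0 hint.integrableOn tendsto_id).const_mul
    (2 / √Real.pi)
  rw [hgauss, div_mul_div_cancel₀ (by positivity), div_self two_ne_zero] at hlim
  exact hlim

lemma abs_gaussErf_lt_one (x : ℝ) : |gaussErf x| < 1 := by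
  have hlt : ∀ x, gaussErf x < 1 := fun x ↦ (strictMono_gaussErf (lt_add_one x)).trans_le
    (strictMono_gaussErf.monotone.ge_of_tendsto tendsto_gaussErf_atTop _)
  exact abs_lt.2 ⟨by linarith [gaussErf_neg x, hlt (-x)], hlt x⟩

lemma range_gaussErf : range gaussErf = Ioo (-1) 1 := by
  refine subset_antisymm (range_subset_iff.2 fun x ↦ abs_lt.1 (abs_gaussErf_lt_one x)) ?_
  have habove : ∀ c < 1, ∃ x, c ≤ gaussErf x := fun c hc ↦
    (tendsto_gaussErf_atTop.eventually_const_le hc).exists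
  rintro c ⟨hc, hc'⟩
  obtain ⟨x, hx⟩ := habove (-c) (by linarith)
  exact mem_range_of_exists_le_of_exists_ge contDiff_gaussErf.continuous
    ⟨-x, by linarith [gaussErf_neg x]⟩ (habove c hc')

/-- The diffeomorphism `erf × erf` of the plane onto the open square `(-1, 1) ^ 2`. -/
noncomputable def squareChart : ℝ × ℝ → ℝ × ℝ := Prod.map gaussErf gaussErf

lemma contDiff_squareChart : ContDiff ℝ ∞ squareChart :=
  contDiff_gaussErf.prodMap contDiff_gaussErf

lemma injective_squareChart : squareChart.Injective :=
  strictMono_gaussErf.injective.prodMap strictMono_gaussErf.injective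

lemma squareChart_mem_ball (p : ℝ × ℝ) : squareChart p ∈ ball 0 1 :=
  mem_ball_zero_iff.2 (max_lt (abs_gaussErf_lt_one p.1) (abs_gaussErf_lt_one p.2))

lemma det_fderiv_squareChart (p : ℝ × ℝ) :
    (fderiv ℝ squareChart p).det =
      (2 / √Real.pi) ^ 2 * Real.exp (-(p.1 ^ 2 + p.2 ^ 2)) := by
  have hderiv : HasFDerivAt squareChart _ p :=
    HasFDerivAt.prodMap p (hasDerivAt_gaussErf p.1).hasFDerivAt
      (hasDerivAt_gaussErf p.2).hasFDerivAt
  rw [hderiv.fderiv, det_eq_of_prod, neg_add, Real.exp_add]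
  simp only [ContinuousLinearMap.coe_prodMap', Prod.map_apply,
    ContinuousLinearMap.toSpanSingleton_apply, smul_eq_mul, one_mul, zero_mul, mul_zero, sub_zero]
  ring

end GaussErf

section QuarterTurn

lemma squareChart_neg_snd_fst (p : ℝ × ℝ) :
    squareChart (-p.2, p.1) = (-(squareChart p).2, (squareChart p).1) :=
  Prod.ext (gaussErf_neg p.2) rfl

lemma exists_mem_closedBall_squareChart_eq {a : ℝ} {P : ℝ × ℝ} (hP : ‖P‖ ≤ gaussErf a) :
    ∃ p, ‖p‖ ≤ a ∧ squareChart p = P := by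
  have hcoord : ∀ c : ℝ, |c| ≤ gaussErf a → ∃ x, |x| ≤ a ∧ gaussErf x = c := by
    intro c hc
    have hrange : c ∈ range gaussErf := by
      rw [range_gaussErf]
      exact abs_lt.1 (hc.trans_lt (abs_lt.1 (abs_gaussErf_lt_one a)).2)
    obtain ⟨x, rfl⟩ := hrange
    rw [abs_le, ← gaussErf_neg] at hc
    have hle {u v : ℝ} := (strictMono_gaussErf.le_iff_le (a := u) (b := v)).1
    exact ⟨x, abs_le.2 (hc.imp hle hle), rfl⟩
  obtain ⟨x, hx, hxP⟩ := hcoord P.1 ((norm_fst_le P).trans hP)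
  obtain ⟨y, hy, hyP⟩ := hcoord P.2 ((norm_snd_le P).trans hP)
  exact ⟨(x, y), max_le hx hy, Prod.ext hxP hyP⟩

/-- A smooth angle function equal to `π / 2` on `(-∞, R]` and to `0` on `[R + 1, ∞)`. -/
noncomputable def quarterTurnAngle (R s : ℝ) : ℝ :=
  Real.pi / 2 * Real.smoothTransition (R + 1 - s)

lemma contDiff_quarterTurnAngle (R : ℝ) : ContDiff ℝ ∞ (quarterTurnAngle R) :=
  contDiff_const.mul (Real.smoothTransition.contDiff.comp (contDiff_const.sub contDiff_id))

lemma twist_quarterTurnAngle_of_notMem {R : ℝ} (hR : 0 ≤ R) {p : ℝ × ℝ}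
    (hp : p ∉ closedBall 0 (R + 1)) : twist (quarterTurnAngle R) p = p := by
  refine twist_apply_of_angle_eq_zero ?_
  rw [mem_closedBall_zero_iff, not_le] at hp
  have hnorm : ‖p‖ ^ 2 ≤ p.1 ^ 2 + p.2 ^ 2 := by
    rcases max_choice ‖p.1‖ ‖p.2‖ with h | h <;> rw [Prod.norm_def, h, Real.norm_eq_abs, sq_abs]
    · exact le_add_of_nonneg_right (sq_nonneg _)
    · exact le_add_of_nonneg_left (sq_nonneg _)
  rw [quarterTurnAngle, Real.smoothTransition.zero_of_nonpos (by nlinarith), mul_zero]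

lemma twist_quarterTurnAngle_of_norm_le {a : ℝ} {p : ℝ × ℝ} (hp : ‖p‖ ≤ a) :
    twist (quarterTurnAngle (2 * a ^ 2)) p = (-p.2, p.1) := by
  refine twist_apply_of_angle_eq_pi_div_two ?_
  have hfst : p.1 ^ 2 ≤ a ^ 2 := sq_le_sq' (abs_le.1 ((norm_fst_le p).trans hp)).1
    (abs_le.1 ((norm_fst_le p).trans hp)).2
  have hsnd : p.2 ^ 2 ≤ a ^ 2 := sq_le_sq' (abs_le.1 ((norm_snd_le p).trans hp)).1
    (abs_le.1 ((norm_snd_le p).trans hp)).2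
  rw [quarterTurnAngle, Real.smoothTransition.one_of_one_le (by linarith), mul_one]

lemma isVolumePreservingDiffeo_conjExtend_twist {R : ℝ} (hR : 0 ≤ R) :
    IsVolumePreservingDiffeo (conjExtend (twist (quarterTurnAngle R)) injective_squareChart) := by
  refine isVolumePreservingDiffeo_conjExtend
    (isVolumePreservingDiffeo_twist (contDiff_quarterTurnAngle R)) contDiff_squareChart
    injective_squareChart (fun p ↦ ?_) (fun p ↦ ?_) (isCompact_closedBall 0 (R + 1))
    fun p ↦ twist_quarterTurnAngle_of_notMem hR
  · rw [det_fderiv_squareChart]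
    positivity
  · rw [det_fderiv_squareChart, det_fderiv_squareChart]
    exact congrArg (fun s ↦ (2 / √Real.pi) ^ 2 * Real.exp (-s)) (twistMap_sq_add_sq _ p)

theorem exists_quarterTurn_square {m : ℝ} (hm₀ : 0 ≤ m) (hm₁ : m < 1) :
    ∃ T : Equiv.Perm (ℝ × ℝ), IsVolumePreservingDiffeo T ∧
      (∃ ρ < 1, ∀ P, ρ ≤ ‖P‖ → T P = P) ∧ ∀ P, ‖P‖ ≤ m → T P = (-P.2, P.1) := by
  obtain ⟨a, rfl⟩ : m ∈ range gaussErf := by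
    rw [range_gaussErf]
    exact ⟨by linarith, hm₁⟩
  have hR : 0 ≤ 2 * a ^ 2 := by positivity
  refine ⟨_, isVolumePreservingDiffeo_conjExtend_twist hR, ?_, fun P hP ↦ ?_⟩
  · obtain ⟨ρ, hρ, hsub⟩ := exists_pos_lt_subset_ball one_pos
      ((isCompact_closedBall 0 (2 * a ^ 2 + 1)).image contDiff_squareChart.continuous).isClosed
      (image_subset_iff.2 fun p _ ↦ squareChart_mem_ball p)
    refine ⟨ρ, hρ.2, fun P hP ↦ conjExtend_eq_self injective_squareChart
      (fun p ↦ twist_quarterTurnAngle_of_notMem hR) fun hmem ↦ ?_⟩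
    exact (mem_ball_zero_iff.1 (hsub hmem)).not_ge hP
  · obtain ⟨p, hp, rfl⟩ := exists_mem_closedBall_squareChart_eq hP
    rw [conjExtend_apply, twist_quarterTurnAngle_of_norm_le hp, squareChart_neg_snd_fst]

end QuarterTurn

section Array

/-- The `2`-periodic sawtooth function equal to the identity on `[-1, 1)`. -/
noncomputable def sawtooth (x : ℝ) : ℝ := toIcoMod two_pos (-1) x

lemma abs_sawtooth_le_one (x : ℝ) : |sawtooth x| ≤ 1 := by
  have h := toIcoMod_mem_Ico (two_pos (α := ℝ)) (-1) x
  exact abs_le.2 ⟨h.1, h.2.le.trans_eq (by norm_num)⟩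

lemma two_le_norm_of_mem_zmultiples {v : ℝ × ℝ}
    (hv : v ∈ AddSubgroup.zmultiples ((2 : ℝ), (0 : ℝ))) (hv₀ : v ≠ 0) : 2 ≤ ‖v‖ := by
  obtain ⟨j, rfl⟩ := hv
  have hj : (1 : ℝ) ≤ |(j : ℝ)| := by
    exact_mod_cast Int.one_le_abs (left_ne_zero_of_smul hv₀)
  have hfst := norm_fst_le (j • ((2 : ℝ), (0 : ℝ)))
  simp only [Prod.smul_mk, zsmul_eq_mul, norm_mul, Real.norm_eq_abs, abs_two] at hfst
  simpa using (by linarith : (2 : ℝ) ≤ |(j : ℝ)| * 2).trans hfst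

lemma exists_quarterTurn_array {m : ℝ} (hm₀ : 0 ≤ m) (hm₁ : m < 1) :
    ∃ S : Equiv.Perm (ℝ × ℝ), IsVolumePreservingDiffeo S ∧
      (∀ (j : ℤ) P, S (P + j • (2, 0)) = S P + j • (2, 0)) ∧
      (∃ ρ < 1, ∀ P, ρ ≤ |P.2| → S P = P) ∧
      ∀ P, |P.2| ≤ m → |sawtooth P.1| ≤ m → (S P).2 = sawtooth P.1 := by
  obtain ⟨T, hT, ⟨ρ, hρ, hfix⟩, hturn⟩ := exists_quarterTurn_square hm₀ hm₁
  set Λ := AddSubgroup.zmultiples ((2 : ℝ), (0 : ℝ))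
  have hsep : ∀ v ∈ Λ, v ≠ 0 → 2 ≤ ‖v‖ := fun v ↦ two_le_norm_of_mem_zmultiples
  obtain ⟨S, hS, hSeq⟩ := hT.exists_periodize (by linarith) hsep hfix
  refine ⟨S, hS, fun j P ↦ ?_, ⟨ρ, hρ, fun P hP ↦ ?_⟩, fun P hP hsaw ↦ ?_⟩
  · simpa only [hSeq] using periodize_add_mem T P (AddSubgroup.zsmul_mem_zmultiples _ j)
  · refine (congrFun hSeq P).trans (periodize_eq_self ?_)
    rintro - ⟨j, rfl⟩
    exact hfix _ (hP.trans (by simpa using norm_snd_le (P - j • ((2 : ℝ), (0 : ℝ)))))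
  · have hcenter : P - toIcoDiv two_pos (-1) P.1 • ((2 : ℝ), (0 : ℝ)) = (sawtooth P.1, P.2) :=
      Prod.ext (self_sub_toIcoDiv_zsmul two_pos (-1) P.1) (by simp)
    have hnorm : ‖(sawtooth P.1, P.2)‖ ≤ m := max_le hsaw hP
    rw [hSeq, periodize_eq_of_norm_sub_lt hsep hfix (AddSubgroup.zsmul_mem_zmultiples _ _)
      (by rw [hcenter]; linarith), hcenter, hturn _ hnorm]
    simp

theorem exists_rescaled_quarterTurn_array {N m : ℝ} (hN : N ≠ 0) (hm₀ : 0 ≤ m) (hm₁ : m < 1) :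
    ∃ H : Equiv.Perm (ℝ × ℝ), IsVolumePreservingDiffeo H ∧
      (∀ (j : ℤ) P, H (P + (j / N, 0)) = H P + (j / N, 0)) ∧
      (∃ δ > 0, ∀ P, 1 - δ ≤ |P.2| → H P = P) ∧
      ∀ P, |P.2| ≤ m → |sawtooth (2 * N * P.1)| ≤ m → (H P).2 = sawtooth (2 * N * P.1) := by
  obtain ⟨S, hS, hperiod, ⟨ρ, hρ, hfix⟩, hturn⟩ := exists_quarterTurn_array hm₀ hm₁
  let L : (ℝ × ℝ) ≃L[ℝ] ℝ × ℝ := (ContinuousLinearEquiv.unitsEquivAut ℝ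
    (Units.mk0 (2 * N) (mul_ne_zero two_ne_zero hN))).prodCongr (.refl ℝ ℝ)
  have hL : ∀ P, L P = (2 * N * P.1, P.2) := fun P ↦ Prod.ext (mul_comm _ _) rfl
  have hLsymm : ∀ P, (L.symm P).2 = P.2 := fun P ↦ rfl
  have hstep : ∀ j : ℤ, L (j / N, 0) = j • ((2 : ℝ), (0 : ℝ)) := by
    intro j
    rw [hL]
    ext <;> simp only [Prod.smul_mk, zsmul_eq_mul, smul_zero]
    field_simp
  have hH : ∀ P, L.symm.toEquiv.permCongr S P = L.symm (S (L P)) := fun P ↦ rfl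
  refine ⟨_, hS.permCongr L.symm, fun j P ↦ ?_, ⟨1 - ρ, sub_pos.2 hρ, fun P hP ↦ ?_⟩,
    fun P hP hsaw ↦ ?_⟩
  · rw [hH, hH, map_add, hstep, hperiod, map_add, ← hstep, L.symm_apply_apply]
  · rw [hH, hfix _ (by rw [hL]; linarith), L.symm_apply_apply]
  · rw [hH, hLsymm, hturn _ (by rwa [hL]) (by rwa [hL]), hL]

lemma abs_snd_apply_le_one {H : Equiv.Perm (ℝ × ℝ)} (hfix : ∀ P, 1 < |P.2| → H P = P)
    {P : ℝ × ℝ} (hP : |P.2| ≤ 1) : |(H P).2| ≤ 1 :=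
  not_lt.1 (apply_notMem_of_forall_mem_eq_self (s := {P : ℝ × ℝ | 1 < |P.2|}) hfix (not_lt.2 hP))

end Array

section Equidistribution

lemma abs_sub_le_of_lipschitzWith_one {f : ℝ → ℝ} (hf : LipschitzWith 1 f) (x y : ℝ) :
    |f x - f y| ≤ |x - y| := by
  simpa [Real.dist_eq] using hf.dist_le_mul x y

lemma abs_integral_sub_integral_le {f g : ℝ → ℝ} (hf : Continuous f) (hg : Continuous g) {C : ℝ}
    (h : ∀ t, |f t - g t| ≤ C) : |(∫ t in (0 : ℝ)..1, f t) - ∫ t in (0 : ℝ)..1, g t| ≤ C := by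
  rw [← intervalIntegral.integral_sub (hf.intervalIntegrable _ _) (hg.intervalIntegrable _ _)]
  simpa using intervalIntegral.norm_integral_le_of_norm_le_const (a := 0) (b := 1)
    (f := fun t ↦ f t - g t) fun t _ ↦ h t

lemma integral_comp_add_of_periodic_one {f : ℝ → ℝ} (hf : Function.Periodic f 1) (a : ℝ) :
    ∫ t in (0 : ℝ)..1, f (t + a) = ∫ t in (0 : ℝ)..1, f t := by
  simpa [add_comm] using hf.intervalIntegral_add_eq a 0

lemma abs_sub_integral_le_of_periodic {f : ℝ → ℝ} {τ : ℝ} (hτ : 0 < τ)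
    (hf : LipschitzWith 1 f) (hper : Function.Periodic f τ) (x : ℝ) :
    |f x - ∫ t in (0 : ℝ)..1, f t| ≤ τ := by
  have hosc : ∀ y, |f x - f y| ≤ τ := by
    intro y
    obtain ⟨z, ⟨hz, hz'⟩, hyz⟩ := hper.exists_mem_Ico hτ y x
    rw [hyz]
    refine (abs_sub_le_of_lipschitzWith_one hf x z).trans (abs_le.2 ⟨?_, ?_⟩) <;> linarith
  simpa using abs_integral_sub_integral_le continuous_const hf.continuous hosc

/-- The mean of `φ` over the horizontal circle at height `s`. -/
noncomputable def circleMean (φ : ℝ × ℝ → ℝ) (s : ℝ) : ℝ := ∫ x in (0 : ℝ)..1, φ (x, s)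

lemma lipschitzWith_circleMean {φ : ℝ × ℝ → ℝ} (hφ : Continuous φ)
    (hsnd : ∀ x, LipschitzWith 1 fun s ↦ φ (x, s)) : LipschitzWith 1 (circleMean φ) :=
  .mk_one fun s s' ↦ abs_integral_sub_integral_le (by fun_prop) (by fun_prop) fun x ↦
    abs_sub_le_of_lipschitzWith_one (hsnd x) s s'

lemma integral_integral_translate {φ : ℝ × ℝ → ℝ} (hφ : Continuous φ)
    (hper : ∀ s, Function.Periodic (fun x ↦ φ (x, s)) 1) {γ : ℝ → ℝ × ℝ} (hγ : Continuous γ) :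
    ∫ a in (0 : ℝ)..1, ∫ t in (0 : ℝ)..1, φ (γ t + (a, 0)) =
      ∫ t in (0 : ℝ)..1, circleMean φ (γ t).2 := by
  have hcont : Continuous (Function.uncurry fun a t : ℝ ↦ φ (γ t + (a, 0))) := by
    unfold Function.uncurry
    fun_prop
  rw [intervalIntegral_intervalIntegral_swap
    ((hcont.continuousOn.integrableOn_compact (isCompact_uIcc.prod isCompact_uIcc)).mono_set
      (prod_mono uIoc_subset_uIcc uIoc_subset_uIcc))]
  refine intervalIntegral.integral_congr fun t _ ↦ ?_
  simpa only [circleMean, Prod.add_def, add_zero, add_comm]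
    using integral_comp_add_of_periodic_one (hper (γ t).2) (γ t).1

lemma abs_integral_sub_integral_circleMean_le {φ : ℝ × ℝ → ℝ} {τ : ℝ} (hτ : 0 < τ)
    (hφ : Continuous φ) (hfst : ∀ s, LipschitzWith 1 fun x ↦ φ (x, s))
    (hper : ∀ s, Function.Periodic (fun x ↦ φ (x, s)) 1) {γ : ℝ → ℝ × ℝ} (hγ : Continuous γ)
    (hγ_step : ∀ t, γ (t + τ) = γ t + (τ, 0)) (hγ_one : ∀ t, γ (t + 1) = γ t + (1, 0)) :
    |(∫ t in (0 : ℝ)..1, φ (γ t)) - ∫ t in (0 : ℝ)..1, circleMean φ (γ t).2| ≤ τ := by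
  set I : ℝ → ℝ := fun a ↦ ∫ t in (0 : ℝ)..1, φ (γ t + (a, 0)) with hI
  have hperI : Function.Periodic I τ := by
    intro a
    have hper_γ : Function.Periodic (fun t ↦ φ (γ t + (a, 0))) 1 := fun t ↦ by
      simpa only [hγ_one, Prod.add_def, add_zero, add_right_comm]
        using hper (γ t).2 ((γ t).1 + a)
    simpa only [hI, hγ_step, add_assoc, Prod.mk_add_mk, add_zero, add_comm τ]
      using integral_comp_add_of_periodic_one hper_γ τ
  have hlipI : LipschitzWith 1 I := .mk_one fun a b ↦
    abs_integral_sub_integral_le (by fun_prop) (by fun_prop) fun t ↦ by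
      simpa [Prod.add_def, Real.dist_eq] using
        abs_sub_le_of_lipschitzWith_one (hfst (γ t).2) ((γ t).1 + a) ((γ t).1 + b)
  simpa [hI, integral_integral_translate hφ hper hγ, ← Prod.zero_eq_mk]
    using abs_sub_integral_le_of_periodic hτ hlipI hperI 0

lemma periodic_comp_sawtooth (F : ℝ → ℝ) : Function.Periodic (fun x ↦ F (sawtooth x)) 2 :=
  (toIcoMod_periodic two_pos (-1)).comp F

lemma eqOn_comp_sawtooth (F : ℝ → ℝ) : EqOn F (fun x ↦ F (sawtooth x)) (uIoo (-1) (-1 + 2)) := by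
  rw [uIoo_of_lt (by norm_num)]
  exact fun x hx ↦ congrArg F ((toIcoMod_eq_self two_pos).2 (Ioo_subset_Ico_self hx)).symm

lemma intervalIntegrable_comp_sawtooth {F : ℝ → ℝ} (hF : IntervalIntegrable F volume (-1) 1)
    (a b : ℝ) : IntervalIntegrable (fun x ↦ F (sawtooth x)) volume a b := by
  refine (periodic_comp_sawtooth F).intervalIntegrable two_ne_zero (t := -1) ?_ a b
  exact IntervalIntegrable.congr_uIoo (by norm_num [hF]) (eqOn_comp_sawtooth F)

lemma intervalIntegrable_comp_sawtooth_mul {F : ℝ → ℝ}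
    (hF : IntervalIntegrable F volume (-1) 1) {c : ℝ} (hc : c ≠ 0) (a b : ℝ) :
    IntervalIntegrable (fun x ↦ F (sawtooth (c * x))) volume a b := by
  simpa [hc] using (intervalIntegrable_comp_sawtooth hF (c * a) (c * b)).comp_mul_left (c := c)

lemma integral_comp_sawtooth {F : ℝ → ℝ} (hF : IntervalIntegrable F volume (-1) 1) {N : ℕ}
    (hN : N ≠ 0) :
    ∫ t in (0 : ℝ)..1, F (sawtooth (2 * N * t)) = 1 / 2 * ∫ s in (-1 : ℝ)..1, F s := by
  have hper := periodic_comp_sawtooth F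
  have hone_period : ∫ x in (0 : ℝ)..0 + 2, F (sawtooth x) = ∫ s in (-1 : ℝ)..1, F s := by
    rw [hper.intervalIntegral_add_eq 0 (-1),
      ← intervalIntegral.integral_congr_uIoo (eqOn_comp_sawtooth F)]
    norm_num
  have hall_periods := hper.intervalIntegral_add_zsmul_eq N 0 (intervalIntegrable_comp_sawtooth hF)
  rw [hone_period] at hall_periods
  rw [intervalIntegral.integral_comp_mul_left (fun x ↦ F (sawtooth x)) (by positivity)]
  have hend : (0 : ℝ) + (N : ℤ) • (2 : ℝ) = 2 * N * 1 := by simp [mul_comm]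
  rw [mul_zero, ← hend, hall_periods]
  simp only [mul_inv_rev, zsmul_eq_mul, Int.cast_natCast, smul_eq_mul, one_div]
  field_simp

lemma integral_indicator_compl_Icc {m : ℝ} (hm₀ : 0 ≤ m) (hm₁ : m < 1) (c : ℝ) :
    ∫ s in (-1 : ℝ)..1, (Icc (-m) m)ᶜ.indicator (fun _ ↦ c) s = 2 * (1 - m) * c := by
  have hsub : Icc (-m) m ⊆ Ioc (-1) 1 := fun s hs ↦ ⟨by linarith [hs.1], by linarith [hs.2]⟩
  rw [intervalIntegral.integral_of_le (by norm_num), setIntegral_indicator measurableSet_Icc.compl,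
    setIntegral_const, ← sdiff_eq, measureReal_sdiff hsub measurableSet_Icc (by simp),
    Real.volume_real_Ioc_of_le (by norm_num), Real.volume_real_Icc_of_le (by linarith), smul_eq_mul]
  ring

lemma abs_integral_comp_sub_le_of_eq_sawtooth {g k : ℝ → ℝ} (hg : LipschitzWith 1 g)
    (hk : Continuous k) (hk_le : ∀ t, |k t| ≤ 1) {N : ℕ} (hN : N ≠ 0) {m : ℝ} (hm₀ : 0 ≤ m)
    (hm₁ : m < 1) (hk_saw : ∀ t, |sawtooth (2 * N * t)| ≤ m → k t = sawtooth (2 * N * t)) :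
    |(∫ t in (0 : ℝ)..1, g (k t)) - 1 / 2 * ∫ s in (-1 : ℝ)..1, g s| ≤ 2 * (1 - m) := by
  have hc : (2 * N : ℝ) ≠ 0 := by positivity
  have hgk : Continuous fun t ↦ g (k t) := hg.continuous.comp hk
  have hgi : IntervalIntegrable g volume (-1) 1 := hg.continuous.intervalIntegrable _ _
  set B : ℝ → ℝ := (Icc (-m) m)ᶜ.indicator fun _ ↦ 2
  have hBi : IntervalIntegrable B volume (-1) 1 :=
    intervalIntegrable_const.imp (·.indicator measurableSet_Icc.compl)
      (·.indicator measurableSet_Icc.compl)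
  have hbound : ∀ t, ‖g (k t) - g (sawtooth (2 * N * t))‖ ≤ B (sawtooth (2 * N * t)) := by
    intro t
    by_cases ht : sawtooth (2 * N * t) ∈ Icc (-m) m
    · simp [B, ht, hk_saw t (abs_le.2 ht)]
    · simp only [B, mem_compl_iff, ht, not_false_eq_true, indicator_of_mem, Real.norm_eq_abs]
      calc |g (k t) - g (sawtooth (2 * N * t))|
          ≤ |k t - sawtooth (2 * N * t)| := abs_sub_le_of_lipschitzWith_one hg _ _
        _ ≤ |k t| + |sawtooth (2 * N * t)| := abs_sub _ _
        _ ≤ 2 := by linarith [hk_le t, abs_sawtooth_le_one (2 * N * t)]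
  rw [← integral_comp_sawtooth hgi hN, ← intervalIntegral.integral_sub
    (hgk.intervalIntegrable _ _) (intervalIntegrable_comp_sawtooth_mul hgi hc _ _)]
  refine (intervalIntegral.norm_integral_le_of_norm_le zero_le_one (ae_of_all _ fun t _ ↦ hbound t)
    (intervalIntegrable_comp_sawtooth_mul hBi hc _ _)).trans_eq ?_
  rw [integral_comp_sawtooth hBi hN, integral_indicator_compl_Icc hm₀ hm₁]
  ring

lemma lipschitzWith_fst_of_euclDist {φ : ℝ × ℝ → ℝ} (hφ : ∀ a b, |φ a - φ b| ≤ euclDist a b)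
    (s : ℝ) : LipschitzWith 1 fun x ↦ φ (x, s) :=
  .mk_one fun x y ↦ (hφ _ _).trans_eq (by simp [euclDist, Real.sqrt_sq_eq_abs, Real.dist_eq])

lemma lipschitzWith_snd_of_euclDist {φ : ℝ × ℝ → ℝ} (hφ : ∀ a b, |φ a - φ b| ≤ euclDist a b)
    (x : ℝ) : LipschitzWith 1 fun s ↦ φ (x, s) :=
  .mk_one fun s t ↦ (hφ _ _).trans_eq (by simp [euclDist, Real.sqrt_sq_eq_abs, Real.dist_eq])

lemma abs_integral_comp_sub_le {φ : ℝ × ℝ → ℝ} (hfst : ∀ s, LipschitzWith 1 fun x ↦ φ (x, s))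
    (hsnd : ∀ x, LipschitzWith 1 fun s ↦ φ (x, s))
    (hper : ∀ s, Function.Periodic (fun x ↦ φ (x, s)) 1) {N : ℕ} (hN : N ≠ 0) {m : ℝ}
    (hm₀ : 0 ≤ m) (hm₁ : m < 1) {γ : ℝ → ℝ × ℝ} (hγ : Continuous γ)
    (hγ_step : ∀ (j : ℤ) t, γ (t + j / N) = γ t + ((j / N : ℝ), (0 : ℝ)))
    (hγ_le : ∀ t, |(γ t).2| ≤ 1)
    (hγ_saw : ∀ t, |sawtooth (2 * N * t)| ≤ m → (γ t).2 = sawtooth (2 * N * t)) :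
    |(∫ t in (0 : ℝ)..1, φ (γ t)) - 1 / 2 * ∫ s in (-1 : ℝ)..1, circleMean φ s| ≤
      1 / N + 2 * (1 - m) := by
  have hφ : Continuous φ :=
    continuous_prod_of_continuous_lipschitzWith φ 1 (fun x ↦ (hsnd x).continuous) hfst
  have hγ_one : ∀ t, γ (t + 1) = γ t + (1, 0) := by simpa [hN] using hγ_step N
  have hγ_div : ∀ t, γ (t + 1 / N) = γ t + ((1 / N : ℝ), (0 : ℝ)) := by simpa using hγ_step 1
  exact (abs_sub_le _ _ _).trans (add_le_add
    (abs_integral_sub_integral_circleMean_le (by positivity) hφ hfst hper hγ hγ_div hγ_one)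
    (abs_integral_comp_sub_le_of_eq_sawtooth (lipschitzWith_circleMean hφ hsnd) hγ.snd hγ_le hN
      hm₀ hm₁ hγ_saw))

end Equidistribution

end CylinderEquidistribution

open CylinderEquidistribution

/-- **Lemma 3.1.** For every `q ≥ 1` and `ε > 0` there is a `C^∞` symplectomorphism `H` of the
cylinder (given by its lift `H : ℝ² → ℝ²`, periodic in the sense `H(x+1/q,y) = H(x,y)+(1/q,0)`),
preserving Lebesgue measure, equal to the identity near the boundary `|y| = 1`, commuting with
the rotation `R_{1/q}`, and sending the uniform measure on each horizontal circle at height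
`y ∈ [−1+ε, 1−ε]` to a measure `ε`-close to the normalized area measure in the Kantorovich
distance (tested on 1-periodic 1-Lipschitz functions). -/
theorem cylinder_equidistribution_lemma (q : ℕ) (hq : 1 ≤ q) (ε : ℝ) (hε : 0 < ε) :
    ∃ H : ℝ × ℝ ≃ ℝ × ℝ,
      ContDiff ℝ (⊤ : ℕ∞) ⇑H ∧ ContDiff ℝ (⊤ : ℕ∞) ⇑H.symm ∧
      MeasurePreserving H volume volume ∧
      (∀ x y : ℝ, H (x + 1 / q, y) = H (x, y) + ((1 / q : ℝ), (0 : ℝ))) ∧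
      (∃ δ > 0, ∀ x y : ℝ, 1 - δ ≤ |y| → H (x, y) = (x, y)) ∧
      ∀ y ∈ Set.Icc (-1 + ε) (1 - ε), ∀ φ : ℝ × ℝ → ℝ,
        (∀ a b : ℝ × ℝ, |φ a - φ b| ≤ euclDist a b) →
        (∀ x s : ℝ, φ (x + 1, s) = φ (x, s)) →
        |(∫ t in (0 : ℝ)..1, φ (H (t, y))) -
            (1 / 2) * ∫ s in (-1 : ℝ)..1, ∫ t in (0 : ℝ)..1, φ (t, s)| ≤ ε := by
  obtain ⟨n, hn⟩ := exists_nat_one_div_lt (half_pos hε)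
  have hN : (n + 1) * q ≠ 0 := by positivity
  have hN_le : 1 / (((n + 1) * q : ℕ) : ℝ) ≤ ε / 2 := (one_div_le_one_div_of_le (by positivity)
    (by exact_mod_cast Nat.le_mul_of_pos_right (n + 1) hq)).trans hn.le
  obtain ⟨m, hm₀, hm₁, hm⟩ : ∃ m, 0 ≤ m ∧ m < 1 ∧ 1 - ε / 4 ≤ m :=
    ⟨max 0 (1 - ε / 4), le_max_left _ _, max_lt one_pos (by linarith), le_max_right _ _⟩
  obtain ⟨H, hH, hstep, ⟨δ, hδ, hfix⟩, hsaw⟩ :=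
    exists_rescaled_quarterTurn_array (Nat.cast_ne_zero.2 hN) hm₀ hm₁
  refine ⟨H, hH.contDiff, hH.contDiff_symm, hH.measurePreserving volume, fun x y ↦ ?_,
    ⟨δ, hδ, fun x y ↦ hfix (x, y)⟩, fun y hy φ hφ hper ↦ ?_⟩
  · have hshift : ((n + 1 : ℤ) : ℝ) / ((n + 1) * q : ℕ) = 1 / q := by
      push_cast
      field_simp
    simpa only [hshift, Prod.mk_add_mk, add_zero] using hstep (n + 1) (x, y)
  · have hym : |y| ≤ m := abs_le.2 ⟨by linarith [hy.1], by linarith [hy.2]⟩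
    refine (abs_integral_comp_sub_le (lipschitzWith_fst_of_euclDist hφ)
      (lipschitzWith_snd_of_euclDist hφ) (fun s x ↦ hper x s) hN hm₀ hm₁
      (hH.contDiff.continuous.comp (by fun_prop : Continuous fun t ↦ (t, y)))
      (fun j t ↦ by simpa using hstep j (t, y))
      (fun t ↦ abs_snd_apply_le_one (fun P hP ↦ hfix P (by linarith)) (hym.trans hm₁.le))
      fun t ↦ hsaw (t, y) hym).trans ?_
    linarith
end

section
/- There exists ε₀ > 0 such that for every ε ∈ (0, ε₀), every integer q ≥ 1, and every η₁ > 0, there exist η ∈ (0, η₁) and a bijection G : ℝ² → ℝ² such that: (i) G and G⁻¹ are C^∞ and G preserves 2-dimensional Lebesgue measure; (ii) G(x + 1/q, y) = G(x, y) + (1/q, 0) for all (x,y); (iii) there exists δ > 0 with G(x, y) = (x, y) whenever |y| ≥ 1 − δ; (iv) ‖G(p) − p‖ ≤ ε and ‖G⁻¹(p) − p‖ ≤ ε for all p ∈ ℝ²; and (v) for every y ∈ [−1, 1], (1/2)·Leb{ y' ∈ [−1, 1] : for every 1-Lipschitz function φ : ℝ² → ℝ with φ(x+1, s) = φ(x,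 s) for all (x,s), ∫₀¹ φ(G(t, y)) dt − ∫₀¹ φ(G(t, y')) dt ≤ 3η } ≤ exp(−η^{−2+ε}). (Lemma 4.1: the emergence lemma on the cylinder.) -/
open MeasureTheory
open scoped ENNReal

/-!
Cut the plane into thin columns and `[-1, 1]` into blocks, and each block into `2 ^ N` thin bands
labelled by the words of length `N = n ^ 2`. The map `G` is the composition of two families of
area-preserving turns of small boxes, so it moves no point far.

First, the part of the `J`-th column in each band makes a quarter-turn whose direction is the `J`-th
letter of the label: the horizontal circle is sent piecewise to the left or right halves of the
columns according to the letters. Then half-turns of tall boxes, whose ends depend on the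
half-column, scatter the pieces: those coming from the same block are sent to points at least
`1 / (2 q L n)` apart if they lie in different half-columns. Two circles of the same block whose
labels differ in at least `N / 8` letters have therefore many pieces far away from the other circle,
and a bump function around these shows that their pushforwards are at Kantorovich distance at least
`1 / (20 q L n)`. As a Hamming ball of radius `N / 8` contains at most `(3 / 2) ^ N` of the `2 ^ N`
words, the heights close to a given one form a proportion of order `(3 / 4) ^ (n ^ 2)`, which is
less than `exp (-η ^ (-2 + ε))` for `η = 1 / (200 q L n)` when `n` is large.

A square is turned smoothly by transporting a twist of the unit disc, equal to a rotation away from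
the boundary, along an area-scaling chart from the disc to the square.
-/

open Function Set Filter Topology

/-! ### Volume-preserving diffeomorphisms -/

section Jacobian

variable {E : Type*} [NormedAddCommGroup E] [NormedSpace ℝ E]

/-- `f` is smooth at `x` and its Jacobian determinant there is `c`. -/
def HasSmoothJacobianAt (f : E → E) (c : ℝ) (x : E) : Prop :=
  ContDiffAt ℝ (⊤ : ℕ∞) f x ∧ (fderiv ℝ f x).det = c

namespace HasSmoothJacobianAt

variable {f g : E → E} {b c : ℝ} {x : E}

lemma differentiableAt (hf : HasSmoothJacobianAt f c x) : DifferentiableAt ℝ f x :=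
  hf.1.differentiableAt (by simp)

lemma id (x : E) : HasSmoothJacobianAt (fun y : E => y) 1 x :=
  ⟨contDiffAt_id, by simp [ContinuousLinearMap.det]⟩

lemma comp (hg : HasSmoothJacobianAt g b (f x)) (hf : HasSmoothJacobianAt f c x) :
    HasSmoothJacobianAt (g ∘ f) (b * c) x := by
  refine ⟨hg.1.comp x hf.1, ?_⟩
  rw [fderiv_comp x hg.differentiableAt hf.differentiableAt, ← hg.2, ← hf.2]
  exact LinearMap.det_comp _ _

lemma congr_of_eventuallyEq (hf : HasSmoothJacobianAt f c x) (h : g =ᶠ[𝓝 x] f) :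
    HasSmoothJacobianAt g c x :=
  ⟨hf.1.congr_of_eventuallyEq h, by rw [Filter.EventuallyEq.fderiv_eq h, hf.2]⟩

lemma exists_equiv_hasStrictFDerivAt [FiniteDimensional ℝ E] (hf : HasSmoothJacobianAt f c x)
    (hc : c ≠ 0) : ∃ f' : E ≃L[ℝ] E, HasStrictFDerivAt f (f' : E →L[ℝ] E) x := by
  refine ⟨(fderiv ℝ f x).toContinuousLinearEquivOfDetNeZero (hf.2 ▸ hc), ?_⟩
  rw [ContinuousLinearMap.coe_toContinuousLinearEquivOfDetNeZero]
  exact hf.1.hasStrictFDerivAt (by simp)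

lemma symm [FiniteDimensional ℝ E] {e : OpenPartialHomeomorph E E} {y : E} (hy : y ∈ e.target)
    (he : HasSmoothJacobianAt e c (e.symm y)) (hc : c ≠ 0) :
    HasSmoothJacobianAt e.symm c⁻¹ y := by
  obtain ⟨f', hf'⟩ := he.exists_equiv_hasStrictFDerivAt hc
  have hsmooth : ContDiffAt ℝ (⊤ : ℕ∞) e.symm y := e.contDiffAt_symm hy hf'.hasFDerivAt he.1
  have hinv : HasSmoothJacobianAt (e ∘ e.symm) (c * (fderiv ℝ e.symm y).det) y :=
    comp he ⟨hsmooth, rfl⟩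
  have hid : HasSmoothJacobianAt (e ∘ e.symm) 1 y :=
    (HasSmoothJacobianAt.id y).congr_of_eventuallyEq (e.eventually_right_inverse hy)
  exact ⟨hsmooth, eq_inv_of_mul_eq_one_right (hinv.2.symm.trans hid.2)⟩

end HasSmoothJacobianAt

lemma exists_openPartialHomeomorph_of_injOn [FiniteDimensional ℝ E] {f : E → E} {U : Set E}
    (hU : IsOpen U) (hinj : InjOn f U)
    (hf : ∀ x ∈ U, ∃ c ≠ 0, HasSmoothJacobianAt f c x) :
    ∃ e : OpenPartialHomeomorph E E, e.source = U ∧ e.target = f '' U ∧ ⇑e = f := by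
  have hopen : IsOpenMap (U.domRestrict f) := by
    refine IsOpenMap.of_nhds_le fun x => ?_
    obtain ⟨c, hc, hfx⟩ := hf x x.2
    obtain ⟨f', hf'⟩ := hfx.exists_equiv_hasStrictFDerivAt hc
    rw [domRestrict_eq, ← map_map, map_nhds_subtype_coe_eq_nhds x.2 (hU.mem_nhds x.2),
      hf'.map_nhds_eq_of_equiv]
    rfl
  have hcont : ContinuousOn f U := fun x hx =>
    let ⟨_, _, hfx⟩ := hf x hx
    hfx.1.continuousAt.continuousWithinAt
  exact ⟨OpenPartialHomeomorph.ofContinuousOpenRestrict (hinj.toPartialEquiv f U) hcont hopen hU,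
    rfl, rfl, rfl⟩

/-- A bijection which, like its inverse, is smooth with Jacobian determinant `1`. -/
structure IsVolumeDiffeo (F : Equiv.Perm E) : Prop where
  jacobian : ∀ x, HasSmoothJacobianAt F 1 x
  jacobian_symm : ∀ x, HasSmoothJacobianAt F.symm 1 x

namespace IsVolumeDiffeo

variable {F G : Equiv.Perm E}

lemma contDiff (hF : IsVolumeDiffeo F) : ContDiff ℝ (⊤ : ℕ∞) F :=
  contDiff_iff_contDiffAt.2 fun x => (hF.jacobian x).1

lemma symm (hF : IsVolumeDiffeo F) : IsVolumeDiffeo F.symm :=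
  ⟨hF.jacobian_symm, hF.jacobian⟩

lemma trans (hF : IsVolumeDiffeo F) (hG : IsVolumeDiffeo G) : IsVolumeDiffeo (F.trans G) :=
  ⟨fun x => by simpa using (hG.jacobian (F x)).comp (hF.jacobian x),
    fun x => by simpa using (hF.jacobian_symm (G.symm x)).comp (hG.jacobian_symm x)⟩

lemma permCongr (hF : IsVolumeDiffeo F) {A : Equiv.Perm E} {a b : ℝ} (hab : a * b = 1)
    (hA : ∀ x, HasSmoothJacobianAt A a x) (hA' : ∀ x, HasSmoothJacobianAt A.symm b x) :
    IsVolumeDiffeo (A.permCongr F) := by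
  have key : ∀ {T : Equiv.Perm E}, (∀ x, HasSmoothJacobianAt T 1 x) →
      ∀ x, HasSmoothJacobianAt (A.permCongr T) 1 x := fun {T} hT x => by
    change HasSmoothJacobianAt (A ∘ T ∘ A.symm) 1 x
    simpa only [one_mul, hab] using (hA _).comp ((hT (A.symm x)).comp (hA' x))
  exact ⟨key hF.jacobian, key hF.jacobian_symm⟩

variable [FiniteDimensional ℝ E] [MeasurableSpace E] [BorelSpace E]

lemma measurePreserving (hF : IsVolumeDiffeo F) (μ : Measure E) [μ.IsAddHaarMeasure] :
    MeasurePreserving F μ μ := by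
  have hmeas := hF.contDiff.continuous.measurable
  refine ⟨hmeas, Measure.ext fun s hs => ?_⟩
  have hchange := lintegral_abs_det_fderiv_eq_addHaar_image μ (hmeas hs)
    (fun x _ => (hF.jacobian x).differentiableAt.hasFDerivAt.hasFDerivWithinAt) F.injective.injOn
  simpa only [(hF.jacobian _).2, abs_one, ENNReal.ofReal_one, lintegral_const, one_mul,
    Measure.restrict_apply MeasurableSet.univ, univ_inter, image_preimage_eq _ F.surjective,
    ← Measure.map_apply hmeas hs] using hchange

end IsVolumeDiffeo

end Jacobian

section Gluing

lemma apply_mem_iff_of_fixed {X : Type*} {F : Equiv.Perm X} {K : Set X}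
    (h : ∀ x ∉ K, F x = x) (x : X) : F x ∈ K ↔ x ∈ K := by
  refine ⟨fun hx => ?_, fun hx => ?_⟩ <;> by_contra hx'
  · exact hx' (h x hx' ▸ hx)
  · exact hx' ((F.injective (h _ hx')).symm ▸ hx)

lemma symm_apply_of_fixed {X : Type*} {F : Equiv.Perm X} {K : Set X}
    (h : ∀ x ∉ K, F x = x) : ∀ x ∉ K, F.symm x = x :=
  fun x hx => F.symm_apply_eq.2 (h x hx).symm

variable {X ι : Type*} {F : ι → Equiv.Perm X} {K : ι → Set X}

lemma exists_perm_eqOn_of_pairwise_disjoint (hdisj : Pairwise (Disjoint on K))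
    (hF : ∀ i, ∀ x ∉ K i, F i x = x) :
    ∃ S : Equiv.Perm X, (∀ i, EqOn S (F i) (K i)) ∧ ∀ x ∉ ⋃ i, K i, S x = x := by
  classical
  have glue : ∀ f : ι → X → X, ∃ g : X → X,
      (∀ i, EqOn g (f i) (K i)) ∧ ∀ x ∉ ⋃ i, K i, g x = x := fun f => by
    refine ⟨fun x => if h : ∃ i, x ∈ K i then f h.choose x else x, fun i x hx => ?_,
      fun x hx => dif_neg (by simpa using hx)⟩
    have h : ∃ i, x ∈ K i := ⟨i, hx⟩
    have hi : h.choose = i := hdisj.eq (not_disjoint_iff.2 ⟨x, h.choose_spec, hx⟩)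
    simp only [dif_pos h, hi]
  have inverse : ∀ {P : ι → Equiv.Perm X} {g g' : X → X}, (∀ i, ∀ x ∉ K i, P i x = x) →
      (∀ i, EqOn g (P i) (K i)) → (∀ i, EqOn g' (P i).symm (K i)) →
      (∀ x ∉ ⋃ i, K i, g x = x) → (∀ x ∉ ⋃ i, K i, g' x = x) → Function.LeftInverse g' g := by
    intro P g g' hP hg hg' hfix hfix' x
    by_cases hx : x ∈ ⋃ i, K i
    · obtain ⟨i, hi⟩ := mem_iUnion.1 hx
      rw [hg i hi, hg' i ((apply_mem_iff_of_fixed (hP i) x).2 hi), Equiv.symm_apply_apply]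
    · rw [hfix x hx, hfix' x hx]
  obtain ⟨g, hg, hfix⟩ := glue fun i => F i
  obtain ⟨g', hg', hfix'⟩ := glue fun i => (F i).symm
  exact ⟨⟨g, g', inverse hF hg hg' hfix hfix',
    inverse (P := fun i => (F i).symm) (fun i => symm_apply_of_fixed (hF i)) hg' hg hfix' hfix⟩,
    hg, hfix⟩

variable {E : Type*} [NormedAddCommGroup E] [NormedSpace ℝ E]

lemma hasSmoothJacobianAt_of_eqOn_locallyFinite {K : ι → Set E} {S : E → E} {F : ι → E → E}
    (hK : ∀ i, IsClosed (K i)) (hlf : LocallyFinite K) (hdisj : Pairwise (Disjoint on K))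
    (hF : ∀ i x, HasSmoothJacobianAt (F i) 1 x) (hFfix : ∀ i, ∀ x ∉ K i, F i x = x)
    (hS : ∀ i, EqOn S (F i) (K i)) (hSfix : ∀ x ∉ ⋃ i, K i, S x = x) (x : E) :
    HasSmoothJacobianAt S 1 x := by
  by_cases hx : ∃ i, x ∈ K i
  · obtain ⟨i, hi⟩ := hx
    let others : {j // j ≠ i} → Set E := fun j => K j
    have hclosed : IsClosed (⋃ j, others j) :=
      (hlf.comp_injective Subtype.val_injective).isClosed_iUnion fun j => hK j
    have hxo : x ∉ ⋃ j, others j := fun h =>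
      let ⟨j, hj⟩ := mem_iUnion.1 h
      disjoint_left.1 (hdisj j.2) hj hi
    refine (hF i x).congr_of_eventuallyEq ?_
    filter_upwards [hclosed.isOpen_compl.mem_nhds hxo] with y hy
    by_cases hyi : y ∈ K i
    · exact hS i hyi
    · refine (hSfix y fun h => ?_).trans (hFfix i y hyi).symm
      obtain ⟨j, hj⟩ := mem_iUnion.1 h
      exact hy (mem_iUnion.2 ⟨⟨j, fun hji => hyi (hji ▸ hj)⟩, hj⟩)
  · refine (HasSmoothJacobianAt.id x).congr_of_eventuallyEq ?_
    filter_upwards [(hlf.isClosed_iUnion hK).isOpen_compl.mem_nhds (by simpa using hx)] with y hy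
    exact hSfix y hy

lemma exists_isVolumeDiffeo_eqOn {F : ι → Equiv.Perm E} {K : ι → Set E}
    (hF : ∀ i, IsVolumeDiffeo (F i)) (hK : ∀ i, IsClosed (K i)) (hlf : LocallyFinite K)
    (hdisj : Pairwise (Disjoint on K)) (hfix : ∀ i, ∀ x ∉ K i, F i x = x) :
    ∃ S : Equiv.Perm E, IsVolumeDiffeo S ∧ (∀ i, EqOn S (F i) (K i)) ∧
      ∀ x ∉ ⋃ i, K i, S x = x := by
  obtain ⟨S, hS, hSfix⟩ := exists_perm_eqOn_of_pairwise_disjoint hdisj hfix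
  have hS' : ∀ i, EqOn S.symm (F i).symm (K i) := fun i x hx => by
    have hx' := (apply_mem_iff_of_fixed (symm_apply_of_fixed (hfix i)) x).2 hx
    rw [Equiv.symm_apply_eq, hS i hx', Equiv.apply_symm_apply]
  exact ⟨S, ⟨hasSmoothJacobianAt_of_eqOn_locallyFinite hK hlf hdisj (fun i => (hF i).jacobian) hfix
    hS hSfix, hasSmoothJacobianAt_of_eqOn_locallyFinite hK hlf hdisj
    (fun i => (hF i).jacobian_symm) (fun i => symm_apply_of_fixed (hfix i)) hS'
    (symm_apply_of_fixed hSfix)⟩, hS, hSfix⟩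

end Gluing

section ChartConjugation

variable {E : Type*} [NormedAddCommGroup E] [NormedSpace ℝ E] [FiniteDimensional ℝ E]
  {e : OpenPartialHomeomorph E E} {c : ℝ} {K : Set E}

lemma HasSmoothJacobianAt.of_semiconj {S T : E → E} (hc : c ≠ 0)
    (he : ∀ z ∈ e.source, HasSmoothJacobianAt e c z) (hK : IsCompact K) (hKe : K ⊆ e.source)
    (hT : ∀ z, HasSmoothJacobianAt T 1 z) (hTe : MapsTo T e.source e.source)
    (hS : ∀ z ∈ e.source, S (e z) = e (T z)) (hSfix : ∀ p ∉ e '' K, S p = p) (p : E) :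
    HasSmoothJacobianAt S 1 p := by
  by_cases hp : p ∈ e.target
  · have hjac : HasSmoothJacobianAt (e ∘ T ∘ e.symm) 1 p := by
      have hp' := e.map_target hp
      simpa only [one_mul, mul_inv_cancel₀ hc] using
        (he _ (hTe hp')).comp (f := T ∘ e.symm) ((hT _).comp ((he _ hp').symm hp hc))
    refine hjac.congr_of_eventuallyEq ?_
    filter_upwards [e.open_target.mem_nhds hp] with y hy
    rw [Function.comp_apply, Function.comp_apply, ← hS _ (e.map_target hy), e.right_inv hy]
  · have hclosed : IsClosed (e '' K) :=
      (hK.image_of_continuousOn (e.continuousOn.mono hKe)).isClosed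
    have hpK : p ∉ e '' K := fun h => hp (e.image_source_eq_target ▸ image_mono hKe h)
    refine (HasSmoothJacobianAt.id p).congr_of_eventuallyEq ?_
    filter_upwards [hclosed.isOpen_compl.mem_nhds hpK] with y hy
    exact hSfix y hy

lemma exists_isVolumeDiffeo_semiconj {T : Equiv.Perm E} (hc : c ≠ 0)
    (he : ∀ z ∈ e.source, HasSmoothJacobianAt e c z) (hK : IsCompact K) (hKe : K ⊆ e.source)
    (hT : IsVolumeDiffeo T) (hfix : ∀ z ∉ K, T z = z) :
    ∃ S : Equiv.Perm E, IsVolumeDiffeo S ∧ (∀ z ∈ e.source, S (e z) = e (T z)) ∧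
      ∀ p ∉ e '' K, S p = p := by
  classical
  have hmem := apply_mem_iff_of_fixed fun z hz => hfix z fun h => hz (hKe h)
  have hmem' := apply_mem_iff_of_fixed (F := T.symm) (K := e.source)
    (symm_apply_of_fixed fun z hz => hfix z fun h => hz (hKe h))
  let S : Equiv.Perm E := (T.subtypePerm fun z => hmem z).extendDomain e.toPartialEquiv.toEquiv
  have hS : ∀ z ∈ e.source, S (e z) = e (T z) := fun z hz =>
    (T.subtypePerm fun z => hmem z).extendDomain_apply_image e.toPartialEquiv.toEquiv ⟨z, hz⟩
  have hSfix : ∀ p ∉ e '' K, S p = p := fun p hp => by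
    by_cases hpt : p ∈ e.target
    · have hz := e.map_target hpt
      rw [← e.right_inv hpt, hS _ hz, hfix _ fun h => hp ⟨_, h, e.right_inv hpt⟩]
    · exact Equiv.Perm.extendDomain_apply_not_subtype _ _ hpt
  have hS' : ∀ z ∈ e.source, S.symm (e z) = e (T.symm z) := fun z hz => by
    rw [Equiv.symm_apply_eq, hS _ ((hmem' z).2 hz), Equiv.apply_symm_apply]
  exact ⟨S, ⟨.of_semiconj hc he hK hKe hT.jacobian (fun z => (hmem z).2) hS hSfix,
    .of_semiconj hc he hK hKe hT.jacobian_symm (fun z => (hmem' z).2) hS'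
      (symm_apply_of_fixed hSfix)⟩, hS, hSfix⟩

end ChartConjugation

/-! ### Turning a square -/

section Twist

lemma det_continuousLinearMap_prod (A B : ℝ × ℝ →L[ℝ] ℝ) :
    (A.prod B).det = A (1, 0) * B (0, 1) - A (0, 1) * B (1, 0) := by
  have h : A.prod B = LinearMap.toContinuousLinearMap
      (Matrix.toLin (Module.Basis.finTwoProd ℝ) (Module.Basis.finTwoProd ℝ)
        !![A (1, 0), A (0, 1); B (1, 0), B (0, 1)]) := by
    ext <;> simp [Matrix.toLin_finTwoProd_apply]
  rw [h, LinearMap.det_toContinuousLinearMap, LinearMap.det_toLin, Matrix.det_fin_two_of]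

lemma HasSmoothJacobianAt.of_prodMk {f g : ℝ × ℝ → ℝ} {f' g' : ℝ × ℝ →L[ℝ] ℝ} {c : ℝ} {z : ℝ × ℝ}
    (hf : ContDiffAt ℝ (⊤ : ℕ∞) f z) (hg : ContDiffAt ℝ (⊤ : ℕ∞) g z) (hf' : HasFDerivAt f f' z)
    (hg' : HasFDerivAt g g' z) (hc : f' (1, 0) * g' (0, 1) - f' (0, 1) * g' (1, 0) = c) :
    HasSmoothJacobianAt (fun w => (f w, g w)) c z :=
  ⟨hf.prodMk hg, by rw [(hf'.prodMk hg').fderiv, det_continuousLinearMap_prod, hc]⟩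

/-- Rotation of the plane by the angle `α`. -/
noncomputable def rotate (α : ℝ) (z : ℝ × ℝ) : ℝ × ℝ :=
  (Real.cos α * z.1 - Real.sin α * z.2, Real.sin α * z.1 + Real.cos α * z.2)

lemma rotate_rotate (α β : ℝ) (z : ℝ × ℝ) : rotate α (rotate β z) = rotate (α + β) z := by
  ext <;> simp only [rotate, Real.cos_add, Real.sin_add] <;> ring

lemma rotate_zero (z : ℝ × ℝ) : rotate 0 z = z := by simp [rotate]

/-- The square of the Euclidean norm. -/
def sqNorm (z : ℝ × ℝ) : ℝ := z.1 ^ 2 + z.2 ^ 2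

lemma continuous_sqNorm : Continuous sqNorm := by unfold sqNorm; fun_prop

lemma sqNorm_rotate (α : ℝ) (z : ℝ × ℝ) : sqNorm (rotate α z) = sqNorm z := by
  simp only [sqNorm, rotate]
  linear_combination (z.1 ^ 2 + z.2 ^ 2) * Real.cos_sq_add_sin_sq α

/-- The twist map, rotating the circle `sqNorm = s` by the angle `g s`. -/
noncomputable def twist (g : ℝ → ℝ) : Equiv.Perm (ℝ × ℝ) where
  toFun z := rotate (g (sqNorm z)) z
  invFun z := rotate (-g (sqNorm z)) z
  left_inv z := by beta_reduce; rw [sqNorm_rotate, rotate_rotate, neg_add_cancel, rotate_zero]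
  right_inv z := by beta_reduce; rw [sqNorm_rotate, rotate_rotate, add_neg_cancel, rotate_zero]

lemma hasSmoothJacobianAt_twist {g : ℝ → ℝ} (hg : ContDiff ℝ (⊤ : ℕ∞) g) (z : ℝ × ℝ) :
    HasSmoothJacobianAt (twist g) 1 z := by
  have hN : ContDiff ℝ (⊤ : ℕ∞) sqNorm := by unfold sqNorm; fun_prop
  have hfst : HasFDerivAt Prod.fst (ContinuousLinearMap.fst ℝ ℝ ℝ) z := hasFDerivAt_fst
  have hsnd : HasFDerivAt Prod.snd (ContinuousLinearMap.snd ℝ ℝ ℝ) z := hasFDerivAt_snd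
  have hangle : HasFDerivAt (fun w => g (sqNorm w)) _ z :=
    (hg.differentiable (by simp) _).hasDerivAt.comp_hasFDerivAt z ((hfst.pow 2).add (hsnd.pow 2))
  refine .of_prodMk (by fun_prop) (by fun_prop) ((hangle.cos.mul hfst).sub (hangle.sin.mul hsnd))
    ((hangle.sin.mul hfst).add (hangle.cos.mul hsnd)) ?_
  simp only [Nat.add_one_sub_one, pow_one, nsmul_eq_mul, Nat.cast_ofNat, smul_add, neg_smul,
    smul_neg, sub_apply, add_apply, smul_apply, ContinuousLinearMap.coe_fst', smul_eq_mul, mul_one,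
    neg_apply, ContinuousLinearMap.coe_snd', mul_zero, neg_zero, add_zero, zero_add]
  linear_combination Real.cos_sq_add_sin_sq (g (sqNorm z))

lemma isVolumeDiffeo_twist {g : ℝ → ℝ} (hg : ContDiff ℝ (⊤ : ℕ∞) g) : IsVolumeDiffeo (twist g) :=
  ⟨hasSmoothJacobianAt_twist hg, hasSmoothJacobianAt_twist (g := fun s => -g s) hg.neg⟩

end Twist

section SquareChart

/-- The signed area of the part of the unit disc between the chords of abscissae `0` and `x`,
normalized so that `chordArea 1 = 1`. -/
noncomputable def chordArea (x : ℝ) : ℝ :=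
  2 / Real.pi * (Real.arcsin x + x * √(1 - x ^ 2))

lemma continuous_chordArea : Continuous chordArea := by
  unfold chordArea
  fun_prop

lemma chordArea_neg (x : ℝ) : chordArea (-x) = -chordArea x := by
  simp only [chordArea, Real.arcsin_neg, neg_sq]
  ring

lemma chordArea_one : chordArea 1 = 1 := by
  simp [chordArea, Real.pi_ne_zero]

lemma hasDerivAt_chordArea {x : ℝ} (hx : x ^ 2 < 1) :
    HasDerivAt chordArea (4 / Real.pi * √(1 - x ^ 2)) x := by
  have hpos : 0 < 1 - x ^ 2 := sub_pos.2 hx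
  have hsqrt := Real.sq_sqrt hpos.le
  have hne : √(1 - x ^ 2) ≠ 0 := (Real.sqrt_pos.2 hpos).ne'
  have harcsin := Real.hasDerivAt_arcsin (x := x) (fun h => by simp [h] at hx)
    (fun h => by simp [h] at hx)
  have hsq : HasDerivAt (fun y : ℝ => 1 - y ^ 2) (-(2 * x)) x := by
    simpa using (hasDerivAt_pow 2 x).const_sub 1
  refine ((harcsin.add ((hasDerivAt_id x).mul (hsq.sqrt hpos.ne'))).const_mul _).congr_deriv ?_
  simp only [id_eq, one_mul]
  field_simp
  linear_combination (-2) * hsqrt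

lemma strictMonoOn_chordArea : StrictMonoOn chordArea (Icc (-1) 1) := by
  refine strictMonoOn_of_deriv_pos (convex_Icc _ _) continuous_chordArea.continuousOn fun x hx => ?_
  rw [interior_Icc] at hx
  have hx2 : x ^ 2 < 1 := (sq_lt_one_iff_abs_lt_one x).2 (abs_lt.2 hx)
  rw [(hasDerivAt_chordArea hx2).deriv]
  exact mul_pos (by positivity) (Real.sqrt_pos.2 (sub_pos.2 hx2))

/-- An area-scaling map of the unit disc onto the square `(-1, 1)²`, sending vertical chords
affinely to vertical sides. -/
noncomputable def discToSquare (z : ℝ × ℝ) : ℝ × ℝ :=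
  (chordArea z.1, z.2 / √(1 - z.1 ^ 2))

lemma discToSquare_neg (z : ℝ × ℝ) : discToSquare (-z) = -discToSquare z := by
  simp [discToSquare, chordArea_neg, neg_div]

lemma hasSmoothJacobianAt_discToSquare {z : ℝ × ℝ} (hz : z.1 ^ 2 < 1) :
    HasSmoothJacobianAt discToSquare (4 / Real.pi) z := by
  have hpos : 0 < 1 - z.1 ^ 2 := sub_pos.2 hz
  have hne : √(1 - z.1 ^ 2) ≠ 0 := (Real.sqrt_pos.2 hpos).ne'
  have hsqrt : ContDiffAt ℝ (⊤ : ℕ∞) (fun x : ℝ => √(1 - x ^ 2)) z.1 :=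
    ContDiffAt.sqrt (by fun_prop) hpos.ne'
  have hinv := hsqrt.inv hne
  have hinv' := (hinv.differentiableAt (by simp)).hasDerivAt
  have harcsin : ContDiffAt ℝ (⊤ : ℕ∞) Real.arcsin z.1 :=
    Real.contDiffAt_arcsin (fun h => by simp [h] at hz) (fun h => by simp [h] at hz)
  have harea : ContDiffAt ℝ (⊤ : ℕ∞) chordArea z.1 :=
    contDiffAt_const.mul (harcsin.add (contDiffAt_id.mul hsqrt))
  refine .of_prodMk (harea.comp z contDiffAt_fst) (contDiffAt_snd.mul (hinv.comp z contDiffAt_fst))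
    ((hasDerivAt_chordArea hz).comp_hasFDerivAt z hasFDerivAt_fst)
    (hasFDerivAt_snd.mul (hinv'.comp_hasFDerivAt z hasFDerivAt_fst)) ?_
  simp only [smul_apply, ContinuousLinearMap.coe_fst', smul_eq_mul, mul_one, add_apply, mul_zero,
    ContinuousLinearMap.coe_snd', zero_add, add_zero, zero_mul, sub_zero]
  field_simp

lemma image_chordArea_Ioo : chordArea '' Ioo (-1) 1 = Ioo (-1) 1 := by
  rw [continuous_chordArea.continuousOn.image_Ioo_of_strictMonoOn (by norm_num)
    strictMonoOn_chordArea, chordArea_neg, chordArea_one]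

/-- The open Euclidean unit disc (balls of `ℝ × ℝ` are squares). -/
def openDisc : Set (ℝ × ℝ) := {z | sqNorm z < 1}

lemma fst_sq_lt_one {z : ℝ × ℝ} (hz : z ∈ openDisc) : z.1 ^ 2 < 1 :=
  (le_add_of_nonneg_right (sq_nonneg z.2)).trans_lt hz

lemma fst_mem_Ioo {z : ℝ × ℝ} (hz : z ∈ openDisc) : z.1 ∈ Ioo (-1 : ℝ) 1 :=
  abs_lt.1 ((sq_lt_one_iff_abs_lt_one _).1 (fst_sq_lt_one hz))

lemma injOn_discToSquare : InjOn discToSquare openDisc := by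
  rintro ⟨x, y⟩ hz ⟨x', y'⟩ hz' h
  obtain ⟨h₁, h₂⟩ := Prod.ext_iff.1 h
  obtain rfl : x = x' := strictMonoOn_chordArea.injOn (Ioo_subset_Icc_self (fst_mem_Ioo hz))
    (Ioo_subset_Icc_self (fst_mem_Ioo hz')) h₁
  have hne : √(1 - x ^ 2) ≠ 0 := (Real.sqrt_pos.2 (sub_pos.2 (fst_sq_lt_one hz))).ne'
  exact Prod.ext rfl ((div_left_inj' hne).1 h₂)

lemma mem_ball_zero_one_iff {p : ℝ × ℝ} : p ∈ Metric.ball 0 1 ↔ p.1 ∈ Ioo (-1) 1 ∧ |p.2| < 1 := by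
  rw [mem_ball_zero_iff, Prod.norm_def, max_lt_iff, Real.norm_eq_abs, Real.norm_eq_abs, abs_lt,
    mem_Ioo]

lemma abs_div_sqrt_lt_one_iff {x y : ℝ} (hx : x ^ 2 < 1) :
    |y / √(1 - x ^ 2)| < 1 ↔ (x, y) ∈ openDisc := by
  rw [abs_div, abs_of_nonneg (Real.sqrt_nonneg _), div_lt_one (Real.sqrt_pos.2 (sub_pos.2 hx)),
    Real.lt_sqrt (abs_nonneg y), sq_abs, lt_sub_iff_add_lt']
  rfl

lemma image_discToSquare : discToSquare '' openDisc = Metric.ball 0 1 := by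
  ext p
  constructor
  · rintro ⟨z, hz, rfl⟩
    exact mem_ball_zero_one_iff.2 ⟨image_chordArea_Ioo ▸ mem_image_of_mem _ (fst_mem_Ioo hz),
      (abs_div_sqrt_lt_one_iff (fst_sq_lt_one hz)).2 hz⟩
  · intro hp
    obtain ⟨hp₁, hp₂⟩ := mem_ball_zero_one_iff.1 hp
    rw [← image_chordArea_Ioo] at hp₁
    obtain ⟨x, hx, hxp⟩ := hp₁
    have hx2 : x ^ 2 < 1 := (sq_lt_one_iff_abs_lt_one x).2 (abs_lt.2 hx)
    have hy : p.2 * √(1 - x ^ 2) / √(1 - x ^ 2) = p.2 :=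
      mul_div_cancel_right₀ _ (Real.sqrt_pos.2 (sub_pos.2 hx2)).ne'
    exact ⟨(x, p.2 * √(1 - x ^ 2)), (abs_div_sqrt_lt_one_iff hx2).1 (hy.symm ▸ hp₂),
      Prod.ext hxp hy⟩

lemma isOpen_openDisc : IsOpen openDisc := isOpen_lt continuous_sqNorm continuous_const

lemma exists_openPartialHomeomorph_discToSquare :
    ∃ e : OpenPartialHomeomorph (ℝ × ℝ) (ℝ × ℝ),
      e.source = openDisc ∧ e.target = Metric.ball 0 1 ∧ ⇑e = discToSquare :=
  image_discToSquare ▸ exists_openPartialHomeomorph_of_injOn isOpen_openDisc injOn_discToSquare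
    fun _ hz => ⟨_, by positivity, hasSmoothJacobianAt_discToSquare (fst_sq_lt_one hz)⟩

/-- The rotation of the open unit disc by the angle `α`, transported to the square `(-1, 1)²`. -/
noncomputable def squareTurn (α : ℝ) (p : ℝ × ℝ) : ℝ × ℝ :=
  discToSquare (rotate α (invFunOn discToSquare openDisc p))

lemma squareTurn_discToSquare (α : ℝ) {z : ℝ × ℝ} (hz : z ∈ openDisc) :
    squareTurn α (discToSquare z) = discToSquare (rotate α z) := by
  rw [squareTurn, injOn_discToSquare.leftInvOn_invFunOn hz]

lemma squareTurn_pi {p : ℝ × ℝ} (hp : p ∈ Metric.ball 0 1) : squareTurn Real.pi p = -p := by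
  rw [← image_discToSquare] at hp
  obtain ⟨z, hz, rfl⟩ := hp
  have hrot : rotate Real.pi z = -z := by ext <;> simp [rotate]
  rw [squareTurn_discToSquare _ hz, hrot, discToSquare_neg]

lemma squareTurn_mem_ball (α : ℝ) {p : ℝ × ℝ} (hp : p ∈ Metric.ball 0 1) :
    squareTurn α p ∈ Metric.ball 0 1 := by
  rw [← image_discToSquare] at hp ⊢
  obtain ⟨z, hz, rfl⟩ := hp
  exact ⟨rotate α z, (sqNorm_rotate α z).trans_lt hz, (squareTurn_discToSquare _ hz).symm⟩

lemma sign_chordArea {x : ℝ} (hx : x ∈ Ioo (-1 : ℝ) 1) :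
    SignType.sign (chordArea x) = SignType.sign x := by
  have h0 : chordArea 0 = 0 := by simp [chordArea]
  have hlt := fun {y z : ℝ} => strictMonoOn_chordArea.lt_iff_lt (a := y) (b := z)
  rcases lt_trichotomy x 0 with h | rfl | h
  · rw [sign_neg h, sign_neg (h0 ▸ (hlt (Ioo_subset_Icc_self hx) (by norm_num)).2 h)]
  · rw [h0]
  · rw [sign_pos h, sign_pos (h0 ▸ (hlt (by norm_num) (Ioo_subset_Icc_self hx)).2 h)]

lemma sign_fst_squareTurn_neg_pi_div_two {p : ℝ × ℝ} (hp : p ∈ Metric.ball 0 1) :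
    SignType.sign (squareTurn (-(Real.pi / 2)) p).1 = SignType.sign p.2 := by
  rw [← image_discToSquare] at hp
  obtain ⟨z, hz, rfl⟩ := hp
  have hsqrt : 0 < √(1 - z.1 ^ 2) := Real.sqrt_pos.2 (sub_pos.2 (fst_sq_lt_one hz))
  have hrot : rotate (-(Real.pi / 2)) z ∈ openDisc := (sqNorm_rotate _ z).trans_lt hz
  rw [squareTurn_discToSquare _ hz, discToSquare, sign_chordArea (fst_mem_Ioo hrot), discToSquare,
    div_eq_mul_inv z.2, sign_mul, sign_pos (inv_pos.2 hsqrt), mul_one]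
  simp [rotate]

lemma squareTurn_pi_div_two {p : ℝ × ℝ} (hp : p ∈ Metric.ball 0 1) :
    squareTurn (Real.pi / 2) p = -squareTurn (-(Real.pi / 2)) p := by
  rw [← image_discToSquare] at hp
  obtain ⟨z, hz, rfl⟩ := hp
  have hrot : rotate (Real.pi / 2) z = -rotate (-(Real.pi / 2)) z := by ext <;> simp [rotate]
  rw [squareTurn_discToSquare _ hz, squareTurn_discToSquare _ hz, hrot, discToSquare_neg]

lemma exists_lt_forall_le_of_isCompact {X : Type*} [TopologicalSpace X] {K : Set X}
    (hK : IsCompact K) {f : X → ℝ} (hf : Continuous f) {b : ℝ} (hlt : ∀ x ∈ K, f x < b) :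
    ∃ a < b, ∀ x ∈ K, f x ≤ a := by
  rcases K.eq_empty_or_nonempty with rfl | hne
  · exact ⟨b - 1, sub_one_lt b, by simp⟩
  · obtain ⟨x, hx, hmax⟩ := hK.exists_isMaxOn hne hf.continuousOn
    exact ⟨f x, hlt x hx, hmax⟩

lemma exists_contDiff_cutoff {a b : ℝ} (hab : a < b) (α : ℝ) :
    ∃ g : ℝ → ℝ, ContDiff ℝ (⊤ : ℕ∞) g ∧ (∀ s ≤ a, g s = α) ∧ ∀ s, b ≤ s → g s = 0 := by
  refine ⟨fun s => α * Real.smoothTransition ((b - s) / (b - a)),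
    ?_, fun s hs => ?_, fun s hs => ?_⟩ <;> beta_reduce
  · exact contDiff_const.mul (Real.smoothTransition.contDiff.comp (by fun_prop))
  · rw [Real.smoothTransition.one_of_one_le
      ((one_le_div (sub_pos.2 hab)).2 (sub_le_sub_left hs b)), mul_one]
  · rw [Real.smoothTransition.zero_of_nonpos
      (div_nonpos_of_nonpos_of_nonneg (sub_nonpos.2 hs) (sub_nonneg.2 hab.le)), mul_zero]

lemma isCompact_setOf_sqNorm_le (b : ℝ) : IsCompact {z | sqNorm z ≤ b} := by
  refine (isCompact_closedBall (0 : ℝ × ℝ) √b).of_isClosed_subset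
    (isClosed_le continuous_sqNorm continuous_const) fun z hz => ?_
  rw [mem_closedBall_zero_iff, Prod.norm_def, max_le_iff]
  exact ⟨Real.abs_le_sqrt ((le_add_of_nonneg_right (sq_nonneg z.2)).trans hz),
    Real.abs_le_sqrt ((le_add_of_nonneg_left (sq_nonneg z.1)).trans hz)⟩

lemma exists_isVolumeDiffeo_eqOn_squareTurn {K : Set (ℝ × ℝ)} (hK : IsCompact K)
    (hKb : K ⊆ Metric.ball 0 1) :
    ∃ r < 1, K ⊆ Metric.closedBall 0 r ∧ ∀ α : ℝ, ∃ T : Equiv.Perm (ℝ × ℝ), IsVolumeDiffeo T ∧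
      (∀ p ∉ Metric.closedBall 0 r, T p = p) ∧ EqOn T (squareTurn α) K := by
  obtain ⟨e, hsource, htarget, he⟩ := exists_openPartialHomeomorph_discToSquare
  have hK' : IsCompact (e.symm '' K) :=
    hK.image_of_continuousOn (e.continuousOn_symm.mono (htarget ▸ hKb))
  have hK'disc : ∀ z ∈ e.symm '' K, sqNorm z < 1 := by
    rintro _ ⟨p, hp, rfl⟩
    exact hsource.subset (e.map_target (htarget ▸ hKb hp))
  obtain ⟨a, ha, hKa⟩ := exists_lt_forall_le_of_isCompact hK' continuous_sqNorm hK'disc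
  obtain ⟨b, hab, hb⟩ := exists_between ha
  have hcompact := isCompact_setOf_sqNorm_le b
  have hsub : {z | sqNorm z ≤ b} ⊆ e.source := fun z hz => hsource ▸ lt_of_le_of_lt hz hb
  have hball : e '' {z | sqNorm z ≤ b} ⊆ Metric.ball 0 1 :=
    htarget ▸ e.image_source_eq_target ▸ image_mono hsub
  obtain ⟨r, hr, hballr⟩ := exists_lt_subset_ball
    ((hcompact.image_of_continuousOn (e.continuousOn.mono hsub)).union hK).isClosed
    (union_subset hball hKb)
  obtain ⟨himage, hKr⟩ := union_subset_iff.1 (hballr.trans Metric.ball_subset_closedBall)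
  refine ⟨r, hr, hKr, fun α => ?_⟩
  obtain ⟨g, hg, hga, hgb⟩ := exists_contDiff_cutoff hab α
  have htwist : ∀ z ∉ {z | sqNorm z ≤ b}, twist g z = z := fun z hz => by
    change rotate (g (sqNorm z)) z = z
    rw [hgb _ (not_le.1 hz).le, rotate_zero]
  obtain ⟨T, hT, hTe, hTfix⟩ := exists_isVolumeDiffeo_semiconj (e := e) (c := 4 / Real.pi)
    (by positivity)
    (fun z hz => he ▸ hasSmoothJacobianAt_discToSquare (fst_sq_lt_one (hsource ▸ hz)))
    hcompact hsub (isVolumeDiffeo_twist hg) htwist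
  refine ⟨T, hT, fun p hp => hTfix p fun h => hp (himage h), fun p hp => ?_⟩
  have hpt : p ∈ e.target := htarget ▸ hKb hp
  obtain ⟨z, hz, rfl⟩ : ∃ z ∈ e.symm '' K, e z = p := ⟨_, mem_image_of_mem _ hp, e.right_inv hpt⟩
  have hzs : z ∈ e.source := hsource ▸ hK'disc z hz
  rw [hTe z hzs, he, squareTurn_discToSquare α (hK'disc z hz), ← hga _ (hKa z hz)]
  rfl

end SquareChart

/-! ### Turning boxes in the cylinder -/

section CylinderDiffeo

/-- The affine bijection of the plane sending the square `(-1, 1)²` onto the open box with centre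
`c` and half-sides `r`. -/
noncomputable def boxEquiv (c r : ℝ × ℝ) (h₁ : r.1 ≠ 0) (h₂ : r.2 ≠ 0) : Equiv.Perm (ℝ × ℝ) where
  toFun p := (c.1 + r.1 * p.1, c.2 + r.2 * p.2)
  invFun p := ((p.1 - c.1) / r.1, (p.2 - c.2) / r.2)
  left_inv p := by ext <;> simp [h₁, h₂]
  right_inv p := by ext <;> simp [mul_div_cancel₀, h₁, h₂]

lemma IsVolumeDiffeo.permCongr_boxEquiv {T : Equiv.Perm (ℝ × ℝ)} (hT : IsVolumeDiffeo T)
    {c r : ℝ × ℝ} (h₁ : r.1 ≠ 0) (h₂ : r.2 ≠ 0) :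
    IsVolumeDiffeo ((boxEquiv c r h₁ h₂).permCongr T) := by
  refine hT.permCongr (a := r.1 * r.2) (b := r.1⁻¹ * r.2⁻¹) (by field_simp) (fun p => ?_)
    fun p => ?_
  · refine .of_prodMk (by fun_prop) (by fun_prop) ((hasFDerivAt_fst.const_mul r.1).const_add c.1)
      ((hasFDerivAt_snd.const_mul r.2).const_add c.2) ?_
    simp
  · refine .of_prodMk (by fun_prop) (by fun_prop) ((hasFDerivAt_fst.sub_const c.1).mul_const r.1⁻¹)
      ((hasFDerivAt_snd.sub_const c.2).mul_const r.2⁻¹) ?_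
    simp

/-- Volume-preserving diffeomorphisms of the cylinder `(ℝ/ℤ) × [-1, 1]`, given by lifts to the
plane, which commute with the rotation by `1/q` and are the identity near the boundary. -/
structure IsCylinderDiffeo (q : ℕ) (G : Equiv.Perm (ℝ × ℝ)) : Prop where
  isVolumeDiffeo : IsVolumeDiffeo G
  map_add : ∀ p, G (p + ((1 / q : ℝ), (0 : ℝ))) = G p + ((1 / q : ℝ), (0 : ℝ))
  eq_self : ∃ δ > 0, ∀ p : ℝ × ℝ, 1 - δ ≤ |p.2| → G p = p

lemma IsCylinderDiffeo.trans {q : ℕ} {F G : Equiv.Perm (ℝ × ℝ)} (hF : IsCylinderDiffeo q F)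
    (hG : IsCylinderDiffeo q G) : IsCylinderDiffeo q (F.trans G) := by
  obtain ⟨δ, hδ, hFδ⟩ := hF.eq_self
  obtain ⟨δ', hδ', hGδ'⟩ := hG.eq_self
  refine ⟨hF.isVolumeDiffeo.trans hG.isVolumeDiffeo, fun p => ?_, min δ δ', lt_min hδ hδ',
    fun p hp => ?_⟩
  · rw [Equiv.trans_apply, hF.map_add, hG.map_add, Equiv.trans_apply]
  · rw [Equiv.trans_apply, hFδ p (by linarith [min_le_left δ δ']),
      hGδ' p (by linarith [min_le_right δ δ'])]

end CylinderDiffeo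

lemma abs_sub_lt_of_mem_Ioo {a b x y : ℝ} (hx : x ∈ Ioo a b) (hy : y ∈ Ioo a b) :
    |y - x| < b - a :=
  abs_lt.2 ⟨by linarith [hx.2, hy.1], by linarith [hx.1, hy.2]⟩

/-- The data of a `1/q`-periodic family of disjoint boxes in the cylinder, each to be turned by an
angle: the `k`-th vertical column of the given `width` contains the boxes of heights
`lo k b < y < hi k b`, for `b : κ`, the box `b` being turned by `angle k b`. -/
structure TurnGrid (q : ℕ) (κ : Type*) where
  cols : ℕ
  width : ℝ
  width_pos : 0 < width
  cols_mul_width : cols * width = 1 / q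
  lo : ℤ → κ → ℝ
  hi : ℤ → κ → ℝ
  angle : ℤ → κ → ℝ
  lo_periodic : Periodic lo cols
  hi_periodic : Periodic hi cols
  angle_periodic : Periodic angle cols
  minHeight : ℝ
  minHeight_pos : 0 < minHeight
  minHeight_le : ∀ k b, minHeight ≤ hi k b - lo k b
  neg_one_le_lo : ∀ k b, -1 ≤ lo k b
  hi_le_one : ∀ k b, hi k b ≤ 1
  disjoint : ∀ k, Pairwise (Disjoint on fun b => Ioo (lo k b) (hi k b))

namespace TurnGrid

variable {q : ℕ} {κ : Type*} (g : TurnGrid q κ)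

/-- The affine map from the square `(-1, 1)²` to the box `b` of the column `k`. -/
noncomputable def place (k : ℤ) (b : κ) : Equiv.Perm (ℝ × ℝ) :=
  boxEquiv (g.width * (k + 1 / 2), (g.lo k b + g.hi k b) / 2)
    (g.width / 2, (g.hi k b - g.lo k b) / 2) (by linarith [g.width_pos])
    (by linarith [g.minHeight_pos, g.minHeight_le k b])

lemma place_apply (k : ℤ) (b : κ) (p : ℝ × ℝ) : g.place k b p =
    (g.width * (k + 1 / 2) + g.width / 2 * p.1,
      (g.lo k b + g.hi k b) / 2 + (g.hi k b - g.lo k b) / 2 * p.2) := rfl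

/-- The part of the box `b` of the column `k` within the proportion `r` of its centre. -/
def core (r : ℝ) (i : ℤ × κ) : Set (ℝ × ℝ) := g.place i.1 i.2 '' Metric.closedBall 0 r

variable {g} {r : ℝ} {k : ℤ} {b : κ} {p : ℝ × ℝ}

lemma place_add_cols (k : ℤ) (b : κ) (p : ℝ × ℝ) :
    g.place (k + g.cols) b p = g.place k b p + ((1 / q : ℝ), (0 : ℝ)) := by
  have hlo : g.lo (k + g.cols) b = g.lo k b := congrFun (g.lo_periodic k) b
  have hhi : g.hi (k + g.cols) b = g.hi k b := congrFun (g.hi_periodic k) b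
  rw [place_apply, place_apply, hlo, hhi, ← g.cols_mul_width]
  ext
  · simp only [Prod.fst_add, Int.cast_add, Int.cast_natCast]
    ring
  · simp

lemma fst_mem_Ioo_of_mem_core (hr : r < 1) (hp : p ∈ g.core r (k, b)) :
    p.1 ∈ Ioo (g.width * k) (g.width * (k + 1)) := by
  obtain ⟨z, hz, rfl⟩ := hp
  have hz₁ := abs_lt.1 ((norm_fst_le z).trans_lt ((mem_closedBall_zero_iff.1 hz).trans_lt hr))
  rw [place_apply]
  constructor <;> nlinarith [g.width_pos]

lemma snd_mem_Icc_of_mem_core (hr : r < 1) (hp : p ∈ g.core r (k, b)) :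
    p.2 ∈ Icc (g.lo k b + (1 - r) / 2 * g.minHeight) (g.hi k b - (1 - r) / 2 * g.minHeight) := by
  obtain ⟨z, hz, rfl⟩ := hp
  have hz₂ := abs_le.1 ((norm_snd_le z).trans (mem_closedBall_zero_iff.1 hz))
  have hh := g.minHeight_le k b
  rw [place_apply]
  constructor <;> nlinarith [g.minHeight_pos]

lemma snd_mem_Ioo_of_mem_core (hr : r < 1) (hp : p ∈ g.core r (k, b)) :
    p.2 ∈ Ioo (g.lo k b) (g.hi k b) := by
  obtain ⟨hlo, hhi⟩ := snd_mem_Icc_of_mem_core hr hp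
  have hpos : 0 < (1 - r) / 2 * g.minHeight := mul_pos (by linarith) g.minHeight_pos
  exact ⟨by linarith, by linarith⟩

lemma isClosed_core (i : ℤ × κ) : IsClosed (g.core r i) := by
  have hcont : Continuous (g.place i.1 i.2) := by
    simp only [funext (g.place_apply i.1 i.2)]
    fun_prop
  exact ((isCompact_closedBall 0 r).image hcont).isClosed

lemma pairwise_disjoint_core (hr : r < 1) : Pairwise (Disjoint on g.core r) := by
  refine fun i j hij => disjoint_left.2 fun p hi hj => hij ?_
  have hi₁ := fst_mem_Ioo_of_mem_core hr hi
  have hj₁ := fst_mem_Ioo_of_mem_core hr hj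
  have hlt : ∀ {k l : ℤ}, g.width * k < p.1 → p.1 < g.width * (l + 1) → k ≤ l := fun hk hl => by
    have := lt_of_mul_lt_mul_left (hk.trans hl) g.width_pos.le
    exact Int.lt_add_one_iff.1 (by exact_mod_cast this)
  have hcol : i.1 = j.1 := le_antisymm (hlt hi₁.1 hj₁.2) (hlt hj₁.1 hi₁.2)
  refine Prod.ext hcol ((g.disjoint i.1).eq (not_disjoint_iff.2
    ⟨p.2, snd_mem_Ioo_of_mem_core hr hi, ?_⟩))
  exact hcol ▸ snd_mem_Ioo_of_mem_core hr hj

lemma locallyFinite_core [Finite κ] (hr : r < 1) : LocallyFinite (g.core r) := by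
  intro p
  let U : Set (ℝ × ℝ) := Prod.fst ⁻¹' Ioo (p.1 - g.width) (p.1 + g.width)
  have hU : U ∈ 𝓝 p := continuous_fst.continuousAt.preimage_mem_nhds
    (Ioo_mem_nhds (by linarith [g.width_pos]) (by linarith [g.width_pos]))
  refine ⟨U, hU, ((finite_Icc ⌊p.1 / g.width - 2⌋ ⌈p.1 / g.width + 1⌉).prod finite_univ).subset ?_⟩
  rintro ⟨k, b⟩ ⟨z, hz, hzU⟩
  have hz₁ := fst_mem_Ioo_of_mem_core hr hz
  have hlo : p.1 / g.width - 2 ≤ k := by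
    rw [sub_le_iff_le_add, div_le_iff₀ g.width_pos]
    linarith [hzU.1, hz₁.2]
  have hhi : k ≤ p.1 / g.width + 1 := by
    rw [← sub_le_iff_le_add, le_div_iff₀ g.width_pos]
    linarith [hzU.2, hz₁.1]
  exact ⟨⟨Int.floor_le_iff.2 (by linarith), Int.le_ceil_iff.2 (by linarith)⟩, mem_univ b⟩

lemma isCylinderDiffeo_of_eqOn_core {S : Equiv.Perm (ℝ × ℝ)} {T : ℝ → Equiv.Perm (ℝ × ℝ)}
    (hr : r < 1) (hS : IsVolumeDiffeo S)
    (hST : ∀ i : ℤ × κ, EqOn S ((g.place i.1 i.2).permCongr (T (g.angle i.1 i.2))) (g.core r i))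
    (hfix : ∀ p ∉ ⋃ i, g.core r i, S p = p) : IsCylinderDiffeo q S := by
  have hSplace : ∀ k b, ∀ z ∈ Metric.closedBall 0 r,
      S (g.place k b z) = g.place k b (T (g.angle k b) z) := fun k b z hz => by
    simpa using hST (k, b) (mem_image_of_mem _ hz)
  refine ⟨hS, fun p => ?_, (1 - r) / 4 * g.minHeight, mul_pos (by linarith) g.minHeight_pos,
    fun p hp => hfix p fun h => ?_⟩
  · by_cases hp : p ∈ ⋃ i, g.core r i
    · obtain ⟨⟨k, b⟩, z, hz, rfl⟩ := mem_iUnion.1 hp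
      have hangle : g.angle (k + g.cols) b = g.angle k b := congrFun (g.angle_periodic k) b
      rw [hSplace k b z hz, ← place_add_cols, ← place_add_cols, hSplace _ b z hz, hangle]
    · rw [hfix p hp]
      refine hfix _ fun h => hp ?_
      obtain ⟨⟨k, b⟩, z, hz, hzp⟩ := mem_iUnion.1 h
      refine mem_iUnion.2 ⟨(k - g.cols, b), z, hz, add_right_cancel (Eq.trans ?_ hzp)⟩
      rw [← place_add_cols, sub_add_cancel]
  · obtain ⟨⟨k, b⟩, hkb⟩ := mem_iUnion.1 h
    obtain ⟨hlo, hhi⟩ := snd_mem_Icc_of_mem_core hr hkb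
    have hpos : 0 < (1 - r) / 2 * g.minHeight := mul_pos (by linarith) g.minHeight_pos
    have habs : |p.2| ≤ 1 - (1 - r) / 2 * g.minHeight := abs_le.2
      ⟨by linarith [g.neg_one_le_lo k b], by linarith [g.hi_le_one k b]⟩
    linarith

lemma exists_isCylinderDiffeo [Finite κ] (g : TurnGrid q κ) {K : Set (ℝ × ℝ)} (hK : IsCompact K)
    (hKb : K ⊆ Metric.ball 0 1) :
    ∃ F : Equiv.Perm (ℝ × ℝ), IsCylinderDiffeo q F ∧
      (∀ p, |(F p).1 - p.1| ≤ g.width) ∧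
      (∀ D, 0 ≤ D → (∀ k b, g.hi k b - g.lo k b ≤ D) → ∀ p, |(F p).2 - p.2| ≤ D) ∧
      ∀ k b, ∀ p ∈ K, F (g.place k b p) = g.place k b (squareTurn (g.angle k b) p) := by
  obtain ⟨r, hr, hKr, hturn⟩ := exists_isVolumeDiffeo_eqOn_squareTurn hK hKb
  choose T hT hTfix hTK using hturn
  have hfix : ∀ i : ℤ × κ, ∀ p ∉ g.core r i,
      (g.place i.1 i.2).permCongr (T (g.angle i.1 i.2)) p = p := fun i p hp => by
    rw [Equiv.permCongr_apply, hTfix _ _ fun h => hp ⟨_, h, Equiv.apply_symm_apply _ _⟩,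
      Equiv.apply_symm_apply]
  obtain ⟨F, hF, hFT, hFfix⟩ := exists_isVolumeDiffeo_eqOn
    (F := fun i : ℤ × κ => (g.place i.1 i.2).permCongr (T (g.angle i.1 i.2)))
    (fun i => (hT _).permCongr_boxEquiv _ _) isClosed_core
    (locallyFinite_core hr) (pairwise_disjoint_core hr) hfix
  have hcore : ∀ p, F p = p ∨ ∃ k b, p ∈ g.core r (k, b) ∧ F p ∈ g.core r (k, b) := fun p => by
    by_cases hp : p ∈ ⋃ i, g.core r i
    · obtain ⟨i, hi⟩ := mem_iUnion.1 hp
      exact .inr ⟨i.1, i.2, hi, hFT i hi ▸ (apply_mem_iff_of_fixed (hfix i) p).2 hi⟩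
    · exact .inl (hFfix p hp)
  refine ⟨F, isCylinderDiffeo_of_eqOn_core hr hF hFT hFfix, fun p => ?_, fun D hD hgD p => ?_,
    fun k b p hp => ?_⟩
  · obtain h | ⟨k, b, hp, hFp⟩ := hcore p
    · simpa [h] using g.width_pos.le
    · have h := (abs_sub_lt_of_mem_Ioo (fst_mem_Ioo_of_mem_core hr hp)
        (fst_mem_Ioo_of_mem_core hr hFp)).le
      linarith
  · obtain h | ⟨k, b, hp, hFp⟩ := hcore p
    · simpa [h] using hD
    · exact (abs_sub_lt_of_mem_Ioo (snd_mem_Ioo_of_mem_core hr hp)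
        (snd_mem_Ioo_of_mem_core hr hFp)).le.trans (hgD k b)
  · rw [hFT (k, b) (mem_image_of_mem _ (hKr hp)), Equiv.permCongr_apply, Equiv.symm_apply_apply,
      hTK _ hp]

end TurnGrid

/-! ### Scattering by half-turns -/

section Tiles

/-- The concentric copy, scaled by `r`, of the cell `(j, b)` of the grid of cells of width `w` and
height `h` on the strip `-1 ≤ y`; the cell `(0, 0)` has its lower left corner at `(0, -1)`. -/
def tile (w h r : ℝ) (j b : ℤ) : Set (ℝ × ℝ) :=
  {p | |p.1 - w * (j + 1 / 2)| ≤ r * (w / 2) ∧ |p.2 + 1 - h * (b + 1 / 2)| ≤ r * (h / 2)}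

lemma tile_subset_tile {w h r s : ℝ} (hw : 0 ≤ w) (hh : 0 ≤ h) (hrs : r ≤ s) (j b : ℤ) :
    tile w h r j b ⊆ tile w h s j b := fun _ hp =>
  ⟨hp.1.trans (by gcongr), hp.2.trans (by gcongr)⟩

lemma mul_sub_one_le_abs_sub {w x x' : ℝ} (hw : 0 ≤ w) {j j' : ℤ}
    (hx : |x - w * (j + 1 / 2)| ≤ w / 2) (hx' : |x' - w * (j' + 1 / 2)| ≤ w / 2) :
    w * (|j - j'| - 1 : ℤ) ≤ |x - x'| := by
  have htri : |w * (j + 1 / 2) - w * (j' + 1 / 2)| ≤ w / 2 + |x - x'| + w / 2 := calc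
    _ = |-(x - w * (j + 1 / 2)) + (x - x') + (x' - w * (j' + 1 / 2))| := by ring_nf
    _ ≤ |-(x - w * (j + 1 / 2))| + |x - x'| + |x' - w * (j' + 1 / 2)| := abs_add_three _ _ _
    _ ≤ w / 2 + |x - x'| + w / 2 := by rw [abs_neg]; gcongr
  have hcentres : |w * (j + 1 / 2) - w * (j' + 1 / 2)| = w * |(j : ℝ) - j'| := by
    rw [← mul_sub, add_sub_add_right_eq_sub, abs_mul, abs_of_nonneg hw]
  push_cast
  linarith

lemma le_euclDist {a b : ℝ × ℝ} {κ : ℝ} (h : κ ≤ |a.1 - b.1| ∨ κ ≤ |a.2 - b.2|) :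
    κ ≤ euclDist a b := by
  rcases h with h | h <;> refine h.trans (Real.abs_le_sqrt ?_)
  · exact le_add_of_nonneg_right (sq_nonneg _)
  · exact le_add_of_nonneg_left (sq_nonneg _)

lemma euclDist_le_abs_add_abs (a b : ℝ × ℝ) : euclDist a b ≤ |a.1 - b.1| + |a.2 - b.2| := by
  refine Real.sqrt_le_iff.2 ⟨by positivity, ?_⟩
  rw [add_sq, sq_abs, sq_abs]
  linarith [mul_nonneg (abs_nonneg (a.1 - b.1)) (abs_nonneg (a.2 - b.2))]

lemma le_euclDist_of_mem_tile {w h κ : ℝ} (hw : 0 ≤ w) (hh : 0 ≤ h) {n : ℕ}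
    (hκw : κ ≤ w * (2 * n - 1)) (hκh : κ ≤ h * 3) {j j' a a' b : ℤ} (hj : j ≠ j')
    (ha : a ≡ 4 * j + 1 - b [ZMOD 8 * n]) (ha' : a' ≡ 4 * j' + 1 - b [ZMOD 8 * n]) {p p' : ℝ × ℝ}
    (hp : p ∈ tile w h 1 j a) (hp' : p' ∈ tile w h 1 j' a') : κ ≤ euclDist p p' := by
  obtain ⟨m, hm⟩ := (ha.sub ha').dvd
  have hm' : 4 * (j - j') - (a - a') = 8 * n * m := by rw [← hm]; ring
  obtain ⟨hp₁, hp₂⟩ := hp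
  obtain ⟨hp₁', hp₂'⟩ := hp'
  rw [one_mul] at hp₁ hp₂ hp₁' hp₂'
  refine le_euclDist ?_
  by_cases haa : a = a'
  · have hdvd : (2 * n : ℤ) ∣ j - j' := ⟨m, by linarith [hm']⟩
    have hle : (2 * n : ℤ) ≤ |j - j'| :=
      Int.le_of_dvd (abs_pos.2 (sub_ne_zero.2 hj)) ((dvd_abs _ _).2 hdvd)
    refine .inl (hκw.trans (le_trans ?_ (mul_sub_one_le_abs_sub hw hp₁ hp₁')))
    gcongr
    exact_mod_cast sub_le_sub_right hle 1
  · have hdvd : (4 : ℤ) ∣ a - a' := ⟨j - j' - 2 * n * m, by linarith [hm']⟩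
    have hle : (4 : ℤ) ≤ |a - a'| :=
      Int.le_of_dvd (abs_pos.2 (sub_ne_zero.2 haa)) ((dvd_abs _ _).2 hdvd)
    have hdist := mul_sub_one_le_abs_sub hh hp₂ hp₂'
    rw [add_sub_add_right_eq_sub] at hdist
    refine .inr (hκh.trans (le_trans ?_ hdist))
    gcongr
    exact_mod_cast sub_le_sub_right hle 1

end Tiles

/-- The width of the subcolumns: `2 n ^ 2` of them fill a fundamental domain of the rotation by
`1/q`. -/
noncomputable def subcolWidth (q n : ℕ) : ℝ := 1 / (2 * q * n ^ 2)

/-- The height of the blocks: `8 n L` of them fill the interval `[-1, 1]`. -/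
noncomputable def blockHeight (n L : ℕ) : ℝ := 1 / (4 * n * L)

section Parameters

variable {q n L : ℕ} [NeZero q] [NeZero n] [NeZero L]

lemma natCast_pos_of_neZero (n : ℕ) [NeZero n] : (0 : ℝ) < n := Nat.cast_pos.2 (NeZero.pos n)

lemma subcolWidth_pos : 0 < subcolWidth q n := by
  have hq := natCast_pos_of_neZero q
  have hn := natCast_pos_of_neZero n
  unfold subcolWidth
  positivity

lemma blockHeight_pos : 0 < blockHeight n L := by
  have hn := natCast_pos_of_neZero n
  have hL := natCast_pos_of_neZero L
  unfold blockHeight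
  positivity

lemma two_mul_sq_mul_subcolWidth : 2 * n ^ 2 * subcolWidth q n = 1 / q := by
  have hq := natCast_pos_of_neZero q
  have hn := natCast_pos_of_neZero n
  unfold subcolWidth
  field_simp

lemma mul_blockHeight : 8 * n * L * blockHeight n L = 2 := by
  have hn := natCast_pos_of_neZero n
  have hL := natCast_pos_of_neZero L
  unfold blockHeight
  field_simp
  norm_num

end Parameters

section Scatter

/-- The height, counted in blocks, at which the stretches of `8 n` blocks of the subcolumn `j` are
cut in two. -/
def scatterCut (n : ℕ) (j : ℤ) : ℤ := 4 * (j % (2 * n)) + 2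

/-- The first block of the upper (`true`) or lower (`false`) part of the stretch `i.1`. -/
def scatterLo (n : ℕ) (j : ℤ) (i : ℕ × Bool) : ℤ := 8 * n * i.1 + bif i.2 then scatterCut n j else 0

/-- The block following the upper (`true`) or lower (`false`) part of the stretch `i.1`. -/
def scatterHi (n : ℕ) (j : ℤ) (i : ℕ × Bool) : ℤ :=
  8 * n * i.1 + bif i.2 then (8 * n : ℤ) else scatterCut n j

variable {q n L : ℕ}

lemma scatterCut_add (j : ℤ) (m : ℕ) : scatterCut n (j + 2 * n * m) = scatterCut n j := by
  rw [scatterCut, Int.add_mul_emod_self_left, scatterCut]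

lemma scatterCut_mem_Icc [NeZero n] (j : ℤ) : scatterCut n j ∈ Icc 2 (8 * n - 2 : ℤ) := by
  have hn : (0 : ℤ) < 2 * n := by have := NeZero.pos n; omega
  have := Int.emod_nonneg j hn.ne'
  have := Int.emod_lt_of_pos j hn
  constructor <;> unfold scatterCut <;> omega

lemma scatterHi_sub_scatterLo_mem_Icc [NeZero n] (j : ℤ) (i : ℕ × Bool) :
    scatterHi n j i - scatterLo n j i ∈ Icc 2 (8 * n - 2 : ℤ) := by
  obtain ⟨h₁, h₂⟩ := scatterCut_mem_Icc (n := n) j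
  obtain ⟨l, _ | _⟩ := i <;> constructor <;> simp only [scatterHi, scatterLo, cond] <;> omega

lemma scatterHi_sub_scatterLo_le [NeZero n] (j : ℤ) (i : ℕ × Bool) :
    (scatterHi n j i - scatterLo n j i : ℝ) ≤ 8 * n := by
  have := (scatterHi_sub_scatterLo_mem_Icc (n := n) j i).2
  exact_mod_cast (by omega : scatterHi n j i - scatterLo n j i ≤ 8 * n)

lemma scatterLo_nonneg [NeZero n] (j : ℤ) (i : ℕ × Bool) : 0 ≤ scatterLo n j i := by
  have h := (scatterCut_mem_Icc (n := n) j).1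
  obtain ⟨l, _ | _⟩ := i <;> simp only [scatterLo, cond] <;> positivity

lemma scatterHi_le [NeZero n] (j : ℤ) {i : ℕ × Bool} (hi : i.1 < L) :
    scatterHi n j i ≤ 8 * n * L := by
  have := (scatterCut_mem_Icc (n := n) j).2
  have hl : (8 * n * i.1 + 8 * n : ℤ) ≤ 8 * n * L := by
    exact_mod_cast Nat.mul_le_mul_left (8 * n) (Nat.succ_le_of_lt hi)
  obtain ⟨l, _ | _⟩ := i <;> simp only [scatterHi, cond] at * <;> omega

lemma scatterHi_le_scatterLo [NeZero n] (j : ℤ) {i i' : ℕ × Bool} (h : i ≠ i') :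
    scatterHi n j i ≤ scatterLo n j i' ∨ scatterHi n j i' ≤ scatterLo n j i := by
  obtain ⟨hcut, hcut'⟩ := scatterCut_mem_Icc (n := n) j
  have hlt : ∀ {l l' : ℕ}, l < l' → (8 * n * l + 8 * n : ℤ) ≤ 8 * n * l' := fun hl => by
    exact_mod_cast Nat.mul_le_mul_left (8 * n) (Nat.succ_le_of_lt hl)
  obtain ⟨l, c⟩ := i
  obtain ⟨l', c'⟩ := i'
  rcases lt_trichotomy l l' with hl | rfl | hl
  · refine .inl ?_
    have := hlt hl
    cases c <;> cases c' <;> simp only [scatterHi, scatterLo, cond] <;> omega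
  · cases c <;> cases c' <;> simp_all [scatterHi, scatterLo]
  · refine .inr ?_
    have := hlt hl
    cases c <;> cases c' <;> simp only [scatterHi, scatterLo, cond] <;> omega

lemma exists_mem_Ico_scatter [NeZero n] (j : ℤ) {b : ℕ} (hb : b < 8 * n * L) :
    ∃ l < L, ∃ c, (b : ℤ) ∈ Ico (scatterLo n j (l, c)) (scatterHi n j (l, c)) := by
  have hn : 0 < 8 * n := by have := NeZero.pos n; omega
  have hlo : 8 * n * (b / (8 * n)) ≤ b := Nat.mul_div_le b (8 * n)
  have hhi : b < 8 * n * (b / (8 * n)) + 8 * n := Nat.lt_mul_div_succ b hn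
  zify at hlo hhi
  refine ⟨b / (8 * n), Nat.div_lt_of_lt_mul hb, ?_⟩
  rcases lt_or_ge (b : ℤ) (8 * n * (b / (8 * n) : ℕ) + scatterCut n j) with hcut | hcut
  · exact ⟨false, by simpa [scatterLo] using hlo, by simpa [scatterHi] using hcut⟩
  · exact ⟨true, by simpa [scatterLo] using hcut, by simpa [scatterHi] using hhi⟩

lemma scatterLo_add_scatterHi_modEq (j : ℤ) (i : ℕ × Bool) :
    scatterLo n j i + scatterHi n j i - 1 ≡ 4 * j + 1 [ZMOD 8 * n] := by
  have hmod : 2 * n * (j / (2 * n)) + j % (2 * n) = j := Int.mul_ediv_add_emod j (2 * n)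
  refine Int.modEq_iff_dvd.2 ?_
  obtain ⟨l, _ | _⟩ := i <;> simp only [scatterLo, scatterHi, scatterCut, cond]
  · exact ⟨j / (2 * n) - 2 * l, by linear_combination -4 * hmod⟩
  · exact ⟨j / (2 * n) - 2 * l - 1, by linear_combination -4 * hmod⟩

/-- The half-turns of the two parts of every stretch: since the cut of the subcolumn `j` is at
height `4 (j % 2 n) + 2`, they move the block `b` to a block congruent to `4 j + 1 - b`
modulo `8 n`. -/
noncomputable def scatterGrid (q n L : ℕ) [NeZero q] [NeZero n] [NeZero L] :
    TurnGrid q (Fin L × Bool) where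
  cols := 2 * n ^ 2
  width := subcolWidth q n
  width_pos := subcolWidth_pos
  cols_mul_width := by exact_mod_cast two_mul_sq_mul_subcolWidth
  lo j i := -1 + blockHeight n L * scatterLo n j (i.1, i.2)
  hi j i := -1 + blockHeight n L * scatterHi n j (i.1, i.2)
  angle _ _ := Real.pi
  lo_periodic j := by
    have h : j + ((2 * n ^ 2 : ℕ) : ℤ) = j + 2 * n * n := by push_cast; ring
    simp only [h, scatterLo, scatterCut_add]
  hi_periodic j := by
    have h : j + ((2 * n ^ 2 : ℕ) : ℤ) = j + 2 * n * n := by push_cast; ring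
    simp only [h, scatterHi, scatterCut_add]
  angle_periodic _ := rfl
  minHeight := blockHeight n L
  minHeight_pos := blockHeight_pos
  minHeight_le j i := by
    have h : (1 : ℝ) ≤ scatterHi n j (i.1, i.2) - scatterLo n j (i.1, i.2) := by
      have := (scatterHi_sub_scatterLo_mem_Icc (n := n) j (i.1, i.2)).1
      exact_mod_cast (by omega : 1 ≤ scatterHi n j (i.1, i.2) - scatterLo n j (i.1, i.2))
    nlinarith [blockHeight_pos (n := n) (L := L)]
  neg_one_le_lo j i := by
    have h : (0 : ℝ) ≤ scatterLo n j (i.1, i.2) := by exact_mod_cast scatterLo_nonneg j _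
    nlinarith [blockHeight_pos (n := n) (L := L)]
  hi_le_one j i := by
    have h : (scatterHi n j (i.1, i.2) : ℝ) ≤ 8 * n * L := by
      exact_mod_cast scatterHi_le j (i := (i.1, i.2)) i.1.isLt
    nlinarith [blockHeight_pos (n := n) (L := L), mul_blockHeight (n := n) (L := L)]
  disjoint j i i' hii' := by
    have hne : ((i.1 : ℕ), i.2) ≠ ((i'.1 : ℕ), i'.2) := fun h =>
      hii' (Prod.ext (Fin.ext (Prod.mk.inj h).1) (Prod.mk.inj h).2)
    rw [Function.onFun, Ioo_disjoint_Ioo, min_le_iff, le_max_iff, le_max_iff]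
    have hmono : ∀ {k l : ℤ}, k ≤ l → -1 + blockHeight n L * k ≤ -1 + blockHeight n L * l :=
      fun hkl => by have := (blockHeight_pos (n := n) (L := L)).le; gcongr
    exact (scatterHi_le_scatterLo j hne).imp (fun h => .inr (hmono h)) fun h => .inl (hmono h)

end Scatter

namespace TurnGrid

variable {q : ℕ} {κ : Type*} {g : TurnGrid q κ} {k : ℤ} {b : κ}

lemma place_neg (z : ℝ × ℝ) :
    g.place k b (-z) = (2 * (g.width * (k + 1 / 2)) - (g.place k b z).1,
      g.lo k b + g.hi k b - (g.place k b z).2) := by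
  ext <;> simp only [place_apply, Prod.fst_neg, Prod.snd_neg] <;> ring

lemma exists_place_eq {s : ℝ} {p : ℝ × ℝ}
    (h₁ : |p.1 - g.width * (k + 1 / 2)| ≤ s * (g.width / 2))
    (h₂ : |p.2 - (g.lo k b + g.hi k b) / 2| ≤ s * ((g.hi k b - g.lo k b) / 2)) :
    ∃ z ∈ Metric.closedBall 0 s, g.place k b z = p := by
  refine ⟨(g.place k b).symm p, ?_, Equiv.apply_symm_apply _ _⟩
  have hw := half_pos g.width_pos
  have hh : 0 < (g.hi k b - g.lo k b) / 2 :=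
    half_pos (g.minHeight_pos.trans_le (g.minHeight_le k b))
  rw [mem_closedBall_zero_iff, Prod.norm_def, max_le_iff, Real.norm_eq_abs, Real.norm_eq_abs]
  change |(p.1 - g.width * (k + 1 / 2)) / (g.width / 2)| ≤ s ∧
    |(p.2 - (g.lo k b + g.hi k b) / 2) / ((g.hi k b - g.lo k b) / 2)| ≤ s
  rw [abs_div _ (g.width / 2), abs_div _ ((g.hi k b - g.lo k b) / 2), abs_of_pos hw,
    abs_of_pos hh, div_le_iff₀ hw, div_le_iff₀ hh]
  exact ⟨h₁, h₂⟩

end TurnGrid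

section ScatterMap

variable {q n L : ℕ} [NeZero q] [NeZero n] [NeZero L]

lemma exists_place_scatterGrid {r : ℝ} (hr : r ≤ 1) {j b : ℤ} {p : ℝ × ℝ}
    (hp : p ∈ tile (subcolWidth q n) (blockHeight n L) r j b) {l : Fin L} {c : Bool}
    (hb : b ∈ Ico (scatterLo n j (l, c)) (scatterHi n j (l, c))) :
    ∃ z ∈ Metric.closedBall 0 (1 - (1 - r) / (8 * n)),
      (scatterGrid q n L).place j (l, c) z = p := by
  have hw := subcolWidth_pos (q := q) (n := n)
  have hh := blockHeight_pos (n := n) (L := L)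
  have hn : (1 : ℝ) ≤ n := by exact_mod_cast NeZero.one_le
  obtain ⟨hp₁, hp₂⟩ := hp
  refine TurnGrid.exists_place_eq (hp₁.trans ?_) ?_
  · have : (1 - r) / (8 * n) ≤ 1 - r := div_le_self (by linarith) (by linarith)
    exact mul_le_mul_of_nonneg_right (by linarith) (half_pos hw).le
  · simp only [scatterGrid]
    have hlo : blockHeight n L * scatterLo n j (l, c) ≤ blockHeight n L * b := by
      gcongr
      exact hb.1
    have hhi : blockHeight n L * (b + 1) ≤ blockHeight n L * scatterHi n j (l, c) := by
      gcongr
      exact_mod_cast hb.2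
    have hmargin : blockHeight n L * ((scatterHi n j (l, c) - scatterLo n j (l, c)) *
        ((1 - r) / (8 * n))) ≤ blockHeight n L * (1 - r) := by
      gcongr
      rw [mul_div_assoc', div_le_iff₀ (by positivity), mul_comm]
      exact mul_le_mul_of_nonneg_left (scatterHi_sub_scatterLo_le j _) (by linarith)
    rw [abs_le] at hp₂ ⊢
    constructor <;> linarith

lemma exists_scatter {r : ℝ} (hr : r < 1) :
    ∃ F : Equiv.Perm (ℝ × ℝ), IsCylinderDiffeo q F ∧
      (∀ p, |(F p).1 - p.1| ≤ subcolWidth q n ∧ |(F p).2 - p.2| ≤ 2 / L) ∧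
      ∀ (j : ℤ) (b : ℕ), b < 8 * n * L → ∀ p ∈ tile (subcolWidth q n) (blockHeight n L) r j b,
        ∃ a : ℤ, a ≡ 4 * j + 1 - b [ZMOD 8 * n] ∧
          F p ∈ tile (subcolWidth q n) (blockHeight n L) r j a := by
  have hn := natCast_pos_of_neZero n
  have hL := natCast_pos_of_neZero L
  have hball : Metric.closedBall (0 : ℝ × ℝ) (1 - (1 - r) / (8 * n)) ⊆ Metric.ball 0 1 :=
    Metric.closedBall_subset_ball (sub_lt_self 1 (div_pos (sub_pos.2 hr) (by positivity)))
  obtain ⟨F, hF, hF₁, hF₂, hturn⟩ :=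
    (scatterGrid q n L).exists_isCylinderDiffeo (isCompact_closedBall _ _) hball
  refine ⟨F, hF, fun p => ⟨hF₁ p, hF₂ _ (by positivity) (fun j i => ?_) p⟩, fun j b hb p hp => ?_⟩
  · have hstretch : blockHeight n L * (8 * n) = 2 / L := by
      rw [eq_div_iff hL.ne', ← mul_blockHeight (n := n) (L := L)]
      ring
    rw [← hstretch]
    refine le_trans (le_of_eq ?_) (mul_le_mul_of_nonneg_left
      (scatterHi_sub_scatterLo_le j (i.1, i.2)) blockHeight_pos.le)
    simp only [scatterGrid]
    ring
  · obtain ⟨l, hl, c, hlc⟩ := exists_mem_Ico_scatter j hb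
    obtain ⟨z, hz, rfl⟩ := exists_place_scatterGrid hr.le hp (l := ⟨l, hl⟩) hlc
    rw [hturn _ _ z hz]
    change ∃ a : ℤ, _ ∧ (scatterGrid q n L).place j (⟨l, hl⟩, c) (squareTurn Real.pi z) ∈ _
    rw [squareTurn_pi (hball hz), TurnGrid.place_neg]
    generalize (scatterGrid q n L).place j (⟨l, hl⟩, c) z = p at hp
    refine ⟨scatterLo n j (l, c) + scatterHi n j (l, c) - 1 - b,
      (scatterLo_add_scatterHi_modEq j _).sub_right b, ?_, ?_⟩
    · change |2 * (subcolWidth q n * (j + 1 / 2)) - p.1 - subcolWidth q n * (j + 1 / 2)| ≤ _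
      rw [← abs_neg]
      convert hp.1 using 2
      ring
    · simp only [scatterGrid]
      rw [← abs_neg]
      convert hp.2 using 2
      push_cast
      ring

end ScatterMap

/-! ### Coding by quarter-turns -/

section Coding

/-- The angle of the quarter-turn writing the bit `c` into a box: the upper half of the box goes to
its right half for `c = false` and to its left half for `c = true`. -/
noncomputable def quarterAngle (c : Bool) : ℝ := bif c then Real.pi / 2 else -(Real.pi / 2)

lemma zero_lt_fst_squareTurn_quarterAngle {c : Bool} {p : ℝ × ℝ} (hp : p ∈ Metric.ball 0 1)
    (hp₂ : p.2 ≠ 0) :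
    0 < (squareTurn (quarterAngle c) p).1 ↔ (c ^^ decide (0 < p.2)) = true := by
  have hsign := sign_fst_squareTurn_neg_pi_div_two hp
  cases c with
  | false =>
    rw [← sign_eq_one_iff, quarterAngle, cond_false, hsign, sign_eq_one_iff]
    simp
  | true =>
    rw [quarterAngle, cond_true, squareTurn_pi_div_two hp, Prod.fst_neg, Left.neg_pos_iff,
      ← sign_eq_neg_one_iff, hsign, sign_eq_neg_one_iff, lt_iff_le_and_ne, and_iff_left hp₂]
    simp

lemma exists_forall_quarterTurn_margin {K : Set (ℝ × ℝ)} (hK : IsCompact K)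
    (hKb : K ⊆ Metric.ball 0 1) (hK₂ : ∀ p ∈ K, p.2 ≠ 0) :
    ∃ ρ > 0, ∀ c, ∀ p ∈ K, ρ ≤ |(squareTurn (quarterAngle c) p).1| ∧
      ‖squareTurn (quarterAngle c) p‖ ≤ 1 - ρ := by
  obtain ⟨_, _, _, hturn⟩ := exists_isVolumeDiffeo_eqOn_squareTurn hK hKb
  obtain ⟨T, hT, -, hTK⟩ := hturn (-(Real.pi / 2))
  have hK' : IsCompact (T '' K) := hK.image hT.contDiff.continuous
  obtain ⟨a, ha, haK⟩ := exists_lt_forall_le_of_isCompact hK'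
    (f := fun z => -|z.1|) (by fun_prop) (b := 0) (by
      rintro _ ⟨p, hp, rfl⟩
      rw [neg_lt_zero, abs_pos, ← sign_ne_zero, hTK hp,
        sign_fst_squareTurn_neg_pi_div_two (hKb hp), sign_ne_zero]
      exact hK₂ p hp)
  obtain ⟨b, hb, hbK⟩ := exists_lt_forall_le_of_isCompact hK'
    (f := fun z => ‖z‖) continuous_norm (b := 1) (by
      rintro _ ⟨p, hp, rfl⟩
      exact hTK hp ▸ mem_ball_zero_iff.1 (squareTurn_mem_ball _ (hKb hp)))
  refine ⟨min (-a) (1 - b), lt_min (by linarith) (by linarith), fun c p hp => ?_⟩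
  have haK' := haK _ (mem_image_of_mem T hp)
  have hbK' := hbK _ (mem_image_of_mem T hp)
  rw [hTK hp] at haK' hbK'
  have hmin : min (-a) (1 - b) ≤ |(squareTurn (-(Real.pi / 2)) p).1| ∧
      ‖squareTurn (-(Real.pi / 2)) p‖ ≤ 1 - min (-a) (1 - b) :=
    ⟨min_le_iff.2 (.inl (by linarith)), by linarith [min_le_right (-a) (1 - b)]⟩
  cases c with
  | false => exact hmin
  | true =>
    rw [quarterAngle, cond_true, squareTurn_pi_div_two (hKb hp), Prod.fst_neg, abs_neg, norm_neg]
    exact hmin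

/-- The height at the relative position `v ∈ [-1, 1]` in the `k`-th of the `M` bands of equal
height which fill the interval `[-1, 1]`. -/
noncomputable def bandPoint (M k : ℕ) (v : ℝ) : ℝ := -1 + 2 / M * (k + 1 / 2 + v / 2)

lemma bandPoint_sub_bandPoint (M k : ℕ) (v v' : ℝ) :
    bandPoint M k v - bandPoint M k v' = 2 / M * ((v - v') / 2) := by
  simp only [bandPoint]
  ring

variable {q N M : ℕ} [NeZero q] [NeZero N] [NeZero M]

/-- The quarter-turns writing the bit `W k (J : ZMod N)` into the intersection of the `J`-th of the
columns of width `1/(q N)` with the `k`-th of the `M` bands. -/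
noncomputable def codingGrid (q : ℕ) [NeZero q] (W : Fin M → ZMod N → Bool) :
    TurnGrid q (Fin M) where
  cols := N
  width := 1 / (q * N)
  width_pos := one_div_pos.2 (mul_pos (natCast_pos_of_neZero q) (natCast_pos_of_neZero N))
  cols_mul_width := by
    have hN := natCast_pos_of_neZero N
    field_simp
  lo _ k := bandPoint M k (-1)
  hi _ k := bandPoint M k 1
  angle J k := quarterAngle (W k J)
  lo_periodic _ := rfl
  hi_periodic _ := rfl
  angle_periodic J := by simp only [Int.cast_add, Int.cast_natCast, CharP.cast_eq_zero, add_zero]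
  minHeight := 2 / M
  minHeight_pos := div_pos two_pos (natCast_pos_of_neZero M)
  minHeight_le _ k := by rw [bandPoint_sub_bandPoint]; norm_num
  neg_one_le_lo _ k := by
    have hM := natCast_pos_of_neZero M
    rw [bandPoint, add_assoc, ← add_div, add_neg_cancel, zero_div, add_zero]
    exact le_add_of_nonneg_right (by positivity)
  hi_le_one _ k := by
    have hM := natCast_pos_of_neZero M
    have hk : (k : ℝ) + 1 ≤ M := by exact_mod_cast k.isLt
    rw [bandPoint, add_assoc, add_halves, div_mul_eq_mul_div, neg_add_le_iff_le_add,
      div_le_iff₀ hM]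
    linarith
  disjoint _ k k' hkk' := by
    have hle : ∀ i i' : Fin M, i < i' → bandPoint M i 1 ≤ bandPoint M i' (-1) := fun i i' hi => by
      have hi' : (i : ℝ) + 1 ≤ i' := by exact_mod_cast Fin.lt_def.1 hi
      have hM := natCast_pos_of_neZero M
      exact add_le_add le_rfl (mul_le_mul_of_nonneg_left (by linarith) (by positivity))
    rw [Function.onFun, Ioo_disjoint_Ioo, min_le_iff, le_max_iff, le_max_iff]
    exact (lt_or_gt_of_ne hkk').imp (fun h => .inr (hle _ _ h)) fun h => .inl (hle _ _ h)

lemma codingGrid_place (W : Fin M → ZMod N → Bool) (J : ℤ) (k : Fin M) (z : ℝ × ℝ) :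
    (codingGrid q W).place J k z =
      (1 / (q * N) * (J + 1 / 2 + z.1 / 2), bandPoint M k z.2) := by
  ext <;> simp only [TurnGrid.place_apply, codingGrid, bandPoint] <;> ring

lemma codingGrid_place_mem_tile (W : Fin M → ZMod N → Bool) (J : ℤ) (k : Fin M) {z : ℝ × ℝ}
    {ρ : ℝ} (hρ : 0 < ρ) (hz₁ : ρ ≤ |z.1|) (hz : ‖z‖ ≤ 1 - ρ) :
    (codingGrid q W).place J k z ∈
      tile (1 / (2 * q * N)) (2 / M) (1 - ρ) (2 * J + if 0 < z.1 then 1 else 0) k := by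
  have hq := natCast_pos_of_neZero q
  have hN := natCast_pos_of_neZero N
  have hM := natCast_pos_of_neZero M
  have hz₁' := (norm_fst_le z).trans hz
  have hz₂ := (norm_snd_le z).trans hz
  rw [Real.norm_eq_abs] at hz₁' hz₂
  rw [codingGrid_place]
  have hw : (1 : ℝ) / (q * N) = 2 * (1 / (2 * q * N)) := by field_simp
  have hside : |2 * (1 / 2 + z.1 / 2) - ((if 0 < z.1 then 1 else 0) + 1 / 2)| ≤ (1 - ρ) / 2 := by
    rw [abs_le] at hz₁' ⊢
    split_ifs with h
    · rw [abs_of_pos h] at hz₁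
      constructor <;> linarith
    · rw [abs_of_nonpos (not_lt.1 h)] at hz₁
      constructor <;> linarith
  constructor
  · calc _ = |1 / (2 * q * N) *
          (2 * (1 / 2 + z.1 / 2) - ((if 0 < z.1 then 1 else 0) + 1 / 2))| := by
          rw [hw]; push_cast; ring_nf
      _ ≤ 1 / (2 * q * N) * ((1 - ρ) / 2) := by
          rw [abs_mul, abs_of_pos (by positivity)]; gcongr
      _ = _ := by ring
  · calc _ = |2 / M * (z.2 / 2)| := by
          simp only [bandPoint]; push_cast; ring_nf
      _ ≤ 2 / M * ((1 - ρ) / 2) := by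
          rw [abs_mul, abs_of_pos (by positivity), abs_div, abs_two]; gcongr
      _ = _ := by ring

lemma exists_coding (q : ℕ) [NeZero q] (W : Fin M → ZMod N → Bool) {β : ℝ} (hβ : 0 < β) :
    ∃ r < 1, ∃ F : Equiv.Perm (ℝ × ℝ), IsCylinderDiffeo q F ∧
      (∀ p, |(F p).1 - p.1| ≤ 1 / (q * N) ∧ |(F p).2 - p.2| ≤ 2 / M) ∧
      ∀ (J : ℤ) (k : Fin M) (u v : ℝ), |u| ≤ 49 / 50 → |v| ∈ Icc β (1 - β) →
        F (1 / (q * N) * (J + 1 / 2 + u / 2), bandPoint M k v) ∈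
          tile (1 / (2 * q * N)) (2 / M) r (2 * J + (W k J ^^ decide (0 < v)).toNat) k := by
  let K : Set (ℝ × ℝ) := {z | |z.1| ≤ 49 / 50 ∧ |z.2| ∈ Icc β (1 - β)}
  have hK : K ⊆ Metric.closedBall 0 (max (49 / 50) (1 - β)) := fun z hz =>
    mem_closedBall_zero_iff.2 (max_le_max hz.1 hz.2.2)
  have hKb : K ⊆ Metric.ball 0 1 := hK.trans (Metric.closedBall_subset_ball
    (max_lt (by norm_num) (by linarith)))
  have hKc : IsCompact K := (isCompact_closedBall _ _).of_isClosed_subset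
    ((isClosed_le (f := fun z : ℝ × ℝ => |z.1|) (by fun_prop) continuous_const).inter
      (isClosed_Icc.preimage (f := fun z : ℝ × ℝ => |z.2|) (by fun_prop))) hK
  have hK₂ : ∀ z ∈ K, z.2 ≠ 0 := fun z hz => abs_pos.1 (hβ.trans_le hz.2.1)
  obtain ⟨ρ, hρ, hρK⟩ := exists_forall_quarterTurn_margin hKc hKb hK₂
  obtain ⟨F, hF, hF₁, hF₂, hturn⟩ := (codingGrid q W).exists_isCylinderDiffeo hKc hKb
  refine ⟨1 - ρ, by linarith, F, hF,
    fun p => ⟨hF₁ p, hF₂ _ (by positivity) (fun _ k => ?_) p⟩, fun J k u v hu hv => ?_⟩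
  · exact (bandPoint_sub_bandPoint M k 1 (-1)).trans_le (by norm_num)
  · have hz : (u, v) ∈ K := ⟨hu, hv⟩
    obtain ⟨hfst, hnorm⟩ := hρK (W k J) _ hz
    rw [← codingGrid_place W J k (u, v), hturn J k _ hz]
    change (codingGrid q W).place J k (squareTurn (quarterAngle (W k J)) (u, v)) ∈ _
    convert codingGrid_place_mem_tile W J k hρ hfst hnorm using 2
    simp only [zero_lt_fst_squareTurn_quarterAngle (hKb hz) (hK₂ _ hz)]
    cases W k J ^^ decide (0 < v) <;> rfl

end Coding

section Composition

lemma tile_div_subset_tile {w h r : ℝ} (hw : 0 ≤ w) (hh : 0 ≤ h) (hr : r ≤ 1) (j : ℤ) (m : ℕ)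
    {B : ℕ} (hB : 0 < B) :
    tile w (h / B) r j m ⊆ tile w h (1 - (1 - r) / B) j (m / B : ℕ) := by
  have hB' : (1 : ℝ) ≤ B := by exact_mod_cast hB
  rintro p ⟨hp₁, hp₂⟩
  refine ⟨hp₁.trans ?_, ?_⟩
  · gcongr
    linarith [div_le_self (sub_nonneg.2 hr) hB']
  · have hlo : (B * (m / B : ℕ) : ℝ) ≤ m := by exact_mod_cast Nat.mul_div_le m B
    have hhi : (m : ℝ) + 1 ≤ B * (m / B : ℕ) + B := by
      exact_mod_cast Nat.lt_mul_div_succ m hB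
    generalize m / B = d at *
    have hh' : 0 ≤ h / B := by positivity
    have hB_ne : (B : ℝ) ≠ 0 := by positivity
    have hcentre : p.2 + 1 - h * ((d : ℤ) + 1 / 2) =
        (p.2 + 1 - h / B * ((m : ℤ) + 1 / 2)) + h / B * (m + 1 / 2 - B * (d + 1 / 2)) := by
      push_cast
      field_simp
      ring
    have hradius : (1 - (1 - r) / B) * (h / 2) = h / B * ((B - (1 - r)) / 2) := by field_simp
    rw [hcentre, hradius]
    calc _ ≤ r * (h / B / 2) + h / B * ((B - 1) / 2) := by
          refine (abs_add_le _ _).trans (add_le_add hp₂ ?_)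
          rw [abs_mul, abs_of_nonneg hh']
          gcongr
          exact abs_le.2 ⟨by linarith, by linarith⟩
      _ = h / B * ((B - (1 - r)) / 2) := by ring

variable {q n L B : ℕ}

lemma column_add_subcolWidth_le [NeZero q] [NeZero n] :
    1 / (q * (n ^ 2 : ℕ)) + subcolWidth q n ≤ 2 / n := by
  have hqn : (1 : ℝ) ≤ q * n := by exact_mod_cast NeZero.one_le (n := q * n)
  have hq := natCast_pos_of_neZero q
  have hn := natCast_pos_of_neZero n
  calc 1 / (q * (n ^ 2 : ℕ)) + subcolWidth q n = 3 / 2 / (q * n) / n := by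
        unfold subcolWidth
        push_cast
        field_simp
        norm_num
    _ ≤ 3 / 2 / n := by
        refine div_le_div_of_nonneg_right ?_ hn.le
        exact div_le_self (by norm_num) hqn
    _ ≤ 2 / n := by
        gcongr
        norm_num

/-- The word read along a circle at relative height `v` in a band coded by `w`: it is `w` in the
lower half of the band and the complement of `w` in the upper half. -/
noncomputable def circleCode {ι : Type*} (w : ι → Bool) (v : ℝ) : ι → Bool :=
  fun i => w i ^^ decide (0 < v)

/-- `G` scatters the circles at a relative height `v`, `β ≤ |v| ≤ 1 - β`, in one of the `8 n L B`
bands: the middle part of the `J`-th piece of such a circle goes to the subcolumn `j` of the `J`-th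
column given by the `J`-th letter of the word of the circle, and there into a block which is
determined modulo `8 n` by `j` and by the block `k / B` containing the circle. -/
def ScattersCircles (q n L : ℕ) (W : Fin (8 * n * L * B) → ZMod (n ^ 2) → Bool) (β : ℝ)
    (G : ℝ × ℝ → ℝ × ℝ) : Prop :=
  ∀ (J : ℤ) (k : Fin (8 * n * L * B)) (u v : ℝ), |u| ≤ 49 / 50 → |v| ∈ Icc β (1 - β) →
    ∃ a : ℤ, a ≡ 4 * (2 * J + (circleCode (W k) v J).toNat) + 1 - (k / B : ℕ) [ZMOD 8 * n] ∧
      G (1 / (q * n ^ 2) * (J + 1 / 2 + u / 2), bandPoint (8 * n * L * B) k v) ∈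
        tile (subcolWidth q n) (blockHeight n L) 1 (2 * J + (circleCode (W k) v J).toNat) a

variable [NeZero q] [NeZero n] [NeZero L] [NeZero B]

lemma exists_scattersCircles (W : Fin (8 * n * L * B) → ZMod (n ^ 2) → Bool) {β : ℝ}
    (hβ : 0 < β) :
    ∃ G : Equiv.Perm (ℝ × ℝ), IsCylinderDiffeo q G ∧ (∀ p, euclDist (G p) p ≤ 2 / n + 4 / L) ∧
      ScattersCircles q n L W β G := by
  have hn := natCast_pos_of_neZero n
  have hL := natCast_pos_of_neZero L
  have hB := natCast_pos_of_neZero B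
  have hw : (1 : ℝ) / (2 * q * (n ^ 2 : ℕ)) = subcolWidth q n := by rw [subcolWidth, Nat.cast_pow]
  have hh : (2 : ℝ) / (8 * n * L * B : ℕ) = blockHeight n L / B := by
    unfold blockHeight
    push_cast
    field_simp
    norm_num
  obtain ⟨r, hr, F, hF, hFdist, hFtile⟩ := exists_coding q W hβ
  obtain ⟨S, hS, hSdist, hStile⟩ := exists_scatter (q := q) (n := n) (L := L)
    (sub_lt_self 1 (div_pos (sub_pos.2 hr) hB))
  refine ⟨F.trans S, hF.trans hS, fun p => ?_, fun J k u v hu hv => ?_⟩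
  · obtain ⟨hF₁, hF₂⟩ := hFdist p
    obtain ⟨hS₁, hS₂⟩ := hSdist (F p)
    have hcol := column_add_subcolWidth_le (q := q) (n := n)
    have hband : (2 : ℝ) / (8 * n * L * B : ℕ) ≤ 2 / L := by
      gcongr
      exact Nat.le_of_dvd (NeZero.pos _) ⟨8 * n * B, by ring⟩
    calc euclDist (S (F p)) p
        ≤ |(S (F p)).1 - p.1| + |(S (F p)).2 - p.2| := euclDist_le_abs_add_abs _ _
      _ ≤ (|(S (F p)).1 - (F p).1| + |(F p).1 - p.1|) +
          (|(S (F p)).2 - (F p).2| + |(F p).2 - p.2|) :=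
          add_le_add (abs_sub_le _ _ _) (abs_sub_le _ _ _)
      _ ≤ 2 / n + 4 / L := by linarith [add_div 2 2 (L : ℝ)]
  · have hmem := hFtile J k u v hu hv
    rw [hw, hh] at hmem
    obtain ⟨a, ha, hSa⟩ := hStile _ (k / B)
      (Nat.div_lt_of_lt_mul (k.isLt.trans_eq (mul_comm _ _))) _
      (tile_div_subset_tile subcolWidth_pos.le blockHeight_pos.le hr.le _ _ (NeZero.pos B) hmem)
    rw [Nat.cast_pow] at hSa
    exact ⟨a, ha, tile_subset_tile subcolWidth_pos.le blockHeight_pos.le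
      (sub_le_self 1 (div_nonneg (sub_nonneg.2 hr.le) hB.le)) _ _ hSa⟩

end Composition

/-! ### Separation of circle measures -/

section Kantorovich

/-- The lift to the plane of a `1`-Lipschitz function on the cylinder `(ℝ/ℤ) × ℝ`. -/
structure IsCylinderLipschitz (φ : ℝ × ℝ → ℝ) : Prop where
  abs_sub_le : ∀ a b, |φ a - φ b| ≤ euclDist a b
  periodic : ∀ x s, φ (x + 1, s) = φ (x, s)

/-- The pushforwards of the length of the circle under `g` and `g'` are at Kantorovich distance at
most `c`. No absolute value is needed, since test functions may be replaced by their negatives. -/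
def KantorovichClose (c : ℝ) (g g' : ℝ → ℝ × ℝ) : Prop :=
  ∀ φ, IsCylinderLipschitz φ → (∫ t in (0 : ℝ)..1, φ (g t)) - ∫ t in (0 : ℝ)..1, φ (g' t) ≤ c

lemma IsCylinderLipschitz.neg {φ : ℝ × ℝ → ℝ} (hφ : IsCylinderLipschitz φ) :
    IsCylinderLipschitz (-φ) where
  abs_sub_le a b := by
    rw [Pi.neg_apply, Pi.neg_apply, neg_sub_neg, abs_sub_comm]
    exact hφ.abs_sub_le a b
  periodic x s := congrArg Neg.neg (hφ.periodic x s)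

lemma KantorovichClose.symm {c : ℝ} {g g' : ℝ → ℝ × ℝ} (h : KantorovichClose c g g') :
    KantorovichClose c g' g := fun φ hφ => by
  have := h _ hφ.neg
  simp only [Pi.neg_apply, intervalIntegral.integral_neg] at this
  linarith

lemma KantorovichClose.trans {c c' : ℝ} {g g' g'' : ℝ → ℝ × ℝ} (h : KantorovichClose c g g')
    (h' : KantorovichClose c' g' g'') : KantorovichClose (c + c') g g'' := fun φ hφ => by
  linarith [h φ hφ, h' φ hφ]

lemma dist_toLp_toLp (a b : ℝ × ℝ) : dist (WithLp.toLp 2 a) (WithLp.toLp 2 b) = euclDist a b := by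
  rw [WithLp.prod_dist_eq_of_L2, euclDist, Real.dist_eq, Real.dist_eq, sq_abs, sq_abs]
  rfl

lemma euclDist_comm (a b : ℝ × ℝ) : euclDist a b = euclDist b a := by
  rw [← dist_toLp_toLp, dist_comm, dist_toLp_toLp]

lemma mul_measureReal_le_integral {α : Type*} [MeasurableSpace α] {μ : Measure α}
    [IsFiniteMeasure μ] {f : α → ℝ} (hf : Integrable f μ) (hf₀ : 0 ≤ f) {κ : ℝ} (hκ : 0 ≤ κ)
    {A : Set α} (hA : ∀ x ∈ A, κ ≤ f x) : κ * μ.real A ≤ ∫ x, f x ∂μ :=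
  (mul_le_mul_of_nonneg_left (measureReal_mono hA) hκ).trans
    (mul_meas_ge_le_integral_of_nonneg (ae_of_all _ hf₀) hf κ)

lemma mul_measureReal_add_sub_one_le_integral_sub {α : Type*} [MeasurableSpace α] {μ : Measure α}
    [IsProbabilityMeasure μ] {f f' : α → ℝ} (hf : Integrable f μ) (hf' : Integrable f' μ)
    {κ : ℝ} (hκ : 0 ≤ κ) (hf₀ : 0 ≤ f) (hf'κ : ∀ x, f' x ≤ κ) {A B : Set α}
    (hA : ∀ x ∈ A, κ ≤ f x) (hB : ∀ x ∈ B, f' x ≤ 0) :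
    κ * (μ.real A + μ.real B - 1) ≤ (∫ x, f x ∂μ) - ∫ x, f' x ∂μ := by
  have hAf := mul_measureReal_le_integral hf hf₀ hκ hA
  have hBf := mul_measureReal_le_integral ((integrable_const κ).sub hf')
    (fun x => sub_nonneg.2 (hf'κ x)) hκ (fun x hx => le_sub_self_iff κ |>.2 (hB x hx))
  simp only [Pi.sub_apply] at hBf
  rw [integral_sub (integrable_const κ) hf', integral_const, probReal_univ, one_smul] at hBf
  linarith

lemma IsCylinderLipschitz.continuous {φ : ℝ × ℝ → ℝ} (hφ : IsCylinderLipschitz φ) :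
    Continuous φ := by
  have hlip : LipschitzWith 1 fun p : WithLp 2 (ℝ × ℝ) => φ p.ofLp :=
    LipschitzWith.of_dist_le_mul fun a b => by
      rw [NNReal.coe_one, one_mul, ← WithLp.toLp_ofLp 2 a, ← WithLp.toLp_ofLp 2 b, dist_toLp_toLp]
      exact hφ.abs_sub_le _ _
  exact hlip.continuous.comp (WithLp.prod_continuous_toLp 2 ℝ ℝ)

lemma exists_lipschitz_bump {α : Type*} [PseudoMetricSpace α] (S : Set α) {κ : ℝ} (hκ : 0 < κ) :
    ∃ φ : α → ℝ, LipschitzWith 1 φ ∧ (∀ x, φ x ∈ Icc 0 κ) ∧ (∀ x ∈ S, φ x = κ) ∧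
      (∀ x, (∀ y ∈ S, κ ≤ dist x y) → φ x = 0) ∧
      ∀ Φ : α → α, Isometry Φ → Φ '' S = S → ∀ x, φ (Φ x) = φ x := by
  refine ⟨fun x => κ * thickenedIndicator hκ S x, LipschitzWith.of_dist_le_mul fun x y => ?_,
    fun x => ⟨by positivity, mul_le_of_le_one_right hκ.le (thickenedIndicator_le_one hκ S x)⟩,
    fun x hx => ?_, fun x hx => ?_, fun Φ hΦ hΦS x => ?_⟩
  · have hlip := (lipschitzWith_thickenedIndicator hκ S).dist_le_mul x y
    rw [NNReal.coe_inv, Real.coe_toNNReal κ hκ.le, NNReal.dist_eq] at hlip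
    rwa [Real.dist_eq, ← mul_sub, abs_mul, abs_of_pos hκ, NNReal.coe_one, one_mul,
      ← le_inv_mul_iff₀ hκ]
  · simp only [thickenedIndicator_one hκ S hx, NNReal.coe_one, mul_one]
  · have hx' : x ∉ Metric.thickening κ S := fun h => by
      obtain ⟨y, hy, hxy⟩ := Metric.mem_thickening_iff.1 h
      exact hxy.not_ge (hx y hy)
    simp only [thickenedIndicator_zero hκ S hx', NNReal.coe_zero, mul_zero]
  · have hinf := Metric.infEDist_image hΦ (x := x) (t := S)
    rw [hΦS] at hinf
    simp only [thickenedIndicator.coeFn_eq_comp, comp_apply, thickenedIndicatorAux, hinf]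

lemma exists_isCylinderLipschitz_of_le_euclDist {g g' : ℝ → ℝ × ℝ}
    (hper : ∀ t, g (t + 1) = g t + (1, 0)) {A B : Set ℝ} (hA : ∀ t, t + 1 ∈ A ↔ t ∈ A) {κ : ℝ}
    (hκ : 0 < κ) (hsep : ∀ t ∈ A, ∀ t' ∈ B, κ ≤ euclDist (g t) (g' t')) :
    ∃ φ, IsCylinderLipschitz φ ∧ (∀ p, φ p ∈ Icc 0 κ) ∧ (∀ t ∈ A, φ (g t) = κ) ∧
      ∀ t ∈ B, φ (g' t) = 0 := by
  obtain ⟨φ, hφlip, hφ_mem, hφS, hφ₀, hφΦ⟩ :=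
    exists_lipschitz_bump ((fun t => WithLp.toLp 2 (g t)) '' A) hκ
  refine ⟨fun p => φ (WithLp.toLp 2 p), ⟨fun a b => ?_, fun x s => ?_⟩, fun p => hφ_mem _,
    fun t ht => hφS _ (mem_image_of_mem _ ht), fun t ht => hφ₀ _ ?_⟩
  · simpa only [NNReal.coe_one, one_mul, dist_toLp_toLp, Real.dist_eq] using
      hφlip.dist_le_mul (WithLp.toLp 2 a) (WithLp.toLp 2 b)
  · have hAshift : (· + 1) '' A = A := by
      ext t
      rw [image_add_right, mem_preimage, ← hA, neg_add_cancel_right]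
    have hshift := hφΦ (· + WithLp.toLp 2 (1, 0)) (isometry_add_right _)
      (by
        conv_rhs => rw [← hAshift]
        simp only [image_image, hper, WithLp.toLp_add])
      (WithLp.toLp 2 (x, s))
    rwa [← WithLp.toLp_add, Prod.mk_add_mk, add_zero] at hshift
  · rintro _ ⟨t', ht', rfl⟩
    rw [dist_comm, dist_toLp_toLp]
    exact hsep t' ht' t ht

lemma KantorovichClose.mul_measureReal_le {c : ℝ} {g g' : ℝ → ℝ × ℝ}
    (h : KantorovichClose c g g') (hg : Continuous g) (hg' : Continuous g')
    (hper : ∀ t, g (t + 1) = g t + (1, 0)) {A B : Set ℝ} (hA : ∀ t, t + 1 ∈ A ↔ t ∈ A) {κ : ℝ}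
    (hκ : 0 < κ) (hsep : ∀ t ∈ A, ∀ t' ∈ B, κ ≤ euclDist (g t) (g' t')) :
    κ * ((volume.restrict (Ioc 0 1)).real A + (volume.restrict (Ioc 0 1)).real B - 1) ≤ c := by
  have : IsProbabilityMeasure (volume.restrict (Ioc (0 : ℝ) 1)) := ⟨by simp⟩
  obtain ⟨φ, hφ, hφ_mem, hφA, hφB⟩ := exists_isCylinderLipschitz_of_le_euclDist hper hA hκ hsep
  have hint : ∀ γ : ℝ → ℝ × ℝ, Continuous γ →
      Integrable (fun t => φ (γ t)) (volume.restrict (Ioc 0 1)) := fun γ hγ =>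
    (hφ.continuous.comp hγ).integrableOn_Ioc
  have hclose := h φ hφ
  rw [intervalIntegral.integral_of_le zero_le_one,
    intervalIntegral.integral_of_le zero_le_one] at hclose
  exact (mul_measureReal_add_sub_one_le_integral_sub (hint g hg) (hint g' hg') hκ.le
    (fun t => (hφ_mem _).1) (fun t => (hφ_mem _).2) (fun t ht => (hφA t ht).ge)
    fun t ht => (hφB t ht).le).trans hclose

end Kantorovich

section Separation

/-- The middle parts, of relative width `ρ`, of the columns `[J/Q, (J+1)/Q]` with `P J`. -/
def columnCore (Q : ℕ) (ρ : ℝ) (P : ℤ → Prop) : Set ℝ :=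
  {t | ∃ J, P J ∧ |Q * t - (J + 1 / 2)| ≤ ρ / 2}

lemma add_one_mem_columnCore {Q : ℕ} {ρ : ℝ} {P : ℤ → Prop} (hP : ∀ J, P (J + Q) ↔ P J) (t : ℝ) :
    t + 1 ∈ columnCore Q ρ P ↔ t ∈ columnCore Q ρ P := by
  have hshift : ∀ J : ℤ, Q * (t + 1) - ((J + Q : ℤ) + 1 / 2) = Q * t - (J + 1 / 2) := fun J => by
    push_cast
    ring
  constructor
  · rintro ⟨J, hJ, ht⟩
    refine ⟨J - Q, by rwa [← hP, sub_add_cancel], ?_⟩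
    rwa [← hshift, sub_add_cancel]
  · rintro ⟨J, hJ, ht⟩
    exact ⟨J + Q, (hP J).2 hJ, by rwa [hshift]⟩

lemma exists_eq_of_abs_sub_le {Q : ℕ} [NeZero Q] {ρ t c : ℝ} (ht : |Q * t - c| ≤ ρ / 2) :
    ∃ u, |u| ≤ ρ ∧ t = 1 / Q * (c + u / 2) := by
  have hQ := natCast_pos_of_neZero Q
  refine ⟨2 * (Q * t - c), ?_, by field_simp; ring⟩
  rw [abs_mul, abs_two]
  linarith

lemma volume_real_setOf_abs_mul_sub_le {Q : ℝ} (hQ : 0 < Q) (c : ℝ) {ρ : ℝ} (hρ : 0 ≤ ρ) :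
    volume.real {t | |Q * t - c| ≤ ρ / 2} = ρ / Q := by
  have hball : {t | |Q * t - c| ≤ ρ / 2} = Metric.closedBall (c / Q) (ρ / (2 * Q)) := by
    ext t
    have hscale : Q * t - c = Q * (t - c / Q) := by field_simp
    rw [mem_ofPred_eq, hscale, abs_mul, abs_of_pos hQ, Metric.mem_closedBall, Real.dist_eq,
      ← div_div, le_div_iff₀' hQ]
  rw [hball, Real.volume_real_closedBall (by positivity)]
  field_simp

lemma card_mul_le_measureReal_columnCore {Q : ℕ} [NeZero Q] {ρ : ℝ} (hρ₀ : 0 ≤ ρ) (hρ : ρ < 1)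
    (P : ℤ → Prop) [DecidablePred P] :
    ((Finset.range Q).filter fun J : ℕ => P J).card * (ρ / Q) ≤
      (volume.restrict (Ioc (0 : ℝ) 1)).real (columnCore Q ρ P) := by
  have hQ := natCast_pos_of_neZero Q
  set D := (Finset.range Q).filter fun J : ℕ => P J
  let core : ℕ → Set ℝ := fun J => {t | |Q * t - (J + 1 / 2)| ≤ ρ / 2}
  have hcell : ∀ J, ∀ t ∈ core J, (J : ℝ) < Q * t ∧ Q * t < J + 1 := fun J t ht => by
    have := abs_le.1 (mem_ofPred.1 ht)
    constructor <;> linarith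
  have hsub : ⋃ J ∈ D, core J ⊆ columnCore Q ρ P ∩ Ioc 0 1 := by
    simp only [iUnion_subset_iff]
    intro J hJ t ht
    obtain ⟨hlo, hhi⟩ := hcell J t ht
    have hJQ : (J : ℝ) + 1 ≤ Q := by exact_mod_cast Finset.mem_range.1 (Finset.mem_filter.1 hJ).1
    exact ⟨⟨J, (Finset.mem_filter.1 hJ).2, ht⟩,
      pos_of_mul_pos_right ((Nat.cast_nonneg J).trans_lt hlo) hQ.le,
      le_of_mul_le_mul_left (by linarith) hQ⟩
  have hdisj : (D : Set ℕ).PairwiseDisjoint core := fun J _ J' _ hne =>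
    disjoint_left.2 fun t ht ht' => hne <| by
      have hlt : (J : ℝ) < J' + 1 := (hcell J t ht).1.trans (hcell J' t ht').2
      have hlt' : (J' : ℝ) < J + 1 := (hcell J' t ht').1.trans (hcell J t ht).2
      norm_cast at hlt hlt'
      omega
  have hmeas : ∀ J, MeasurableSet (core J) := fun J =>
    measurableSet_le (by fun_prop) measurable_const
  have hcore : ∀ J, volume.real (core J) = ρ / Q := fun J =>
    volume_real_setOf_abs_mul_sub_le hQ _ hρ₀
  have hfinite : volume (columnCore Q ρ P ∩ Ioc 0 1) ≠ ∞ :=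
    measure_ne_top_of_subset inter_subset_right measure_Ioc_lt_top.ne
  rw [measureReal_restrict_apply' measurableSet_Ioc, ← nsmul_eq_mul, ← Finset.sum_const,
    ← Finset.sum_congr rfl fun J _ => hcore J, ← measureReal_biUnion_finset hdisj
    (fun J _ => hmeas J) fun J hJ =>
      measure_ne_top_of_subset ((subset_biUnion_of_mem (u := core) hJ).trans hsub) hfinite]
  exact measureReal_mono hsub hfinite

lemma sum_range_mul_zmod {M : Type*} [AddCommMonoid M] (q N : ℕ) [NeZero N] (f : ZMod N → M) :
    ∑ J ∈ Finset.range (q * N), f J = q • ∑ i, f i := by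
  have hone : ∑ J ∈ Finset.range N, f J = ∑ i, f i :=
    Finset.sum_nbij' (fun J => (J : ZMod N)) ZMod.val (fun _ _ => Finset.mem_univ _)
      (fun i _ => Finset.mem_range.2 i.val_lt)
      (fun J hJ => ZMod.val_cast_of_lt (Finset.mem_range.1 hJ))
      (fun i _ => ZMod.natCast_zmod_val i) fun _ _ => rfl
  induction q with
  | zero => simp
  | succ q ih =>
    rw [add_mul, one_mul, Finset.sum_range_add, ih, succ_nsmul, ← hone]
    congr 1
    exact Finset.sum_congr rfl fun J _ => by
      rw [Nat.cast_add, Nat.cast_mul, ZMod.natCast_self, mul_zero, zero_add]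

lemma card_filter_range_mul_ne {α : Type*} [DecidableEq α] (q N : ℕ) [NeZero N]
    (c c' : ZMod N → α) :
    ((Finset.range (q * N)).filter fun J : ℕ => c J ≠ c' J).card = q * hammingDist c c' := by
  rw [Finset.card_filter, sum_range_mul_zmod q N fun i => if c i ≠ c' i then 1 else 0,
    ← Finset.card_filter, smul_eq_mul, hammingDist]

lemma IsCylinderDiffeo.apply_add_one {q : ℕ} [NeZero q] {G : Equiv.Perm (ℝ × ℝ)}
    (hG : IsCylinderDiffeo q G) (p : ℝ × ℝ) : G (p + (1, 0)) = G p + (1, 0) := by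
  have hiter : ∀ m : ℕ, G (p + m • ((1 / q : ℝ), (0 : ℝ))) = G p + m • ((1 / q : ℝ), (0 : ℝ)) := by
    intro m
    induction m with
    | zero => simp only [zero_smul, add_zero]
    | succ m ih => rw [succ_nsmul, ← add_assoc, hG.map_add, ih, add_assoc]
  have hq : q • ((1 / q : ℝ), (0 : ℝ)) = (1, 0) := by
    rw [Prod.smul_mk, nsmul_eq_mul, smul_zero, mul_one_div_cancel (natCast_pos_of_neZero q).ne']
  rw [← hq, hiter]

section Circles

variable {q n L B : ℕ} [NeZero q] [NeZero n] [NeZero L]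
  {W : Fin (8 * n * L * B) → ZMod (n ^ 2) → Bool} {β : ℝ} {G : Equiv.Perm (ℝ × ℝ)}

lemma ScattersCircles.le_euclDist (hGW : ScattersCircles q n L W β G)
    {k k' : Fin (8 * n * L * B)} (hkk' : (k / B : ℕ) = k' / B) {v v' : ℝ}
    (hv : |v| ∈ Icc β (1 - β)) (hv' : |v'| ∈ Icc β (1 - β)) {t t' : ℝ}
    (ht : t ∈ columnCore (q * n ^ 2) (49 / 50) fun J =>
      circleCode (W k) v J ≠ circleCode (W k') v' J)
    (ht' : t' ∈ columnCore (q * n ^ 2) (49 / 50) fun _ => True) :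
    1 / (2 * q * L * n) ≤ euclDist (G (t, bandPoint (8 * n * L * B) k v))
      (G (t', bandPoint (8 * n * L * B) k' v')) := by
  have hn : (1 : ℝ) ≤ n := by exact_mod_cast NeZero.one_le (n := n)
  have hL : (1 : ℝ) ≤ L := by exact_mod_cast NeZero.one_le (n := L)
  have hq : (1 : ℝ) ≤ q := by exact_mod_cast NeZero.one_le (n := q)
  have hκw : 1 / (2 * q * L * n) ≤ subcolWidth q n * (2 * n - 1) := calc
    (1 / (2 * q * L * n) : ℝ) ≤ 1 / (2 * q * 1 * n) := by gcongr
    _ = subcolWidth q n * n := by unfold subcolWidth; field_simp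
    _ ≤ subcolWidth q n * (2 * n - 1) :=
      mul_le_mul_of_nonneg_left (by linarith) subcolWidth_pos.le
  have hκh : 1 / (2 * q * L * n) ≤ blockHeight n L * 3 := calc
    (1 / (2 * q * L * n) : ℝ) ≤ 1 / (2 * 1 * L * n) := by gcongr
    _ = blockHeight n L * 2 := by unfold blockHeight; field_simp; norm_num
    _ ≤ blockHeight n L * 3 := mul_le_mul_of_nonneg_left (by norm_num) blockHeight_pos.le
  obtain ⟨J, hJ, htJ⟩ := ht
  obtain ⟨J', -, htJ'⟩ := ht'
  obtain ⟨u, hu, rfl⟩ := exists_eq_of_abs_sub_le htJ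
  obtain ⟨u', hu', rfl⟩ := exists_eq_of_abs_sub_le htJ'
  obtain ⟨a, ha, hmem⟩ := hGW J k u v hu hv
  obtain ⟨a', ha', hmem'⟩ := hGW J' k' u' v' hu' hv'
  rw [← hkk'] at ha'
  push_cast
  refine le_euclDist_of_mem_tile subcolWidth_pos.le blockHeight_pos.le hκw hκh (fun h => hJ ?_)
    ha ha' hmem hmem'
  have hbit := Bool.toNat_le (circleCode (W k) v J)
  have hbit' := Bool.toNat_le (circleCode (W k') v' J')
  obtain rfl : J = J' := by omega
  exact (show LeftInverse Bool.ofNat Bool.toNat from Bool.ofNat_toNat).injective (by omega)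

lemma ScattersCircles.le_of_kantorovichClose (hGW : ScattersCircles q n L W β G)
    (hG : IsCylinderDiffeo q G) {k k' : Fin (8 * n * L * B)} (hkk' : (k / B : ℕ) = k' / B)
    {v v' : ℝ} (hv : |v| ∈ Icc β (1 - β)) (hv' : |v'| ∈ Icc β (1 - β))
    (hdist : n ^ 2 ≤ 8 * hammingDist (circleCode (W k) v) (circleCode (W k') v')) {c : ℝ}
    (hc : KantorovichClose c (fun t => G (t, bandPoint (8 * n * L * B) k v))
      fun t => G (t, bandPoint (8 * n * L * B) k' v')) :
    1 / (20 * q * L * n) ≤ c := by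
  have hq := natCast_pos_of_neZero q
  have hn := natCast_pos_of_neZero n
  have hL := natCast_pos_of_neZero L
  have hQ : 0 < ((q * n ^ 2 : ℕ) : ℝ) := natCast_pos_of_neZero _
  have hperiod : ∀ J : ℤ, ((J + (q * n ^ 2 : ℕ) : ℤ) : ZMod (n ^ 2)) = J := fun J => by
    rw [Int.cast_add, Int.cast_natCast, Nat.cast_mul, ZMod.natCast_self, mul_zero, add_zero]
  have hdiff : (49 / 400 : ℝ) ≤ (volume.restrict (Ioc 0 1)).real
      (columnCore (q * n ^ 2) (49 / 50) fun J =>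
        circleCode (W k) v J ≠ circleCode (W k') v' J) := by
    refine le_trans ?_ (card_mul_le_measureReal_columnCore (by norm_num) (by norm_num) _)
    simp only [Int.cast_natCast]
    rw [card_filter_range_mul_ne, ← mul_div_assoc, le_div_iff₀ hQ]
    have hcard : ((q * n ^ 2 : ℕ) : ℝ) ≤ 8 * (q * hammingDist (circleCode (W k) v)
        (circleCode (W k') v') : ℕ) := by
      exact_mod_cast (Nat.mul_le_mul_left q hdist).trans_eq (Nat.mul_left_comm _ _ _)
    linarith
  have hall : (49 : ℝ) / 50 ≤ (volume.restrict (Ioc 0 1)).real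
      (columnCore (q * n ^ 2) (49 / 50) fun _ => True) := by
    refine le_trans ?_ (card_mul_le_measureReal_columnCore (by norm_num) (by norm_num) _)
    rw [Finset.filter_true, Finset.card_range, mul_div_cancel₀ _ hQ.ne']
  have hcont := hG.isVolumeDiffeo.contDiff.continuous
  have hκ : 0 < 1 / (2 * q * L * n : ℝ) := by positivity
  have hle := hc.mul_measureReal_le (by fun_prop) (by fun_prop)
    (fun t => by simpa using hG.apply_add_one (t, _))
    (add_one_mem_columnCore fun J => by rw [hperiod]) hκ
    fun t ht t' ht' => hGW.le_euclDist hkk' hv hv' ht ht'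
  calc 1 / (20 * q * L * n : ℝ) = 1 / (2 * q * L * n) * (1 / 10) := by field_simp; norm_num
    _ ≤ _ := mul_le_mul_of_nonneg_left (by linarith) hκ.le
    _ ≤ c := hle

end Circles

end Separation

/-! ### Counting words and measuring heights -/

section Counting

lemma sum_pow_hammingDist {ι R : Type*} [Fintype ι] [DecidableEq ι] [CommSemiring R] (w : ι → Bool)
    (x : R) : ∑ v, x ^ hammingDist v w = (1 + x) ^ Fintype.card ι := by
  have hpow : ∀ v : ι → Bool, x ^ hammingDist v w = ∏ i, if v i ≠ w i then x else 1 := fun v => by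
    rw [hammingDist, Finset.prod_ite, Finset.prod_const, Finset.prod_const_one, mul_one]
  have hbit : ∀ i, ∑ b, (if b ≠ w i then x else 1) = 1 + x := fun i => by
    cases w i <;> simp [add_comm]
  rw [Fintype.sum_congr _ _ hpow, ← Fintype.piFinset_univ,
    ← Finset.prod_univ_sum (fun _ => Finset.univ) fun i b => if b ≠ w i then x else 1,
    Finset.prod_congr rfl fun i _ => hbit i, Finset.prod_const, Finset.card_univ]

-- Markov's inequality for the weights `(5 / 6) ^ (8 * hammingDist v w)`.
lemma card_hammingDist_lt_le {ι : Type*} [Fintype ι] [DecidableEq ι] (w : ι → Bool) :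
    ((Finset.univ.filter fun v => 8 * hammingDist v w < Fintype.card ι).card : ℝ) ≤
      (3 / 2) ^ Fintype.card ι := by
  set N := Fintype.card ι
  have hle : (Finset.univ.filter fun v => 8 * hammingDist v w < N).card * (5 / 6 : ℝ) ^ N ≤
      (3 / 2) ^ N * (5 / 6) ^ N := calc
    _ = ∑ v with 8 * hammingDist v w < N, (5 / 6 : ℝ) ^ N := by
        rw [Finset.sum_const, nsmul_eq_mul]
    _ ≤ ∑ v with 8 * hammingDist v w < N, ((5 / 6 : ℝ) ^ 8) ^ hammingDist v w := by
        refine Finset.sum_le_sum fun v hv => ?_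
        rw [← pow_mul]
        exact pow_le_pow_of_le_one (by norm_num) (by norm_num) (Finset.mem_filter.1 hv).2.le
    _ ≤ ∑ v, ((5 / 6 : ℝ) ^ 8) ^ hammingDist v w :=
        Finset.sum_le_univ_sum_of_nonneg fun v => by positivity
    _ = (1 + (5 / 6 : ℝ) ^ 8) ^ N := sum_pow_hammingDist w _
    _ ≤ (3 / 2) ^ N * (5 / 6) ^ N := by
        rw [← mul_pow]
        exact pow_le_pow_left₀ (by positivity) (by norm_num) N
  exact le_of_mul_le_mul_right hle (by positivity)

lemma card_le_of_hammingDist_circleCode_lt {m B : ℕ} {ι : Type*} [Fintype ι]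
    (e : Fin B ≃ (ι → Bool)) (K : Finset (Fin (m * B))) (v : Fin (m * B) → ℝ)
    (hK : ∀ k ∈ K, ∀ k' ∈ K, k.divNat = k'.divNat →
      8 * hammingDist (circleCode (e k.modNat) (v k)) (circleCode (e k'.modNat) (v k')) <
        Fintype.card ι) :
    (K.card : ℝ) ≤ 2 * m * (3 / 2) ^ Fintype.card ι := by
  classical
  set N := Fintype.card ι
  have hfiber : ∀ x ∈ (Finset.univ : Finset (Fin m × Bool)),
      (K.filter fun k => (k.divNat, decide (0 < v k)) = x).card ≤ ⌊(3 / 2 : ℝ) ^ N⌋₊ := by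
    intro x _
    set F := K.filter fun k => (k.divNat, decide (0 < v k)) = x
    rcases F.eq_empty_or_nonempty with hF | ⟨k', hk'⟩
    · rw [hF, Finset.card_empty]
      exact Nat.zero_le _
    obtain ⟨hk'K, hk'x⟩ := Finset.mem_filter.1 hk'
    refine Nat.le_floor (le_trans ?_ (card_hammingDist_lt_le (circleCode (e k'.modNat) (v k'))))
    refine Nat.cast_le.2 (Finset.card_le_card_of_injOn
      (fun k => circleCode (e k.modNat) (v k)) (fun k hk => ?_) fun k hk l hl hkl => ?_)
    · obtain ⟨hkK, hkx⟩ := Finset.mem_filter.1 hk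
      exact Finset.mem_filter.2 ⟨Finset.mem_univ _,
        hK k hkK k' hk'K (congrArg Prod.fst (hkx.trans hk'x.symm))⟩
    · obtain ⟨hdiv, hsign⟩ := Prod.mk.inj
        ((Finset.mem_filter.1 hk).2.trans (Finset.mem_filter.1 hl).2.symm)
      have hcode : e k.modNat = e l.modNat := funext fun i => by
        have := congrFun hkl i
        simp only [circleCode, hsign] at this
        exact Bool.xor_left_inj.1 this
      refine finProdFinEquiv.symm.injective (Prod.ext hdiv (e.injective hcode))
  have hcard := Finset.card_le_mul_card_image_of_maps_to
    (fun k _ => Finset.mem_univ (k.divNat, decide (0 < v k))) _ hfiber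
  rw [Finset.card_univ, Fintype.card_prod, Fintype.card_fin, Fintype.card_bool] at hcard
  calc (K.card : ℝ) ≤ ⌊(3 / 2 : ℝ) ^ N⌋₊ * (m * 2) := by exact_mod_cast hcard
    _ ≤ (3 / 2) ^ N * (m * 2) := by
        gcongr
        exact Nat.floor_le (by positivity)
    _ = 2 * m * (3 / 2) ^ N := by ring

lemma exists_eq_bandPoint (M : ℕ) [NeZero M] {y : ℝ} (hy : y ∈ Icc (-1) 1) :
    ∃ k : Fin M, ∃ v, |v| ≤ 1 ∧ y = bandPoint M k v := by
  have hM := natCast_pos_of_neZero M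
  suffices ∃ k < M, (k : ℝ) ≤ M * (y + 1) / 2 ∧ M * (y + 1) / 2 ≤ k + 1 by
    obtain ⟨k, hkM, hk, hk'⟩ := this
    refine ⟨⟨k, hkM⟩, 2 * (M * (y + 1) / 2 - k) - 1, abs_le.2 ⟨by linarith, by linarith⟩, ?_⟩
    rw [bandPoint]
    field_simp
    ring
  rcases hy.2.eq_or_lt with rfl | hy1
  · refine ⟨M - 1, Nat.sub_lt (NeZero.pos M) one_pos, ?_⟩
    rw [Nat.cast_pred (NeZero.pos M)]
    constructor <;> linarith
  · have hx : 0 ≤ M * (y + 1) / 2 :=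
      div_nonneg (mul_nonneg hM.le (by linarith [hy.1])) zero_le_two
    refine ⟨_, (Nat.floor_lt hx).2 ?_, Nat.floor_le hx, (Nat.lt_floor_add_one _).le⟩
    rw [mul_div_assoc]
    exact mul_lt_of_lt_one_right hM (by linarith)

open scoped Pointwise in
lemma volume_image_bandPoint (M k : ℕ) (S : Set ℝ) :
    volume (bandPoint M k '' S) = ENNReal.ofReal (1 / M) * volume S := by
  have haffine : bandPoint M k '' S =
      (bandPoint M k 0 + ·) '' ((1 / M : ℝ) • S) := by
    rw [← image_smul, image_image]
    refine image_congr fun v _ => ?_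
    simp only [bandPoint, smul_eq_mul]
    ring
  rw [haffine, image_add_left, measure_preimage_add, Measure.addHaar_smul, Module.finrank_self,
    pow_one, abs_of_nonneg (by positivity)]

lemma volume_setOf_abs_notMem_Icc_le (β : ℝ) :
    volume {v : ℝ | |v| ≤ 1 ∧ |v| ∉ Icc β (1 - β)} ≤ ENNReal.ofReal (6 * β) := by
  have hsub : {v : ℝ | |v| ≤ 1 ∧ |v| ∉ Icc β (1 - β)} ⊆
      ⋃ c ∈ ({-1, 0, 1} : Finset ℝ), Metric.closedBall c β := by
    rintro v ⟨hv, hvβ⟩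
    simp only [Finset.mem_insert, Finset.mem_singleton, iUnion_iUnion_eq_or_left,
      iUnion_iUnion_eq_left, mem_union, Metric.mem_closedBall, Real.dist_eq, abs_le]
    rw [mem_Icc, not_and_or, not_le, not_le, abs_lt, lt_abs] at hvβ
    have := abs_le.1 hv
    grind
  have hcard : ({-1, 0, 1} : Finset ℝ).card = 3 := by norm_num
  calc volume {v : ℝ | |v| ≤ 1 ∧ |v| ∉ Icc β (1 - β)}
      ≤ ∑ c ∈ ({-1, 0, 1} : Finset ℝ), volume (Metric.closedBall c β) :=
        (measure_mono hsub).trans (measure_biUnion_finset_le _ _)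
    _ = ENNReal.ofReal (6 * β) := by
        simp only [Real.volume_closedBall, Finset.sum_const, hcard, ← ENNReal.ofReal_nsmul]
        congr 1
        ring

lemma volume_le_of_forall_bandPoint_mem {M : ℕ} [NeZero M] {β : ℝ} (hβ : 0 ≤ β) {C : Set ℝ}
    (hC : C ⊆ Icc (-1) 1) {K : Finset (Fin M)}
    (hK : ∀ (k : Fin M) v, |v| ∈ Icc β (1 - β) → bandPoint M k v ∈ C → k ∈ K) :
    volume C ≤ ENNReal.ofReal (6 * β + K.card * (2 / M)) := by
  have hM := natCast_pos_of_neZero M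
  have hsub : C ⊆ (⋃ k ∈ (Finset.univ : Finset (Fin M)),
      bandPoint M k '' {v | |v| ≤ 1 ∧ |v| ∉ Icc β (1 - β)}) ∪
        ⋃ k ∈ K, bandPoint M k '' Metric.closedBall 0 1 := fun y hy => by
    obtain ⟨k, v, hv, rfl⟩ := exists_eq_bandPoint M (hC hy)
    by_cases hvβ : |v| ∈ Icc β (1 - β)
    · exact .inr (mem_biUnion (hK k v hvβ hy) ⟨v, by simpa using hv, rfl⟩)
    · exact .inl (mem_biUnion (Finset.mem_univ k) ⟨v, ⟨hv, hvβ⟩, rfl⟩)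
  calc volume C
      ≤ ∑ k : Fin M, volume (bandPoint M k '' {v | |v| ≤ 1 ∧ |v| ∉ Icc β (1 - β)}) +
        ∑ k ∈ K, volume (bandPoint M k '' Metric.closedBall 0 1) :=
        (measure_mono hsub).trans ((measure_union_le _ _).trans
          (add_le_add (measure_biUnion_finset_le _ _) (measure_biUnion_finset_le _ _)))
    _ ≤ M • (ENNReal.ofReal (1 / M) * ENNReal.ofReal (6 * β)) +
        K.card • (ENNReal.ofReal (1 / M) * ENNReal.ofReal (2 * 1)) := by
        simp only [volume_image_bandPoint, Finset.sum_const, Finset.card_univ, Fintype.card_fin,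
          Real.volume_closedBall]
        gcongr
        exact volume_setOf_abs_notMem_Icc_le β
    _ = ENNReal.ofReal (6 * β + K.card * (2 / M)) := by
        rw [← ENNReal.ofReal_mul (by positivity), ← ENNReal.ofReal_mul (by positivity),
          ← ENNReal.ofReal_nsmul, ← ENNReal.ofReal_nsmul, ← ENNReal.ofReal_add (by positivity)
          (by positivity), nsmul_eq_mul, nsmul_eq_mul]
        congr 1
        field_simp

lemma ScattersCircles.volume_le {q n L : ℕ} [NeZero q] [NeZero n] [NeZero L]
    (e : Fin (2 ^ n ^ 2) ≃ (ZMod (n ^ 2) → Bool)) {β : ℝ} (hβ : 0 ≤ β) {G : Equiv.Perm (ℝ × ℝ)}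
    (hGe : ScattersCircles q n L (fun k : Fin (8 * n * L * 2 ^ n ^ 2) => e k.modNat) β G)
    (hG : IsCylinderDiffeo q G) {c : ℝ} (hc : c < 1 / (20 * q * L * n)) {C : Set ℝ}
    (hCsub : C ⊆ Icc (-1) 1) (hC : ∀ y ∈ C, ∀ y' ∈ C,
      KantorovichClose c (fun t => G (t, y)) fun t => G (t, y')) :
    volume C ≤ ENNReal.ofReal (6 * β + 4 * (3 / 4) ^ n ^ 2) := by
  classical
  set M := 8 * n * L * 2 ^ n ^ 2
  let K : Finset (Fin M) :=
    Finset.univ.filter fun k => ∃ v, |v| ∈ Icc β (1 - β) ∧ bandPoint M k v ∈ C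
  have hKC : ∀ k ∈ K, ∃ v, |v| ∈ Icc β (1 - β) ∧ bandPoint M k v ∈ C := fun k hk =>
    (Finset.mem_filter.1 hk).2
  choose! v hv hvC using hKC
  have hcard : (K.card : ℝ) ≤ 2 * (8 * n * L : ℕ) * (3 / 2) ^ n ^ 2 := by
    have := card_le_of_hammingDist_circleCode_lt e K v fun k hk k' hk' hkk' => by
      by_contra! hdist
      rw [ZMod.card] at hdist
      exact hc.not_ge (hGe.le_of_kantorovichClose hG (Fin.val_eq_of_eq hkk') (hv k hk) (hv k' hk')
        hdist (hC _ (hvC k hk) _ (hvC k' hk')))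
    rwa [ZMod.card] at this
  have hn := natCast_pos_of_neZero n
  have hL := natCast_pos_of_neZero L
  have hpow : (3 / 4 : ℝ) ^ n ^ 2 = (3 / 2) ^ n ^ 2 / 2 ^ n ^ 2 := by rw [← div_pow]; norm_num
  calc volume C ≤ ENNReal.ofReal (6 * β + K.card * (2 / M)) :=
        volume_le_of_forall_bandPoint_mem hβ hCsub fun k w hw hwC =>
          Finset.mem_filter.2 ⟨Finset.mem_univ k, w, hw, hwC⟩
    _ ≤ ENNReal.ofReal (6 * β + 2 * (8 * n * L : ℕ) * (3 / 2) ^ n ^ 2 * (2 / M)) := by gcongr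
    _ = ENNReal.ofReal (6 * β + 4 * (3 / 4) ^ n ^ 2) := by
        rw [hpow]
        simp only [M]
        push_cast
        congr 2
        field_simp
        norm_num

end Counting

section Parameters

lemma eventually_mul_pow_sq_le_exp_neg_rpow {ε a C c : ℝ} (hε : 0 < ε) (ha₀ : 0 < a) (ha : a < 1)
    (hC : 0 < C) (hc : 0 < c) :
    ∀ᶠ n : ℕ in atTop, C * a ^ n ^ 2 ≤ Real.exp (-(1 / (c * n)) ^ (-2 + ε)) := by
  have hl : 0 < -Real.log a := neg_pos.2 (Real.log_neg ha₀ ha)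
  have hsmall : ∀ᶠ n : ℕ in atTop, (c * n) ^ (-ε) ≤ -Real.log a / 2 / c ^ 2 :=
    ((tendsto_rpow_neg_atTop hε).comp
      (tendsto_natCast_atTop_atTop.const_mul_atTop hc)).eventually_le_const (by positivity)
  have hlarge : ∀ᶠ n : ℕ in atTop, Real.log C / (-Real.log a / 2) ≤ (n : ℝ) ^ 2 :=
    ((tendsto_pow_atTop two_ne_zero).comp tendsto_natCast_atTop_atTop).eventually_ge_atTop _
  filter_upwards [hsmall, hlarge, eventually_gt_atTop 0] with n hsmall hlarge hn
  have hn : (0 : ℝ) < n := by exact_mod_cast hn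
  have hexp : C * a ^ n ^ 2 = Real.exp (Real.log C + n ^ 2 * Real.log a) := by
    rw [Real.exp_add, Real.exp_log hC, ← Nat.cast_pow, Real.exp_nat_mul, Real.exp_log ha₀]
  have hrpow : (1 / (c * n)) ^ (-2 + ε) = (c * n) ^ 2 * (c * n) ^ (-ε) := by
    rw [one_div, Real.inv_rpow (by positivity), ← Real.rpow_neg (by positivity), neg_add, neg_neg,
      Real.rpow_add (by positivity), Real.rpow_two]
  rw [hexp, hrpow, Real.exp_le_exp]
  have hmul : (c * n) ^ 2 * (c * n) ^ (-ε) ≤ n ^ 2 * (-Real.log a / 2) := calc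
    _ ≤ (c * n) ^ 2 * (-Real.log a / 2 / c ^ 2) := by gcongr
    _ = n ^ 2 * (-Real.log a / 2) := by field_simp
  rw [div_le_iff₀ (by linarith)] at hlarge
  linarith

lemma exists_parameters {ε c δ η₁ : ℝ} (hε : 0 < ε) (hc : 0 < c) (hδ : 0 < δ) (hη₁ : 0 < η₁) :
    ∃ n : ℕ, 0 < n ∧ 2 / n ≤ δ ∧ 1 / (c * n) < η₁ ∧
      5 / 2 * (3 / 4 : ℝ) ^ n ^ 2 ≤ Real.exp (-(1 / (c * n)) ^ (-2 + ε)) := by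
  have hη : Tendsto (fun n : ℕ => 1 / (c * n)) atTop (𝓝 0) :=
    (tendsto_natCast_atTop_atTop.const_mul_atTop hc).const_div_atTop 1
  exact ((eventually_gt_atTop 0).and
    (((tendsto_const_div_atTop_nhds_zero_nat 2).eventually_le_const hδ).and
    ((hη.eventually_lt_const hη₁).and (eventually_mul_pow_sq_le_exp_neg_rpow hε (by norm_num)
      (by norm_num) (by norm_num) hc)))).exists

end Parameters

theorem cylinder_emergence_lemma_general {ε : ℝ} (hε : 0 < ε) (q : ℕ) [NeZero q] {η₁ : ℝ}
    (hη₁ : 0 < η₁) :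
    ∃ η, 0 < η ∧ η < η₁ ∧ ∃ G : Equiv.Perm (ℝ × ℝ), IsCylinderDiffeo q G ∧
      (∀ p, euclDist (G p) p ≤ ε) ∧ ∀ y : ℝ,
        1 / 2 * volume {y' ∈ Icc (-1 : ℝ) 1 |
            KantorovichClose (3 * η) (fun t => G (t, y)) fun t => G (t, y')} ≤
          ENNReal.ofReal (Real.exp (-η ^ (-2 + ε))) := by
  obtain ⟨L, hL₀, hLε⟩ := ((eventually_gt_atTop 0).and
    ((tendsto_const_div_atTop_nhds_zero_nat 4).eventually_le_const (half_pos hε))).exists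
  have hq := natCast_pos_of_neZero q
  have : NeZero L := ⟨hL₀.ne'⟩
  have hL := natCast_pos_of_neZero L
  obtain ⟨n, hn₀, hnε, hη, hexp⟩ :=
    exists_parameters (c := 200 * q * L) hε (by positivity) (half_pos hε) hη₁
  have : NeZero n := ⟨hn₀.ne'⟩
  have hn := natCast_pos_of_neZero n
  let e : Fin (2 ^ n ^ 2) ≃ (ZMod (n ^ 2) → Bool) :=
    (Fintype.equivFinOfCardEq (by simp [ZMod.card])).symm
  obtain ⟨G, hG, hGdist, hGe⟩ := exists_scattersCircles (q := q) (n := n) (L := L)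
    (fun k : Fin (8 * n * L * 2 ^ n ^ 2) => e k.modNat) (β := (3 / 4) ^ n ^ 2 / 6) (by positivity)
  refine ⟨1 / (200 * q * L * n), by positivity, hη, G, hG, fun p => (hGdist p).trans ?_,
    fun y => ?_⟩
  · linarith
  · have hη6 : 3 * (1 / (200 * q * L * n)) + 3 * (1 / (200 * q * L * n)) <
        1 / (20 * q * L * n : ℝ) := by
      field_simp
      norm_num
    calc _ ≤ 1 / 2 * ENNReal.ofReal (6 * ((3 / 4) ^ n ^ 2 / 6) + 4 * (3 / 4) ^ n ^ 2) := by
          gcongr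
          exact hGe.volume_le e (by positivity) hG hη6 (fun y' hy' => hy'.1)
            fun y' hy' y'' hy'' => hy'.2.symm.trans hy''.2
      _ = ENNReal.ofReal (5 / 2 * (3 / 4) ^ n ^ 2) := by
          rw [one_div, ← ENNReal.ofReal_ofNat 2, ← ENNReal.ofReal_inv_of_pos two_pos,
            ← ENNReal.ofReal_mul (by positivity)]
          congr 1
          ring
      _ ≤ _ := ENNReal.ofReal_le_ofReal hexp

/-- **Lemma 4.1 (the emergence lemma on the cylinder).** There is `ε₀ > 0` such that for every
`ε ∈ (0, ε₀)`, `q ≥ 1` and `η₁ > 0`, there are `η ∈ (0, η₁)` and a `C^∞`, Lebesgue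
measure-preserving diffeomorphism `G` of the cylinder (given by its lift to `ℝ²`), commuting
with `R_{1/q}`, equal to the identity near the boundary, `ε`-`C⁰`-close to the identity together
with its inverse, and such that for every height `y ∈ [−1,1]`, the normalized measure of the
set of heights `y'` whose pushed-forward circle measure is `3η`-close in the Kantorovich
distance to that of `y` is at most `exp(−η^{−2+ε})`. -/
theorem cylinder_emergence_lemma :
    ∃ ε₀ > (0 : ℝ), ∀ ε : ℝ, 0 < ε → ε < ε₀ → ∀ q : ℕ, 1 ≤ q → ∀ η₁ : ℝ, 0 < η₁ →
      ∃ η : ℝ, 0 < η ∧ η < η₁ ∧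
      ∃ G : ℝ × ℝ ≃ ℝ × ℝ,
        ContDiff ℝ (⊤ : ℕ∞) ⇑G ∧ ContDiff ℝ (⊤ : ℕ∞) ⇑G.symm ∧
        MeasurePreserving G volume volume ∧
        (∀ x y : ℝ, G (x + 1 / q, y) = G (x, y) + ((1 / q : ℝ), (0 : ℝ))) ∧
        (∃ δ > 0, ∀ x y : ℝ, 1 - δ ≤ |y| → G (x, y) = (x, y)) ∧
        (∀ p : ℝ × ℝ, euclDist (G p) p ≤ ε ∧ euclDist (G.symm p) p ≤ ε) ∧
        ∀ y ∈ Set.Icc (-1 : ℝ) 1,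
          (1 / 2 : ℝ≥0∞) * volume {y' ∈ Set.Icc (-1 : ℝ) 1 |
              ∀ φ : ℝ × ℝ → ℝ, (∀ a b : ℝ × ℝ, |φ a - φ b| ≤ euclDist a b) →
                (∀ x s : ℝ, φ (x + 1, s) = φ (x, s)) →
                (∫ t in (0 : ℝ)..1, φ (G (t, y))) - (∫ t in (0 : ℝ)..1, φ (G (t, y'))) ≤
                  3 * η} ≤
            ENNReal.ofReal (Real.exp (-η ^ (-2 + ε))) := by
  refine ⟨1, one_pos, fun ε hε _ q hq η₁ hη₁ => ?_⟩
  have : NeZero q := ⟨Nat.one_le_iff_ne_zero.1 hq⟩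
  obtain ⟨η, hη₀, hη, G, hG, hGε, hvol⟩ := cylinder_emergence_lemma_general hε q hη₁
  obtain ⟨δ, hδ, hGδ⟩ := hG.eq_self
  refine ⟨η, hη₀, hη, G, hG.isVolumeDiffeo.contDiff, hG.isVolumeDiffeo.symm.contDiff,
    hG.isVolumeDiffeo.measurePreserving volume, fun x y => ?_, ⟨δ, hδ, fun x y => hGδ (x, y)⟩,
    fun p => ⟨hGε p, ?_⟩, fun y _ => le_trans ?_ (hvol y)⟩
  · rw [← hG.map_add, Prod.mk_add_mk, add_zero]
  · simpa only [Equiv.apply_symm_apply, euclDist_comm] using hGε (G.symm p)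
  · gcongr with y'
    exact fun h φ hφ => h φ hφ.abs_sub_le hφ.periodic
end
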